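/- arXiv:1701.06451 — 3 statements merged into one kernel-verified Lean document; each statement's English description precedes it below -/
import Mathlib

section
/- Let r ≥ 2 and let H be a 3-partite 3-graph with vertex classes A, B, C such that |A| = n. Suppose every vertex of A has degree at least r and every vertex of B ∪ C has degree at most r. If H contains no subhypergraph isomorphic to (r/2)·F, where F is the truncated Fano plane, then ν(H) ≥ (1 + 1/(72r² − 150r + 77))·n/2. -/
namespace Tripartite

/-- The degree of a vertex `a` in the first class of a 3-partite 3-multihypergraph,
whose edges are given as a multiset of triples (so parallel edges are allowed). -/
def deg1 {α β γ : Type*} [DecidableEq α] (H : Multiset (α × β × γ)) (a : α) : ℕ :=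
  (H.filter fun e => e.1 = a).card

/-- The degree of a vertex `b` in the second class. -/
def deg2 {α β γ : Type*} [DecidableEq β] (H : Multiset (α × β × γ)) (b : β) : ℕ :=
  (H.filter fun e => e.2.1 = b).card

/-- The degree of a vertex `c` in the third class. -/
def deg3 {α β γ : Type*} [DecidableEq γ] (H : Multiset (α × β × γ)) (c : γ) : ℕ :=
  (H.filter fun e => e.2.2 = c).card

/-- `H` is `r`-regular: every vertex of every class has degree exactly `r`. -/
def IsRegular {α β γ : Type*} [DecidableEq α] [DecidableEq β] [DecidableEq γ]
    (H : Multiset (α × β × γ)) (r : ℕ) : Prop :=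
  (∀ a, deg1 H a = r) ∧ (∀ b, deg2 H b = r) ∧ (∀ c, deg3 H c = r)

/-- A matching of `H`: a set of edges of `H` that are pairwise disjoint. -/
def IsMatching {α β γ : Type*} (H : Multiset (α × β × γ)) (M : Finset (α × β × γ)) : Prop :=
  (∀ e ∈ M, e ∈ H) ∧
  ∀ e ∈ M, ∀ f ∈ M, e ≠ f → e.1 ≠ f.1 ∧ e.2.1 ≠ f.2.1 ∧ e.2.2 ≠ f.2.2

/-- The matching number ν(H): the maximum size of a matching of `H`. -/
noncomputable def matchNum {α β γ : Type*} (H : Multiset (α × β × γ)) : ℕ :=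
  sSup {k | ∃ M : Finset (α × β × γ), IsMatching H M ∧ M.card = k}

/-- The edge multiset of the truncated Fano plane `F` on vertices `x1, y1` (first class),
`x2, y2` (second class), `x3, y3` (third class). -/
def fanoEdges {α β γ : Type*} (x1 y1 : α) (x2 y2 : β) (x3 y3 : γ) :
    Multiset (α × β × γ) :=
  {(x1, x2, x3), (x1, y2, y3), (y1, x2, y3), (y1, y2, x3)}

/-- The six vertices `x1, y1, x2, y2, x3, y3` span a copy of `s • F` in `H`, i.e. a
subhypergraph in which every edge of the truncated Fano plane appears with
multiplicity (at least) `s`. -/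
def IsFanoCopy {α β γ : Type*} (H : Multiset (α × β × γ)) (s : ℕ)
    (x1 y1 : α) (x2 y2 : β) (x3 y3 : γ) : Prop :=
  x1 ≠ y1 ∧ x2 ≠ y2 ∧ x3 ≠ y3 ∧ s • fanoEdges x1 y1 x2 y2 x3 y3 ≤ H

/-- The six vertices `x1, y1, x2, y2, x3, y3` span a connected component of `H` that is a
copy of `s • F`: the multiset of edges of `H` meeting one of these six vertices is exactly
`s` parallel copies of each of the four edges of the truncated Fano plane. -/
def IsFanoComponent {α β γ : Type*} [DecidableEq α] [DecidableEq β] [DecidableEq γ]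
    (H : Multiset (α × β × γ)) (s : ℕ)
    (x1 y1 : α) (x2 y2 : β) (x3 y3 : γ) : Prop :=
  x1 ≠ y1 ∧ x2 ≠ y2 ∧ x3 ≠ y3 ∧
  H.filter (fun e => e.1 = x1 ∨ e.1 = y1 ∨ e.2.1 = x2 ∨ e.2.1 = y2 ∨
      e.2.2 = x3 ∨ e.2.2 = y3)
    = s • fanoEdges x1 y1 x2 y2 x3 y3

set_option linter.unusedSectionVars false

section Chains

variable {V : Type*} [Fintype V] [DecidableEq V]

/-- The mod 2 simplicial boundary; a chain assigns a coefficient to every finite vertex set, and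
the empty set counts as a simplex. -/
def boundary (z : Finset V → ZMod 2) : Finset V → ZMod 2 :=
  fun τ => ∑ v ∈ τᶜ, z (insert v τ)

/-- The cone with apex `x` over a chain. -/
def cone (x : V) (z : Finset V → ZMod 2) : Finset V → ZMod 2 :=
  fun σ => if x ∈ σ then z (σ.erase x) else 0

/-- The chain `z` is a combination of `i`-element members of the complex `K`. -/
def SupportedOn (K : Finset V → Prop) (i : ℕ) (z : Finset V → ZMod 2) : Prop :=
  ∀ σ, z σ ≠ 0 → σ.card = i ∧ K σ

/-- Every cycle of `K` on simplices with fewer than `d` vertices is a boundary. -/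
def Acyclic (K : Finset V → Prop) (d : ℕ) : Prop :=
  ∀ i < d, ∀ z, SupportedOn K i z → boundary z = 0 →
    ∃ w, SupportedOn K (i + 1) w ∧ boundary w = z

lemma acyclic_zero (K : Finset V → Prop) : Acyclic K 0 := fun _ h => absurd h (Nat.not_lt_zero _)

lemma boundary_add (z w : Finset V → ZMod 2) : boundary (z + w) = boundary z + boundary w := by
  funext τ
  simp [boundary, Finset.sum_add_distrib]

lemma boundary_sum {ι : Type*} (s : Finset ι) (z : ι → Finset V → ZMod 2) :
    boundary (∑ a ∈ s, z a) = ∑ a ∈ s, boundary (z a) := by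
  funext τ
  simp only [boundary, Finset.sum_apply]
  exact Finset.sum_comm

lemma chain_add_self (z : Finset V → ZMod 2) : z + z = 0 := by
  funext τ
  exact CharTwo.add_self_eq_zero _

lemma cone_zero (x : V) : cone x (0 : Finset V → ZMod 2) = 0 := by
  funext τ
  simp [cone]

lemma boundary_cone {x : V} {z : Finset V → ZMod 2} (hz : ∀ σ, x ∈ σ → z σ = 0) :
    boundary (cone x z) = z + cone x (boundary z) := by
  funext τ
  by_cases hx : x ∈ τ
  · have hsplit : (τ.erase x)ᶜ = insert x τᶜ := by
      ext v; by_cases h : v = x <;> simp [h]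
    have hrest : ∀ v ∈ τᶜ, cone x z (insert v τ) = z (insert v (τ.erase x)) := by
      intro v hv
      have hne : v ≠ x := by rintro rfl; simp [hx] at hv
      simp [cone, hx, Finset.erase_insert_of_ne hne]
    simp only [boundary, Pi.add_apply, cone, hx, if_true, hsplit]
    rw [Finset.sum_insert (by simp [hx]), Finset.insert_erase hx, hz τ hx]
    simp only [zero_add]
    refine Finset.sum_congr rfl fun v hv => ?_
    simpa [cone] using hrest v hv
  · simp only [boundary, Pi.add_apply, cone, hx, if_false, add_zero]
    rw [Finset.sum_eq_single x]
    · simp [hx]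
    · intro v _ hv
      simp [hx, Ne.symm hv]
    · simp [hx]

/-- A cone has no homology. -/
lemma acyclic_of_apex {K : Finset V → Prop} {x : V} (hK : ∀ σ, K σ → K (insert x σ)) (d : ℕ) :
    Acyclic K d := by
  intro i _ z hz hbz
  set z₀ : Finset V → ZMod 2 := fun σ => if x ∈ σ then 0 else z σ with hz₀
  set z₁ : Finset V → ZMod 2 := fun σ => if x ∈ σ then 0 else z (insert x σ) with hz₁
  have hoff : ∀ σ, x ∈ σ → z₀ σ = 0 := fun σ h => by simp [hz₀, h]
  have hoff' : ∀ σ, x ∈ σ → z₁ σ = 0 := fun σ h => by simp [hz₁, h]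
  have hdec : z = z₀ + cone x z₁ := by
    funext σ
    by_cases h : x ∈ σ <;> simp [hz₀, hz₁, cone, h, Finset.insert_erase]
  have hbd : boundary z₀ + z₁ + cone x (boundary z₁) = 0 := by
    rw [← hbz, hdec, boundary_add, boundary_cone hoff', add_assoc]
  have hone : cone x (boundary z₀) = cone x z₁ := by
    funext σ
    by_cases h : x ∈ σ
    · have := congrFun hbd (σ.erase x)
      simp only [Pi.add_apply, cone, Finset.notMem_erase, if_false, add_zero, Pi.zero_apply] at this
      simp only [cone, h, if_true]
      exact CharTwo.add_eq_zero.1 this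
    · simp [cone, h]
  refine ⟨cone x z₀, ?_, ?_⟩
  · intro σ hσ
    by_cases h : x ∈ σ
    · simp only [cone, h, if_true, hz₀, Finset.notMem_erase, if_false] at hσ
      obtain ⟨h1, h2⟩ := hz _ hσ
      refine ⟨by rw [← h1, Finset.card_erase_add_one h], ?_⟩
      have := hK _ h2
      rwa [Finset.insert_erase h] at this
    · simp [cone, h] at hσ
  · rw [boundary_cone hoff, hone, ← hdec]

/-- One step of the deletion/explosion exact sequence: `K` arises from `K'` by discarding the
simplices that contain the edge `xy`. -/
lemma acyclic_of_link {K K' L : Finset V → Prop} {x y : V} {d : ℕ} (hxy : x ≠ y)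
    (hK : ∀ σ, K σ ↔ K' σ ∧ ¬ (x ∈ σ ∧ y ∈ σ))
    (hL : ∀ σ, L σ ↔ x ∉ σ ∧ y ∉ σ ∧ K' (insert x (insert y σ)))
    (hdown : ∀ σ τ, σ ⊆ τ → K' τ → K' σ)
    (hK' : Acyclic K' (d + 1)) (hLd : Acyclic L d) : Acyclic K (d + 1) := by
  intro i hi z hz hbz
  obtain ⟨w, hw, hbw⟩ := hK' i hi z (fun σ hσ => ⟨(hz σ hσ).1, ((hK σ).1 (hz σ hσ).2).1⟩) hbz
  set w₀ : Finset V → ZMod 2 := fun σ => if x ∈ σ ∧ y ∈ σ then 0 else w σ with hw₀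
  set u : Finset V → ZMod 2 :=
    fun σ => if x ∈ σ ∨ y ∈ σ then 0 else w (insert x (insert y σ)) with hu
  have hux : ∀ σ, x ∈ σ → u σ = 0 := fun σ h => by simp [hu, h]
  have huy : ∀ σ, y ∈ σ → u σ = 0 := fun σ h => by simp [hu, h]
  have hcx : ∀ σ, x ∈ σ → cone y u σ = 0 := by
    intro σ h
    by_cases hy : y ∈ σ <;> simp [cone, hy]
    exact hux _ (Finset.mem_erase.2 ⟨hxy, h⟩)
  have hdec : w = w₀ + cone x (cone y u) := by
    funext σ
    by_cases h : x ∈ σ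
    · by_cases h' : y ∈ σ
      · have h'' : y ∈ σ.erase x := Finset.mem_erase.2 ⟨hxy.symm, h'⟩
        simp [hw₀, cone, h, h', hu, hxy.symm, Finset.insert_erase h'', Finset.insert_erase h]
      · simp [hw₀, cone, h, h']
    · simp [hw₀, cone, h]
  have hbu : boundary u = 0 := by
    funext τ
    by_cases h : x ∈ τ ∨ y ∈ τ
    · refine Finset.sum_eq_zero fun v _ => ?_
      rcases h with h | h
      · exact hux _ (Finset.mem_insert_of_mem h)
      · exact huy _ (Finset.mem_insert_of_mem h)
    · push Not at h
      have hzero : z (insert x (insert y τ)) = 0 := by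
        by_contra hne
        exact ((hK _).1 (hz _ hne).2).2 (by simp)
      rw [← hbw] at hzero
      rw [Pi.zero_apply, ← hzero, boundary, boundary]
      symm
      have hsub : (insert x (insert y τ))ᶜ ⊆ τᶜ :=
        Finset.compl_subset_compl.2 fun v hv => by simp [hv]
      refine (Finset.sum_subset_zero_on_sdiff hsub ?_ ?_)
      · intro v hv
        simp only [Finset.mem_sdiff, Finset.mem_compl, not_not, Finset.mem_insert] at hv
        rcases hv.2 with rfl | rfl | h'
        · exact hux _ (by simp)
        · exact huy _ (by simp)
        · exact absurd h' hv.1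
      · intro v hv
        simp only [Finset.mem_compl, Finset.mem_insert, not_or] at hv
        have hnot : ¬ (x ∈ insert v τ ∨ y ∈ insert v τ) := by
          simp only [Finset.mem_insert, not_or]
          exact ⟨⟨fun h1 => hv.1 h1.symm, h.1⟩, ⟨fun h1 => hv.2.1 h1.symm, h.2⟩⟩
        simp only [hu, hnot, if_false]
        congr 1
        ext t
        simp only [Finset.mem_insert]
        tauto
  have husupp : ∀ σ, u σ ≠ 0 → σ.card + 1 = i ∧ L σ := by
    intro σ hσ
    have h : ¬ (x ∈ σ ∨ y ∈ σ) := fun h => hσ (by simp [hu, h])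
    simp only [hu, h, if_false] at hσ
    push Not at h
    obtain ⟨h1, h2⟩ := hw _ hσ
    rw [Finset.card_insert_of_notMem (by simp [hxy, h.1]), Finset.card_insert_of_notMem h.2] at h1
    exact ⟨by omega, (hL σ).2 ⟨h.1, h.2, h2⟩⟩
  obtain ⟨v, hvs, hbv⟩ : ∃ v, SupportedOn L i v ∧ boundary v = u := by
    rcases Nat.eq_zero_or_pos i with rfl | hpos
    · refine ⟨0, fun σ h => absurd rfl h, ?_⟩
      funext σ
      by_contra hne
      have := (husupp σ (by intro h0; apply hne; rw [h0]; simp [boundary])).1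
      omega
    · obtain ⟨v, hv, hb⟩ := hLd (i - 1) (by omega) u
        (fun σ hσ => ⟨by have := (husupp σ hσ).1; omega, (husupp σ hσ).2⟩) hbu
      exact ⟨v, by rwa [Nat.sub_add_cancel hpos] at hv, hb⟩
  have hvx : ∀ σ, x ∈ σ → v σ = 0 := fun σ h => by
    by_contra hne; exact ((hL σ).1 (hvs σ hne).2).1 h
  have hvy : ∀ σ, y ∈ σ → v σ = 0 := fun σ h => by
    by_contra hne; exact ((hL σ).1 (hvs σ hne).2).2.1 h
  have hconesupp : ∀ t, (t = x ∨ t = y) → SupportedOn K (i + 1) (cone t v) := by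
    intro t ht σ hσ
    have hmem : t ∈ σ := by
      by_contra h; simp [cone, h] at hσ
    simp only [cone, hmem, if_true] at hσ
    obtain ⟨h1, h2⟩ := hvs _ hσ
    obtain ⟨h3, h4, h5⟩ := (hL _).1 h2
    refine ⟨by rw [← h1, Finset.card_erase_add_one hmem], (hK σ).2 ⟨hdown _ _ ?_ h5, ?_⟩⟩
    · intro s hs
      simp only [Finset.mem_insert, Finset.mem_erase]
      by_cases hst : s = t
      · rcases ht with rfl | rfl <;> simp [hst]
      · simp [hst, hs]
    · rintro ⟨hxs, hys⟩
      rcases ht with rfl | rfl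
      · exact h4 (Finset.mem_erase.2 ⟨hxy.symm, hys⟩)
      · exact h3 (Finset.mem_erase.2 ⟨hxy, hxs⟩)
  refine ⟨w₀ + (cone x v + cone y v), ?_, ?_⟩
  · intro σ hσ
    by_cases h0 : w₀ σ = 0
    · by_cases h1 : cone x v σ = 0
      · exact hconesupp y (Or.inr rfl) σ (by simpa [h0, h1] using hσ)
      · exact hconesupp x (Or.inl rfl) σ h1
    · have hnot : ¬ (x ∈ σ ∧ y ∈ σ) := fun h => h0 (by simp [hw₀, h])
      simp only [hw₀, hnot, if_false] at h0
      exact ⟨(hw σ h0).1, (hK σ).2 ⟨(hw σ h0).2, hnot⟩⟩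
  · have h1 : z = boundary w₀ + (cone y u + cone x u) := by
      rw [← hbw]
      conv_lhs => rw [hdec]
      rw [boundary_add, boundary_cone hcx, boundary_cone huy, hbu, cone_zero, add_zero]
    rw [boundary_add, boundary_add, boundary_cone hvx, boundary_cone hvy, hbv, h1]
    have := chain_add_self v
    calc boundary w₀ + (v + cone x u + (v + cone y u))
        = boundary w₀ + (cone y u + cone x u) + (v + v) := by abel
      _ = _ := by rw [this, add_zero]

end Chains

section Independence

variable {V : Type*} [Fintype V] [DecidableEq V]

/-- The independence complex of the graph `J` induced on `W`. -/
def Ind (J : V → V → Prop) (W σ : Finset V) : Prop :=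
  σ ⊆ W ∧ ∀ u ∈ σ, ∀ v ∈ σ, ¬ J u v

/-- Deleting the edges at `e` one by one, in the order given by `p`, reduces the acyclicity of an
independence complex to that of the complexes left after exploding an edge `ef`. -/
lemma acyclic_ind_of_explosions {J : V → V → Prop} (hsymm : ∀ u v, J u v → J v u)
    (hirr : ∀ v, ¬ J v v) {W : Finset V} {e : V} (he : e ∈ W) (p : V → ℕ) (d : ℕ)
    (h : ∀ f ∈ W, J e f → ∀ R ⊆ W, (∀ g ∈ R, g ≠ f ∧ ¬ J f g) →
      (∀ g ∈ W, g ≠ f → ¬ J f g → (J e g → p g < p f) → g ∈ R) → Acyclic (Ind J R) d) :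
    Acyclic (Ind J W) (d + 1) := by
  classical
  let K : Finset V → Finset V → Prop := fun D σ => σ ⊆ W ∧
    (∀ u ∈ σ, ∀ v ∈ σ, u ≠ e → v ≠ e → ¬ J u v) ∧ (e ∈ σ → ∀ v ∈ σ, J e v → v ∈ D)
  have key : ∀ m : ℕ, ∀ D : Finset V, ((W.filter (J e)) \ D).card = m →
      Acyclic (K D) (d + 1) := by
    intro m
    induction m with
    | zero =>
      intro D hD
      have hD' : ∀ v ∈ W, J e v → v ∈ D := by
        intro v hv hev
        by_contra hn
        have : v ∈ (W.filter (J e)) \ D := by simp [hv, hev, hn]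
        rw [Finset.card_eq_zero.1 hD] at this
        simp at this
      refine acyclic_of_apex (x := e) ?_ _
      rintro σ ⟨h1, h2, h3⟩
      refine ⟨Finset.insert_subset he h1, ?_, ?_⟩
      · intro u hu v hv hue hve
        exact h2 u ((Finset.mem_insert.1 hu).resolve_left hue) v
          ((Finset.mem_insert.1 hv).resolve_left hve) hue hve
      · intro _ v hv hev
        rcases Finset.mem_insert.1 hv with rfl | hv
        · exact absurd hev (hirr _)
        · exact hD' v (h1 hv) hev
    | succ m ih =>
      intro D hD
      have hne : ((W.filter (J e)) \ D).Nonempty := by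
        rw [← Finset.card_pos]; omega
      obtain ⟨f, hf, hmin⟩ := Finset.exists_min_image _ p hne
      simp only [Finset.mem_sdiff, Finset.mem_filter] at hf hmin
      obtain ⟨⟨hfW, hef⟩, hfD⟩ := hf
      have hne : e ≠ f := by rintro rfl; exact hirr _ hef
      set R := W.filter fun g => g ≠ f ∧ ¬ J f g ∧ (J e g → g ∈ D) with hR
      refine acyclic_of_link (K' := K (insert f D)) (L := Ind J R) hne ?_ ?_ ?_ ?_ ?_
      · intro σ
        constructor
        · rintro ⟨h1, h2, h3⟩
          exact ⟨⟨h1, h2, fun he' v hv hev => Finset.mem_insert_of_mem (h3 he' v hv hev)⟩,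
            fun hh => hfD (h3 hh.1 f hh.2 hef)⟩
        · rintro ⟨⟨h1, h2, h3⟩, h4⟩
          refine ⟨h1, h2, fun he' v hv hev => ?_⟩
          rcases Finset.mem_insert.1 (h3 he' v hv hev) with rfl | h
          · exact absurd ⟨he', hv⟩ h4
          · exact h
      · intro σ
        constructor
        · rintro ⟨h1, h2⟩
          have hes : e ∉ σ := fun hh => by
            have := h1 hh
            simp only [hR, Finset.mem_filter] at this
            exact this.2.2.1 (hsymm _ _ hef)
          have hfs : f ∉ σ := fun hh => by
            have := h1 hh
            simp [hR] at this
          have hmem : ∀ g ∈ σ, g ∈ W ∧ g ≠ f ∧ ¬ J f g ∧ (J e g → g ∈ D) := fun g hg => by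
            simpa [hR] using h1 hg
          refine ⟨hes, hfs, ?_, ?_, ?_⟩
          · intro g hg
            simp only [Finset.mem_insert] at hg
            rcases hg with rfl | rfl | hg
            exacts [he, hfW, (hmem g hg).1]
          · intro u hu v hv hue hve
            simp only [Finset.mem_insert] at hu hv
            rcases hu with rfl | rfl | hu
            · exact absurd rfl hue
            · rcases hv with rfl | rfl | hv
              · exact absurd rfl hve
              · exact hirr _
              · exact (hmem v hv).2.2.1
            · rcases hv with rfl | rfl | hv
              · exact absurd rfl hve
              · exact fun hh => (hmem u hu).2.2.1 (hsymm _ _ hh)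
              · exact h2 u hu v hv
          · intro _ v hv hev
            simp only [Finset.mem_insert] at hv
            rcases hv with rfl | rfl | hv
            · exact absurd hev (hirr _)
            · simp
            · exact Finset.mem_insert_of_mem ((hmem v hv).2.2.2 hev)
        · rintro ⟨hes, hfs, h1, h2, h3⟩
          refine ⟨?_, ?_⟩
          · intro g hg
            have hge : g ≠ e := by rintro rfl; exact hes hg
            have hgf : g ≠ f := by rintro rfl; exact hfs hg
            simp only [hR, Finset.mem_filter]
            refine ⟨h1 (by simp [hg]), hgf, h2 f (by simp) g (by simp [hg]) hne.symm hge, ?_⟩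
            intro hh
            exact (Finset.mem_insert.1 (h3 (by simp) g (by simp [hg]) hh)).resolve_left hgf
          · intro u hu v hv
            exact h2 u (by simp [hu]) v (by simp [hv]) (by rintro rfl; exact hes hu)
              (by rintro rfl; exact hes hv)
      · rintro σ τ hστ ⟨h1, h2, h3⟩
        exact ⟨hστ.trans h1, fun u hu v hv => h2 u (hστ hu) v (hστ hv),
          fun he' v hv => h3 (hστ he') v (hστ hv)⟩
      · apply ih
        rw [Finset.sdiff_insert, Finset.card_erase_of_mem (by simp [hfW, hef, hfD])]
        omega
      · refine h f hfW hef R (Finset.filter_subset _ _) ?_ ?_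
        · intro g hg
          simp only [hR, Finset.mem_filter] at hg
          exact ⟨hg.2.1, hg.2.2.1⟩
        · intro g hg hgf hfg hp
          simp only [hR, Finset.mem_filter]
          refine ⟨hg, hgf, hfg, fun heg => ?_⟩
          by_contra hgD
          exact absurd (hp heg) (not_lt.2 (hmin g ⟨⟨hg, heg⟩, hgD⟩))
  have hK : Ind J W = K ∅ := by
    funext σ
    apply propext
    constructor
    · rintro ⟨h1, h2⟩
      exact ⟨h1, fun u hu v hv _ _ => h2 u hu v hv, fun he' v hv hh => absurd hh (h2 e he' v hv)⟩
    · rintro ⟨h1, h2, h3⟩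
      refine ⟨h1, fun u hu v hv huv => ?_⟩
      by_cases hue : u = e
      · subst hue
        simpa using h3 hu v hv huv
      · by_cases hve : v = e
        · subst hve
          simpa using h3 hv u hu (hsymm _ _ huv)
        · exact h2 u hu v hv hue hve huv
  rw [hK]
  exact key _ ∅ rfl

/-- Adding a nonempty clique without edges to the rest raises the acyclicity by one. -/
lemma acyclic_ind_union_clique {J : V → V → Prop} (hsymm : ∀ u v, J u v → J v u)
    (hirr : ∀ v, ¬ J v v) {W Q : Finset V} {d : ℕ} (hQ : Q.Nonempty)
    (hclique : ∀ u ∈ Q, ∀ v ∈ Q, u ≠ v → J u v) (hWQ : ∀ u ∈ Q, ∀ v ∈ W, ¬ J u v)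
    (hdisj : Disjoint Q W) (hW : Acyclic (Ind J W) d) : Acyclic (Ind J (W ∪ Q)) (d + 1) := by
  obtain ⟨e, he⟩ := hQ
  refine acyclic_ind_of_explosions hsymm hirr (Finset.mem_union_right _ he) (fun _ => 0) d ?_
  intro f hf hef R hR h1 h2
  have hfQ : f ∈ Q := by
    rcases Finset.mem_union.1 hf with hf | hf
    · exact absurd hef (hWQ e he f hf)
    · exact hf
  have : R = W := by
    ext g
    constructor
    · intro hg
      rcases Finset.mem_union.1 (hR hg) with h | h
      · exact h
      · exact absurd (hclique f hfQ g h (h1 g hg).1.symm) (h1 g hg).2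
    · intro hg
      refine h2 g (Finset.mem_union_left _ hg) ?_ (hWQ f hfQ g hg) ?_
      · rintro rfl
        exact Finset.disjoint_left.1 hdisj hfQ hg
      · exact fun hh => absurd hh (hWQ e he g hg)
  rwa [this]

end Independence

section Rainbow

variable {V : Type*} [Fintype V] [DecidableEq V] {α : Type*} [DecidableEq α]

lemma sum_erase_erase_eq_zero (c : Finset α → Finset V → ZMod 2) (S : Finset α) :
    ∑ a ∈ S, ∑ b ∈ S.erase a, c ((S.erase a).erase b) = 0 := by
  rw [Finset.sum_sigma']
  refine Finset.sum_involution (fun x _ => ⟨x.2, x.1⟩) ?_ ?_ ?_ ?_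
  · rintro ⟨a, b⟩ _
    simp only
    rw [Finset.erase_right_comm]
    exact chain_add_self _
  · rintro ⟨a, b⟩ h _ heq
    simp only [Finset.mem_sigma, Finset.mem_erase] at h
    simp only [Sigma.mk.injEq] at heq
    exact h.2.1 heq.1
  · rintro ⟨a, b⟩ h
    simp only [Finset.mem_sigma, Finset.mem_erase] at h ⊢
    exact ⟨h.2.2, h.2.1.symm, h.1⟩
  · rintro ⟨a, b⟩ _
    rfl

/-- A compatible system of chains, one for each set of colours. -/
lemma exists_chain_system {K : Finset α → Finset V → Prop} (hempty : K ∅ ∅)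
    (hmono : ∀ S T, S ⊆ T → ∀ σ, K S σ → K T σ) (hK : ∀ S, Acyclic (K S) S.card) (m : ℕ) :
    ∃ c : Finset α → Finset V → ZMod 2, c ∅ = Pi.single ∅ 1 ∧ ∀ S, S.card ≤ m →
      SupportedOn (K S) S.card (c S) ∧ boundary (c S) = ∑ a ∈ S, c (S.erase a) := by
  classical
  induction m with
  | zero =>
    refine ⟨fun _ => Pi.single ∅ 1, rfl, fun S hS => ?_⟩
    obtain rfl : S = ∅ := Finset.card_eq_zero.1 (Nat.le_zero.1 hS)
    constructor
    · intro σ hσ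
      have : σ = ∅ := by
        by_contra h
        simp [h] at hσ
      subst this
      exact ⟨rfl, hempty⟩
    · funext τ
      simp [boundary]
  | succ m ih =>
    obtain ⟨c, hc0, hc⟩ := ih
    have hex : ∀ S : Finset α, S.card = m + 1 → ∃ w, SupportedOn (K S) (m + 1) w ∧
        boundary w = ∑ a ∈ S, c (S.erase a) := by
      intro S hS
      have hcard : ∀ a ∈ S, (S.erase a).card = m := fun a ha => by
        rw [Finset.card_erase_of_mem ha, hS, Nat.add_sub_cancel]
      refine hK S m (by omega) _ ?_ ?_
      · intro σ hσ
        rw [Finset.sum_apply] at hσ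
        obtain ⟨a, ha, hne⟩ := Finset.exists_ne_zero_of_sum_ne_zero hσ
        have := (hc _ (hcard a ha).le).1 σ hne
        exact ⟨by rw [this.1, hcard a ha], hmono _ _ (Finset.erase_subset _ _) _ this.2⟩
      · rw [boundary_sum, ← sum_erase_erase_eq_zero c S]
        exact Finset.sum_congr rfl fun a ha => (hc _ (hcard a ha).le).2
    choose w hw using hex
    refine ⟨fun S => if h : S.card = m + 1 then w S h else c S, by simp [hc0], fun S hS => ?_⟩
    have herase : ∀ a ∈ S, (if h : (S.erase a).card = m + 1 then w _ h else c (S.erase a))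
        = c (S.erase a) := fun a ha => by
      rw [dif_neg]
      have := Finset.card_erase_lt_of_mem ha
      omega
    simp only
    rw [Finset.sum_congr rfl herase]
    by_cases h : S.card = m + 1
    · simp only [h, dif_pos]
      exact hw S h
    · simp only [h, dif_neg, not_false_iff]
      exact hc S (by omega)

lemma card_filter_image_erase_eq (col : V → α) {σ : Finset V} {T : Finset α}
    (hT : σ.image col = T) (hcard : σ.card = T.card + 1) :
    (σ.filter fun v => (σ.erase v).image col = T).card = 2 := by
  obtain ⟨x, hx, y, hy, hxy, hcol⟩ : ∃ x ∈ σ, ∃ y ∈ σ, x ≠ y ∧ col x = col y :=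
    Finset.exists_ne_map_eq_of_card_lt_of_maps_to (t := T) (by omega)
      (fun v hv => by rw [← hT]; exact Finset.mem_image_of_mem _ hv)
  have himg : ∀ u v, v ∈ σ → u ≠ v → col u = col v → (σ.erase u).image col = T := by
    intro u v hv huv hc
    rw [← hT]
    apply Finset.Subset.antisymm (Finset.image_subset_image (Finset.erase_subset _ _))
    intro a ha
    obtain ⟨w, hw, rfl⟩ := Finset.mem_image.1 ha
    by_cases hwu : w = u
    · subst hwu
      exact Finset.mem_image.2 ⟨v, Finset.mem_erase.2 ⟨huv.symm, hv⟩, hc.symm⟩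
    · exact Finset.mem_image.2 ⟨w, Finset.mem_erase.2 ⟨hwu, hw⟩, rfl⟩
  have hinj : Set.InjOn col (σ.erase x : Finset V) := by
    apply Finset.injOn_of_card_image_eq
    rw [himg x y hy hxy hcol, Finset.card_erase_of_mem hx]
    omega
  have : (σ.filter fun v => (σ.erase v).image col = T) = {x, y} := by
    ext v
    simp only [Finset.mem_filter, Finset.mem_insert, Finset.mem_singleton]
    constructor
    · rintro ⟨hv, himv⟩
      by_contra hne
      push Not at hne
      have hvx : v ∈ σ.erase x := Finset.mem_erase.2 ⟨hne.1, hv⟩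
      have hyx : y ∈ σ.erase x := Finset.mem_erase.2 ⟨hxy.symm, hy⟩
      have : col v ∈ (σ.erase v).image col := by
        rw [himv, ← hT]; exact Finset.mem_image_of_mem _ hv
      obtain ⟨w, hw, hwv⟩ := Finset.mem_image.1 this
      obtain ⟨hwne, hwσ⟩ := Finset.mem_erase.1 hw
      by_cases hwx : w = x
      · subst hwx
        exact hne.2 (hinj hvx hyx (by rw [← hwv, hcol]))
      · exact hwne (hinj (Finset.mem_erase.2 ⟨hwx, hwσ⟩) hvx hwv)
    · rintro (rfl | rfl)
      · exact ⟨hx, himg _ y hy hxy hcol⟩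
      · exact ⟨hy, himg _ x hx hxy.symm hcol.symm⟩
  rw [this, Finset.card_pair hxy]

lemma card_filter_image_erase_eq_erase (col : V → α) {σ : Finset V} {S : Finset α} {a : α}
    (ha : a ∈ S) (hS : σ.image col = S) (hcard : σ.card = S.card) :
    (σ.filter fun v => (σ.erase v).image col = S.erase a).card = 1 := by
  have hinj : Set.InjOn col (σ : Finset V) := by
    apply Finset.injOn_of_card_image_eq
    rw [hS, hcard]
  obtain ⟨x, hx, rfl⟩ := Finset.mem_image.1 (hS ▸ ha)
  rw [Finset.card_eq_one]
  refine ⟨x, ?_⟩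
  ext v
  simp only [Finset.mem_filter, Finset.mem_singleton]
  constructor
  · rintro ⟨hv, himv⟩
    by_contra hne
    have : col x ∈ (σ.erase v).image col :=
      Finset.mem_image.2 ⟨x, Finset.mem_erase.2 ⟨Ne.symm hne, hx⟩, rfl⟩
    rw [himv] at this
    simp at this
  · rintro rfl
    refine ⟨hx, ?_⟩
    rw [← hS]
    ext b
    simp only [Finset.mem_image, Finset.mem_erase]
    constructor
    · rintro ⟨w, ⟨h1, h2⟩, rfl⟩
      exact ⟨fun h => h1 (hinj h2 hx h), w, h2, rfl⟩
    · rintro ⟨h1, w, h2, rfl⟩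
      exact ⟨w, ⟨by rintro rfl; exact h1 rfl, h2⟩, rfl⟩

/-- Summing a boundary over faces is summing the chain with incidence multiplicities. -/
lemma sum_boundary (P : Finset V → Prop) [DecidablePred P] (z : Finset V → ZMod 2) :
    ∑ τ with P τ, boundary z τ = ∑ σ, z σ * ((σ.filter fun v => P (σ.erase v)).card : ZMod 2) := by
  have h1 : ∑ τ with P τ, boundary z τ
      = ∑ x ∈ (Finset.univ.filter P).sigma (fun τ => τᶜ), z (insert x.2 x.1) := by
    rw [Finset.sum_sigma]
    rfl
  have h2 : ∑ σ, z σ * ((σ.filter fun v => P (σ.erase v)).card : ZMod 2)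
      = ∑ x ∈ (Finset.univ : Finset (Finset V)).sigma
          (fun σ => σ.filter fun v => P (σ.erase v)), z x.1 := by
    rw [Finset.sum_sigma]
    refine Finset.sum_congr rfl fun σ _ => ?_
    simp [mul_comm]
  rw [h1, h2]
  refine Finset.sum_bij' (fun x _ => ⟨insert x.2 x.1, x.2⟩) (fun x _ => ⟨x.1.erase x.2, x.2⟩)
    ?_ ?_ ?_ ?_ ?_
  · rintro ⟨τ, v⟩ h
    simp only [Finset.mem_sigma, Finset.mem_filter, Finset.mem_univ, true_and,
      Finset.mem_compl] at h ⊢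
    simp [h.1, h.2]
  · rintro ⟨σ, v⟩ h
    simp only [Finset.mem_sigma, Finset.mem_filter, Finset.mem_univ, true_and,
      Finset.mem_compl] at h ⊢
    simp [h.2]
  · rintro ⟨τ, v⟩ h
    simp only [Finset.mem_sigma, Finset.mem_filter, Finset.mem_univ, true_and,
      Finset.mem_compl] at h
    simp [h.2]
  · rintro ⟨σ, v⟩ h
    simp only [Finset.mem_sigma, Finset.mem_filter, Finset.mem_univ, true_and] at h
    simp [h.1]
  · rintro ⟨τ, v⟩ _
    rfl

/-- The topological Hall theorem: a rainbow simplex exists when the complex spanned by every set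
of colours is sufficiently acyclic. -/
theorem exists_rainbow [Fintype α] {K : Finset α → Finset V → Prop} (col : V → α)
    (hempty : K ∅ ∅) (hmono : ∀ S T, S ⊆ T → ∀ σ, K S σ → K T σ)
    (hcol : ∀ S σ, K S σ → σ.image col ⊆ S) (hK : ∀ S, Acyclic (K S) S.card) :
    ∃ σ, K Finset.univ σ ∧ σ.image col = Finset.univ ∧ σ.card = Fintype.card α := by
  classical
  obtain ⟨c, hc0, hc⟩ := exists_chain_system hempty hmono hK (Fintype.card α)
  replace hc := fun S => hc S (Finset.card_le_univ S)
  have hstep : ∀ S : Finset α, ∀ a ∈ S, ∑ σ with σ.image col = S, c S σ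
      = ∑ σ with σ.image col = S.erase a, c (S.erase a) σ := by
    intro S a ha
    have h1 : ∑ τ with τ.image col = S.erase a, boundary (c S) τ
        = ∑ σ with σ.image col = S.erase a, c (S.erase a) σ := by
      refine Finset.sum_congr rfl fun τ hτ => ?_
      rw [(hc S).2, Finset.sum_apply]
      refine Finset.sum_eq_single a (fun b hb hba => ?_) (fun h => absurd ha h)
      by_contra hne
      have hsub := hcol _ _ ((hc _).1 τ hne).2
      rw [(Finset.mem_filter.1 hτ).2] at hsub
      have := hsub (Finset.mem_erase.2 ⟨hba, hb⟩)
      simp at this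
    rw [← h1, sum_boundary, Finset.sum_filter]
    refine Finset.sum_congr rfl fun σ _ => ?_
    by_cases hz : c S σ = 0
    · simp [hz]
    · obtain ⟨hcard, hKσ⟩ := (hc S).1 σ hz
      by_cases hS : σ.image col = S
      · rw [card_filter_image_erase_eq_erase col ha hS hcard]
        simp [hS]
      · rw [if_neg hS]
        by_cases hT : σ.image col = S.erase a
        · rw [card_filter_image_erase_eq col hT (by rw [hcard, Finset.card_erase_add_one ha])]
          have : ((2 : ℕ) : ZMod 2) = 0 := rfl
          rw [this, mul_zero]
        · rw [Finset.card_eq_zero.2, Nat.cast_zero, mul_zero]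
          rw [Finset.filter_eq_empty_iff]
          intro v hv himv
          have hsub := hcol _ _ hKσ
          have hsub' : S.erase a ⊆ σ.image col := by
            rw [← himv]; exact Finset.image_subset_image (Finset.erase_subset _ _)
          by_cases haσ : a ∈ σ.image col
          · apply hS
            apply Finset.Subset.antisymm hsub
            intro b hb
            by_cases hba : b = a
            · rwa [hba]
            · exact hsub' (Finset.mem_erase.2 ⟨hba, hb⟩)
          · apply hT
            apply Finset.Subset.antisymm _ hsub'
            intro b hb
            exact Finset.mem_erase.2 ⟨by rintro rfl; exact haσ hb, hsub hb⟩
  have hone : ∀ m, ∀ S : Finset α, S.card = m → ∑ σ with σ.image col = S, c S σ = 1 := by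
    intro m
    induction m with
    | zero =>
      intro S hS
      obtain rfl := Finset.card_eq_zero.1 hS
      rw [hc0]
      simp [Finset.image_eq_empty]
    | succ m ih =>
      intro S hS
      obtain ⟨a, ha⟩ : S.Nonempty := by rw [← Finset.card_pos]; omega
      rw [hstep S a ha]
      exact ih _ (by rw [Finset.card_erase_of_mem ha]; omega)
  have hne : ∑ σ with σ.image col = Finset.univ, c Finset.univ σ ≠ 0 := by
    rw [hone _ Finset.univ rfl]; exact one_ne_zero
  obtain ⟨σ, hσ, hz⟩ := Finset.exists_ne_zero_of_sum_ne_zero hne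
  obtain ⟨h1, h2⟩ := (hc _).1 σ hz
  exact ⟨σ, h2, (Finset.mem_filter.1 hσ).2, h1⟩

end Rainbow

section Bipartite

variable {V B C : Type*} [DecidableEq V] [DecidableEq B] [DecidableEq C]

/-- The vertices of the second class joined to `A` by an edge in `W`. -/
def nbr (l : V → B) (ρ : V → C) (W : Finset V) (A : Finset B) : Finset C :=
  (W.filter fun g => l g ∈ A).image ρ

/-- No two edges in `M` share an end. -/
def IsBipMatching (l : V → B) (ρ : V → C) (M : Finset V) : Prop :=
  Set.InjOn l (M : Set V) ∧ Set.InjOn ρ (M : Set V)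

lemma IsBipMatching.mono {l : V → B} {ρ : V → C} {M N : Finset V} (h : IsBipMatching l ρ M)
    (hN : N ⊆ M) : IsBipMatching l ρ N :=
  ⟨h.1.mono (by exact_mod_cast hN), h.2.mono (by exact_mod_cast hN)⟩

lemma IsBipMatching.swap {l : V → B} {ρ : V → C} {M : Finset V} (h : IsBipMatching l ρ M) :
    IsBipMatching ρ l M := ⟨h.2, h.1⟩

lemma IsBipMatching.union {l : V → B} {ρ : V → C} {M N : Finset V} (hM : IsBipMatching l ρ M)
    (hN : IsBipMatching l ρ N) (h : ∀ g ∈ M, ∀ g' ∈ N, l g ≠ l g' ∧ ρ g ≠ ρ g') :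
    IsBipMatching l ρ (M ∪ N) := by
  constructor
  · intro g hg g' hg' heq
    simp only [Finset.coe_union, Set.mem_union, Finset.mem_coe] at hg hg'
    rcases hg with hg | hg <;> rcases hg' with hg' | hg'
    · exact hM.1 hg hg' heq
    · exact absurd heq (h g hg g' hg').1
    · exact absurd heq.symm (h g' hg' g hg).1
    · exact hN.1 hg hg' heq
  · intro g hg g' hg' heq
    simp only [Finset.coe_union, Set.mem_union, Finset.mem_coe] at hg hg'
    rcases hg with hg | hg <;> rcases hg' with hg' | hg'
    · exact hM.2 hg hg' heq
    · exact absurd heq (h g hg g' hg').2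
    · exact absurd heq.symm (h g' hg' g hg).2
    · exact hN.2 hg hg' heq

lemma card_union_of_ends_ne {l : V → B} {M N : Finset V}
    (h : ∀ g ∈ M, ∀ g' ∈ N, l g ≠ l g') : (M ∪ N).card = M.card + N.card :=
  Finset.card_union_of_disjoint
    (Finset.disjoint_left.2 fun g hg hg' => h g hg g hg' rfl)

lemma mem_nbr {l : V → B} {ρ : V → C} {W : Finset V} {A : Finset B} {c : C} :
    c ∈ nbr l ρ W A ↔ ∃ g ∈ W, l g ∈ A ∧ ρ g = c := by
  simp [nbr, and_assoc]

lemma mem_nbr_of_mem {l : V → B} {ρ : V → C} {W : Finset V} {A : Finset B} {g : V} (hg : g ∈ W)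
    (hA : l g ∈ A) : ρ g ∈ nbr l ρ W A := mem_nbr.2 ⟨g, hg, hA, rfl⟩

lemma nbr_mono {l : V → B} {ρ : V → C} {W : Finset V} {A A' : Finset B} (h : A ⊆ A') :
    nbr l ρ W A ⊆ nbr l ρ W A' := by
  intro c hc
  obtain ⟨g, hg, hA, rfl⟩ := mem_nbr.1 hc
  exact mem_nbr_of_mem hg (h hA)

lemma nbr_union {l : V → B} {ρ : V → C} {W : Finset V} (A A' : Finset B) :
    nbr l ρ W (A ∪ A') = nbr l ρ W A ∪ nbr l ρ W A' := by
  ext c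
  simp only [Finset.mem_union, mem_nbr]
  constructor
  · rintro ⟨g, hg, h | h, rfl⟩
    · exact Or.inl ⟨g, hg, h, rfl⟩
    · exact Or.inr ⟨g, hg, h, rfl⟩
  · rintro (⟨g, hg, h, rfl⟩ | ⟨g, hg, h, rfl⟩)
    · exact ⟨g, hg, Or.inl h, rfl⟩
    · exact ⟨g, hg, Or.inr h, rfl⟩

@[simp] lemma nbr_empty {l : V → B} {ρ : V → C} {W : Finset V} : nbr l ρ W ∅ = ∅ := by
  simp [nbr]

/-- A set of pairs without repeated entries that are all joined by edges lifts to a matching. -/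
lemma exists_bipMatching_of_pairs {l : V → B} {ρ : V → C} {W : Finset V} {T : Finset (B × C)}
    (h1 : Set.InjOn Prod.fst (T : Set (B × C))) (h2 : Set.InjOn Prod.snd (T : Set (B × C)))
    (h : ∀ t ∈ T, ∃ g ∈ W, (l g, ρ g) = t) :
    ∃ M ⊆ W, IsBipMatching l ρ M ∧ M.card = T.card ∧ ∀ g ∈ M, (l g, ρ g) ∈ T := by
  rcases T.eq_empty_or_nonempty with rfl | ⟨t₀, ht₀⟩
  · exact ⟨∅, by simp, by simp [IsBipMatching], rfl, by simp⟩
  have : Nonempty V := ⟨(h t₀ ht₀).choose⟩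
  choose! φ hφW hφ using h
  refine ⟨T.image φ, ?_, ⟨?_, ?_⟩, ?_, ?_⟩
  · intro g hg
    obtain ⟨t, ht, rfl⟩ := Finset.mem_image.1 hg
    exact hφW t ht
  · intro g hg g' hg' heq
    obtain ⟨t, ht, rfl⟩ := Finset.mem_image.1 (Finset.mem_coe.1 hg)
    obtain ⟨t', ht', rfl⟩ := Finset.mem_image.1 (Finset.mem_coe.1 hg')
    rw [h1 ht ht' (by rw [← hφ t ht, ← hφ t' ht']; exact heq)]
  · intro g hg g' hg' heq
    obtain ⟨t, ht, rfl⟩ := Finset.mem_image.1 (Finset.mem_coe.1 hg)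
    obtain ⟨t', ht', rfl⟩ := Finset.mem_image.1 (Finset.mem_coe.1 hg')
    rw [h2 ht ht' (by rw [← hφ t ht, ← hφ t' ht']; exact heq)]
  · refine Finset.card_image_of_injOn fun t ht t' ht' heq => ?_
    rw [← hφ t ht, ← hφ t' ht', heq]
  · intro g hg
    obtain ⟨t, ht, rfl⟩ := Finset.mem_image.1 hg
    rw [hφ t ht]; exact ht

/-- Hall's theorem with a set `U` of forbidden ends. -/
lemma exists_bipMatching_of_hall {l : V → B} {ρ : V → C} {W : Finset V} {P : Finset B}
    {U : Finset C} (h : ∀ A ⊆ P, A.card ≤ (nbr l ρ W A \ U).card) :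
    ∃ M ⊆ W, IsBipMatching l ρ M ∧ M.card = P.card ∧ ∀ g ∈ M, l g ∈ P ∧ ρ g ∉ U := by
  have hall := (Finset.all_card_le_biUnion_card_iff_exists_injective
    (fun b : P => nbr l ρ W {b.1} \ U)).1 ?_
  · obtain ⟨φ, hinj, hmem⟩ := hall
    have hmem' : ∀ b : P, ∃ g ∈ W, l g = b.1 ∧ ρ g = φ b ∧ φ b ∉ U := by
      intro b
      have := hmem b
      simp only [Finset.mem_sdiff, mem_nbr, Finset.mem_singleton] at this
      obtain ⟨⟨g, hg, h1, h2⟩, h3⟩ := this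
      exact ⟨g, hg, h1, h2, h3⟩
    set T := Finset.univ.image fun b : P => (b.1, φ b) with hT
    have hT1 : Set.InjOn Prod.fst (T : Set (B × C)) := by
      intro t ht t' ht' heq
      obtain ⟨b, -, rfl⟩ := Finset.mem_image.1 (Finset.mem_coe.1 ht)
      obtain ⟨b', -, rfl⟩ := Finset.mem_image.1 (Finset.mem_coe.1 ht')
      rw [Subtype.ext heq]
    have hT2 : Set.InjOn Prod.snd (T : Set (B × C)) := by
      intro t ht t' ht' heq
      obtain ⟨b, -, rfl⟩ := Finset.mem_image.1 (Finset.mem_coe.1 ht)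
      obtain ⟨b', -, rfl⟩ := Finset.mem_image.1 (Finset.mem_coe.1 ht')
      rw [hinj heq]
    have hT3 : ∀ t ∈ T, ∃ g ∈ W, (l g, ρ g) = t := by
      intro t ht
      obtain ⟨b, -, rfl⟩ := Finset.mem_image.1 ht
      obtain ⟨g, hg, h1, h2, _⟩ := hmem' b
      exact ⟨g, hg, by rw [h1, h2]⟩
    obtain ⟨M, hMW, hM, hcard, hMT⟩ := exists_bipMatching_of_pairs hT1 hT2 hT3
    refine ⟨M, hMW, hM, ?_, ?_⟩
    · rw [hcard, hT, Finset.card_image_of_injective _ fun b b' hb => hinj (congrArg Prod.snd hb)]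
      simp
    · intro g hg
      obtain ⟨b, -, hb⟩ := Finset.mem_image.1 (hMT g hg)
      obtain ⟨_, _, _, _, hU⟩ := hmem' b
      simp only [Prod.mk.injEq] at hb
      rw [← hb.1, ← hb.2]
      exact ⟨b.2, hU⟩
  · intro s
    have h1 := h (s.map (Function.Embedding.subtype _)) (fun b hb => by
      obtain ⟨b', _, rfl⟩ := Finset.mem_map.1 hb
      exact b'.2)
    rw [Finset.card_map] at h1
    refine h1.trans (Finset.card_le_card ?_)
    intro c hc
    simp only [Finset.mem_sdiff, mem_nbr, Finset.mem_map] at hc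
    obtain ⟨⟨g, hg, ⟨b, hb, hbg⟩, rfl⟩, hU⟩ := hc
    simp only [Finset.mem_biUnion, Finset.mem_sdiff]
    exact ⟨b, hb, mem_nbr_of_mem hg (by simp [← hbg]), hU⟩

/-- The deficiency version of Hall's theorem. -/
lemma exists_bipMatching_deficiency (l : V → B) (ρ : V → C) (W : Finset V) :
    ∃ M ⊆ W, IsBipMatching l ρ M ∧ ∃ A ⊆ W.image l,
      (W.image l).card + (nbr l ρ W A).card ≤ M.card + A.card := by
  set P := W.image l with hP
  obtain ⟨A, hA, hmax⟩ := Finset.exists_max_image P.powerset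
    (fun A => (A.card : ℤ) - (nbr l ρ W A).card) ⟨∅, by simp⟩
  rw [Finset.mem_powerset] at hA
  have hpos : (nbr l ρ W A).card ≤ A.card := by
    have := hmax ∅ (by simp)
    simp at this
    exact this
  set δ := A.card - (nbr l ρ W A).card with hδ
  let ρ' : V ⊕ (B × Fin δ) → C ⊕ Fin δ := Sum.map ρ Prod.snd
  let l' : V ⊕ (B × Fin δ) → B := Sum.elim l Prod.fst
  let W' : Finset (V ⊕ (B × Fin δ)) := W.disjSum (P ×ˢ Finset.univ)
  obtain ⟨M, hMW, hM, hcard, hMP⟩ := exists_bipMatching_of_hall (l := l') (ρ := ρ') (W := W')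
    (P := P) (U := ∅) (by
      intro A' hA'
      rcases A'.eq_empty_or_nonempty with rfl | ⟨b, hb⟩
      · simp
      have hsub : (nbr l ρ W A').disjSum (Finset.univ : Finset (Fin δ)) ⊆ nbr l' ρ' W' A' := by
        intro c hc
        rcases Finset.mem_disjSum.1 hc with ⟨c, hc', rfl⟩ | ⟨j, _, rfl⟩
        · obtain ⟨g, hg, hgA, rfl⟩ := mem_nbr.1 hc'
          exact mem_nbr.2 ⟨Sum.inl g, by simp [W', hg], hgA, rfl⟩
        · exact mem_nbr.2 ⟨Sum.inr (b, j), by simp [W', hA' hb], hb, rfl⟩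
      have h1 := Finset.card_le_card hsub
      rw [Finset.card_disjSum, Finset.card_univ, Fintype.card_fin] at h1
      have h2 := hmax A' (Finset.mem_powerset.2 hA')
      rw [Finset.sdiff_empty]
      omega)
  have hsplit : M.card = M.toLeft.card + M.toRight.card := by
    exact (Finset.card_toLeft_add_card_toRight).symm
  have hright : M.toRight.card ≤ δ := by
    have : Set.InjOn Prod.snd (M.toRight : Set (B × Fin δ)) := by
      intro t ht t' ht' heq
      have := hM.2 (Finset.mem_coe.2 (Finset.mem_toRight.1 ht))
        (Finset.mem_coe.2 (Finset.mem_toRight.1 ht')) (by simp [ρ', heq])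
      simpa using this
    rw [← Finset.card_image_of_injOn this]
    exact (Finset.card_le_univ _).trans (by simp)
  refine ⟨M.toLeft, ?_, ⟨?_, ?_⟩, A, hA, by omega⟩
  · intro g hg
    simpa [W'] using hMW (Finset.mem_toLeft.1 hg)
  · intro t ht t' ht' heq
    have := hM.1 (Finset.mem_coe.2 (Finset.mem_toLeft.1 ht))
      (Finset.mem_coe.2 (Finset.mem_toLeft.1 ht')) (by simp [l', heq])
    simpa using this
  · intro t ht t' ht' heq
    have := hM.2 (Finset.mem_coe.2 (Finset.mem_toLeft.1 ht))
      (Finset.mem_coe.2 (Finset.mem_toLeft.1 ht')) (by simp [ρ', heq])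
    simpa using this

/-- A bipartite multigraph has a matching at least as large as any fractional one. -/
lemma exists_bipMatching_of_fractional {l : V → B} {ρ : V → C} {W : Finset V} (w : V → ℚ)
    (hw : ∀ g ∈ W, 0 ≤ w g) (hl : ∀ b, ∑ g ∈ W with l g = b, w g ≤ 1)
    (hρ : ∀ c, ∑ g ∈ W with ρ g = c, w g ≤ 1) :
    ∃ M ⊆ W, IsBipMatching l ρ M ∧ ∑ g ∈ W, w g ≤ M.card := by
  obtain ⟨M, hMW, hM, A, hA, hcard⟩ := exists_bipMatching_deficiency l ρ W
  refine ⟨M, hMW, hM, ?_⟩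
  have h1 : ∑ g ∈ W with l g ∈ A, w g ≤ (nbr l ρ W A).card := by
    calc ∑ g ∈ W with l g ∈ A, w g
        = ∑ c ∈ nbr l ρ W A, ∑ g ∈ W.filter (fun g => l g ∈ A) with ρ g = c, w g :=
          (Finset.sum_fiberwise_of_maps_to
            (fun g hg => Finset.mem_image_of_mem _ hg) w).symm
      _ ≤ ∑ c ∈ nbr l ρ W A, 1 := by
          refine Finset.sum_le_sum fun c _ => le_trans ?_ (hρ c)
          refine Finset.sum_le_sum_of_subset_of_nonneg ?_ ?_
          · exact Finset.filter_subset_filter _ (Finset.filter_subset _ _)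
          · exact fun g hg _ => hw g (Finset.mem_filter.1 hg).1
      _ = _ := by simp
  have h2 : ∑ g ∈ W with ¬ l g ∈ A, w g ≤ ((W.image l) \ A).card := by
    calc ∑ g ∈ W with ¬ l g ∈ A, w g
        = ∑ b ∈ (W.image l) \ A, ∑ g ∈ W.filter (fun g => ¬ l g ∈ A) with l g = b, w g :=
          (Finset.sum_fiberwise_of_maps_to (fun g hg => by
            rw [Finset.mem_filter] at hg
            exact Finset.mem_sdiff.2 ⟨Finset.mem_image_of_mem _ hg.1, hg.2⟩) w).symm
      _ ≤ ∑ b ∈ (W.image l) \ A, 1 := by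
          refine Finset.sum_le_sum fun b _ => le_trans ?_ (hl b)
          refine Finset.sum_le_sum_of_subset_of_nonneg ?_ ?_
          · exact Finset.filter_subset_filter _ (Finset.filter_subset _ _)
          · exact fun g hg _ => hw g (Finset.mem_filter.1 hg).1
      _ = _ := by simp
  rw [← Finset.sum_filter_add_sum_filter_not W (fun g => l g ∈ A)]
  have h3 : (nbr l ρ W A).card + ((W.image l) \ A).card ≤ M.card := by
    have := Finset.card_sdiff_add_card_eq_card hA
    omega
  have h4 : ((nbr l ρ W A).card : ℚ) + ((W.image l) \ A).card ≤ M.card := by exact_mod_cast h3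
  linarith

/-- The size of a largest matching in `W`. -/
noncomputable def bipNu (l : V → B) (ρ : V → C) (W : Finset V) : ℕ := by
  classical exact (W.powerset.filter fun M => IsBipMatching l ρ M).sup Finset.card

lemma card_le_bipNu {l : V → B} {ρ : V → C} {W M : Finset V} (hMW : M ⊆ W)
    (hM : IsBipMatching l ρ M) : M.card ≤ bipNu l ρ W := by
  classical
  exact Finset.le_sup (f := Finset.card)
    (Finset.mem_filter.2 ⟨Finset.mem_powerset.2 hMW, hM⟩)

lemma exists_card_eq_bipNu (l : V → B) (ρ : V → C) (W : Finset V) :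
    ∃ M ⊆ W, IsBipMatching l ρ M ∧ M.card = bipNu l ρ W := by
  classical
  obtain ⟨M, hM, h⟩ := Finset.exists_mem_eq_sup
    (W.powerset.filter fun M => IsBipMatching l ρ M)
    ⟨∅, Finset.mem_filter.2 ⟨by simp, by simp [IsBipMatching]⟩⟩ Finset.card
  rw [Finset.mem_filter, Finset.mem_powerset] at hM
  exact ⟨M, hM.1, hM.2, h.symm⟩

/-- At most one matching edge is lost for each vertex that meets a removed edge. -/
lemma bipNu_le_of_cover {l : V → B} {ρ : V → C} {W R : Finset V} (X : Finset B) (Y : Finset C)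
    (h : ∀ g ∈ W, g ∉ R → l g ∈ X ∨ ρ g ∈ Y) :
    bipNu l ρ W ≤ bipNu l ρ R + X.card + Y.card := by
  obtain ⟨M, hMW, hM, hcard⟩ := exists_card_eq_bipNu l ρ W
  have h1 : (M.filter fun g => g ∈ R).card ≤ bipNu l ρ R :=
    card_le_bipNu (fun g hg => (Finset.mem_filter.1 hg).2) (hM.mono (Finset.filter_subset _ _))
  have h2 : (M.filter fun g => l g ∈ X).card ≤ X.card :=
    Finset.card_le_card_of_injOn l (fun g hg => (Finset.mem_filter.1 hg).2)
      (hM.1.mono (by exact_mod_cast Finset.filter_subset _ _))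
  have h3 : (M.filter fun g => ρ g ∈ Y).card ≤ Y.card :=
    Finset.card_le_card_of_injOn ρ (fun g hg => (Finset.mem_filter.1 hg).2)
      (hM.2.mono (by exact_mod_cast Finset.filter_subset _ _))
  have h4 : M ⊆ (M.filter fun g => g ∈ R) ∪ (M.filter fun g => l g ∈ X)
      ∪ (M.filter fun g => ρ g ∈ Y) := by
    intro g hg
    simp only [Finset.mem_union, Finset.mem_filter]
    by_cases hR : g ∈ R
    · exact Or.inl (Or.inl ⟨hg, hR⟩)
    · rcases h g (hMW hg) hR with h | h
      · exact Or.inl (Or.inr ⟨hg, h⟩)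
      · exact Or.inr ⟨hg, h⟩
  have h5 := Finset.card_le_card h4
  have h6 := Finset.card_union_le ((M.filter fun g => g ∈ R) ∪ (M.filter fun g => l g ∈ X))
    (M.filter fun g => ρ g ∈ Y)
  have h7 := Finset.card_union_le (M.filter fun g => g ∈ R) (M.filter fun g => l g ∈ X)
  omega

end Bipartite

section Surplus

variable {V B C : Type*} [DecidableEq V] [DecidableEq B] [DecidableEq C]

/-- Two edges are adjacent in the line graph. -/
def Meets (l : V → B) (ρ : V → C) (e f : V) : Prop := e ≠ f ∧ (l e = l f ∨ ρ e = ρ f)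

lemma Meets.symm {l : V → B} {ρ : V → C} {e f : V} (h : Meets l ρ e f) : Meets l ρ f e :=
  ⟨h.1.symm, h.2.imp Eq.symm Eq.symm⟩

/-- If every nonempty subset of `P` has more neighbours than elements, some vertex of `P` shares at
most one neighbour with every tight set. -/
lemma exists_unentangled {l : V → B} {ρ : V → C} {W : Finset V} {P : Finset B} (hP : P.Nonempty)
    (hsur : ∀ A ⊆ P, A.Nonempty → A.card + 1 ≤ (nbr l ρ W A).card) :
    ∃ t ∈ P, ∀ A ⊆ P.erase t, (nbr l ρ W A).card = A.card + 1 →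
      (nbr l ρ W A ∩ nbr l ρ W {t}).card ≤ 1 := by
  classical
  by_contra hcon
  push Not at hcon
  let bad : Finset (Finset B) := P.powerset.filter fun A => ∃ t ∈ P, t ∉ A ∧
    (nbr l ρ W A).card = A.card + 1 ∧ 1 < (nbr l ρ W A ∩ nbr l ρ W {t}).card
  have hbadne : bad.Nonempty := by
    obtain ⟨t, ht⟩ := hP
    obtain ⟨A, hA, h1, h2⟩ := hcon t ht
    refine ⟨A, Finset.mem_filter.2 ⟨Finset.mem_powerset.2
      (hA.trans (Finset.erase_subset _ _)), t, ht, fun h => ?_, h1, h2⟩⟩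
    simpa using hA h
  obtain ⟨X, hX, hmin⟩ := Finset.exists_min_image bad Finset.card hbadne
  obtain ⟨hXP, t, ht, htX, hX1, hX2⟩ := Finset.mem_filter.1 hX
  rw [Finset.mem_powerset] at hXP
  obtain ⟨s, hs⟩ : X.Nonempty := by
    rw [Finset.nonempty_iff_ne_empty]
    rintro rfl
    simp at hX1
  obtain ⟨Y, hYP, hY1, hY2⟩ := hcon s (hXP hs)
  have hsY : s ∉ Y := fun h => by simpa using hYP h
  replace hYP : Y ⊆ P := hYP.trans (Finset.erase_subset _ _)
  have hsub : nbr l ρ W (X ∩ Y) ⊆ nbr l ρ W X ∩ nbr l ρ W Y :=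
    Finset.subset_inter (nbr_mono Finset.inter_subset_left) (nbr_mono Finset.inter_subset_right)
  have hsX : nbr l ρ W {s} ⊆ nbr l ρ W X := nbr_mono (Finset.singleton_subset_iff.2 hs)
  have hsub2 : nbr l ρ W Y ∩ nbr l ρ W {s} ⊆ nbr l ρ W X ∩ nbr l ρ W Y := by
    intro c hc
    rw [Finset.mem_inter] at hc ⊢
    exact ⟨hsX hc.2, hc.1⟩
  have hun := hsur (X ∪ Y) (Finset.union_subset hXP hYP) ⟨s, Finset.mem_union_left _ hs⟩
  rw [nbr_union] at hun
  have e1 := Finset.card_union_add_card_inter (nbr l ρ W X) (nbr l ρ W Y)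
  have e2 := Finset.card_union_add_card_inter X Y
  have c2 := Finset.card_le_card hsub2
  have hne : (X ∩ Y).Nonempty := by
    rw [← Finset.card_pos]
    omega
  have c3 := hsur (X ∩ Y) (Finset.inter_subset_left.trans hXP) hne
  have heq : nbr l ρ W (X ∩ Y) = nbr l ρ W X ∩ nbr l ρ W Y :=
    Finset.eq_of_subset_of_card_le hsub (by omega)
  have hbad : X ∩ Y ∈ bad := by
    refine Finset.mem_filter.2 ⟨Finset.mem_powerset.2 (Finset.inter_subset_left.trans hXP), s,
      hXP hs, fun h => hsY (Finset.mem_inter.1 h).2, ?_, ?_⟩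
    · rw [← heq] at e1
      omega
    · refine lt_of_lt_of_le hY2 (Finset.card_le_card ?_)
      intro c hc
      rw [heq]
      exact Finset.mem_inter.2 ⟨hsub2 hc, (Finset.mem_inter.1 hc).2⟩
  have := hmin _ hbad
  have hlt : (X ∩ Y).card < X.card := Finset.card_lt_card
    ⟨Finset.inter_subset_left, fun h => hsY (Finset.mem_inter.1 (h hs)).2⟩
  omega

/-- If `P` has surplus, some edge can be exploded in an order such that at most one matching edge
is lost in every outcome. -/
lemma exists_explosion_of_surplus {l : V → B} {ρ : V → C} {W : Finset V} {P : Finset B}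
    (hP : P.Nonempty) (hsur : ∀ A ⊆ P, A.Nonempty → A.card + 1 ≤ (nbr l ρ W A).card)
    {M₁ : Finset V} (hM₁W : M₁ ⊆ W) (hM₁ : IsBipMatching l ρ M₁)
    (hM₁P : ∀ g ∈ M₁, l g ∉ P ∧ ρ g ∉ nbr l ρ W P) :
    ∃ e ∈ W, ∃ p : V → ℕ, ∀ f ∈ W, Meets l ρ e f → ∃ M ⊆ W, IsBipMatching l ρ M ∧
      P.card + M₁.card ≤ M.card + 1 ∧
      ∀ g ∈ M, g ≠ f ∧ ¬ Meets l ρ f g ∧ (Meets l ρ e g → p g < p f) := by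
  obtain ⟨t, ht, htight⟩ := exists_unentangled hP hsur
  have hsub1 : ∀ {A : Finset B} {u : C}, A ⊆ P → A.card ≤ (nbr l ρ W A \ {u}).card := by
    intro A u hA
    rcases A.eq_empty_or_nonempty with rfl | hne
    · simp
    · have h1 := hsur A hA hne
      have h2 := Finset.le_card_sdiff {u} (nbr l ρ W A)
      rw [Finset.card_singleton] at h2
      omega
  obtain ⟨c, hc⟩ : (nbr l ρ W {t}).Nonempty := by
    have := hsur {t} (Finset.singleton_subset_iff.2 ht) (Finset.singleton_nonempty t)
    rw [← Finset.card_pos]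
    omega
  obtain ⟨e, heW, het, -⟩ := mem_nbr.1 hc
  rw [Finset.mem_singleton] at het
  have hunion : ∀ {M N : Finset V} {Q : Finset B}, Q ⊆ P → M ⊆ W → (∀ g ∈ M, l g ∈ Q) →
      IsBipMatching l ρ M → N ⊆ M₁ →
      IsBipMatching l ρ (M ∪ N) ∧ (M ∪ N).card = M.card + N.card := by
    intro M N Q hQ hMW hMQ hM hN
    have hd : ∀ g ∈ M, ∀ g' ∈ N, l g ≠ l g' ∧ ρ g ≠ ρ g' := by
      intro g hg g' hg'
      have h1 := hM₁P g' (hN hg')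
      refine ⟨fun h => h1.1 (h ▸ hQ (hMQ g hg)), fun h => h1.2 ?_⟩
      rw [← h]
      exact mem_nbr_of_mem (hMW hg) (hQ (hMQ g hg))
    exact ⟨hM.union (hM₁.mono hN) hd, card_union_of_ends_ne fun g hg g' hg' => (hd g hg g' hg').1⟩
  have heP : ρ e ∈ nbr l ρ W P := mem_nbr_of_mem heW (het ▸ ht)
  refine ⟨e, heW, fun g => if l g = t then 0 else 1, fun f hfW hef => ?_⟩
  by_cases hft : l f = t
  · obtain ⟨M, hMW, hM, hcard, hMP⟩ := exists_bipMatching_of_hall (l := l) (ρ := ρ) (W := W)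
      (P := P.erase t) (U := {ρ e, ρ f}) (by
        intro A hA
        have hAP := hA.trans (Finset.erase_subset _ _)
        rcases A.eq_empty_or_nonempty with rfl | hne
        · simp
        have h1 := hsur A hAP hne
        have h2 : (nbr l ρ W A \ {ρ e, ρ f}).card + (nbr l ρ W A ∩ {ρ e, ρ f}).card
            = (nbr l ρ W A).card := Finset.card_sdiff_add_card_inter _ _
        by_cases h3 : (nbr l ρ W A).card = A.card + 1
        · have h4 := htight A hA h3
          have h5 : nbr l ρ W A ∩ {ρ e, ρ f} ⊆ nbr l ρ W A ∩ nbr l ρ W {t} := by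
            refine Finset.inter_subset_inter_left ?_
            intro c hc
            simp only [Finset.mem_insert, Finset.mem_singleton] at hc
            rcases hc with rfl | rfl
            · exact mem_nbr_of_mem heW (by simp [het])
            · exact mem_nbr_of_mem hfW (by simp [hft])
          have := Finset.card_le_card h5
          omega
        · have h5 := Finset.card_le_card
            (Finset.inter_subset_right : nbr l ρ W A ∩ {ρ e, ρ f} ⊆ {ρ e, ρ f})
          have h6 : ({ρ e, ρ f} : Finset C).card ≤ 2 := Finset.card_le_two
          omega)
    obtain ⟨h1, h2⟩ := hunion (Finset.erase_subset t P) hMW (fun g hg => (hMP g hg).1) hM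
      (Finset.Subset.refl M₁)
    refine ⟨M ∪ M₁, Finset.union_subset hMW hM₁W, h1, ?_, ?_⟩
    · rw [h2, hcard, Finset.card_erase_of_mem ht]
      omega
    · intro g hg
      have hg' : l g ≠ t ∧ ρ g ≠ ρ e ∧ ρ g ≠ ρ f := by
        rcases Finset.mem_union.1 hg with hg | hg
        · have := hMP g hg
          simp only [Finset.mem_erase, Finset.mem_insert, Finset.mem_singleton, not_or] at this
          exact ⟨this.1.1, this.2⟩
        · have := hM₁P g hg
          refine ⟨fun h => this.1 (h ▸ ht), fun h => this.2 (h ▸ heP), fun h => this.2 ?_⟩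
          rw [h]
          exact mem_nbr_of_mem hfW (hft ▸ ht)
      refine ⟨fun h => hg'.1 (h ▸ hft), ?_, ?_⟩
      · rintro ⟨-, h | h⟩
        · exact hg'.1 (h ▸ hft)
        · exact hg'.2.2 h.symm
      · rintro ⟨-, h | h⟩
        · exact absurd (h ▸ het) hg'.1
        · exact absurd h.symm hg'.2.1
  · have hfu : ρ f = ρ e := by
      rcases hef.2 with h | h
      · exact absurd (h ▸ het) hft
      · exact h.symm
    obtain ⟨M, hMW, hM, hcard, hMP⟩ := exists_bipMatching_of_hall (l := l) (ρ := ρ) (W := W)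
      (P := P.erase (l f)) (U := {ρ e}) (fun A hA => hsub1 (hA.trans (Finset.erase_subset _ _)))
    obtain ⟨h1, h2⟩ := hunion (Finset.erase_subset (l f) P) hMW (fun g hg => (hMP g hg).1) hM
      (Finset.filter_subset (fun g => l g ≠ l f) M₁)
    refine ⟨M ∪ M₁.filter (fun g => l g ≠ l f),
      Finset.union_subset hMW ((Finset.filter_subset _ _).trans hM₁W), h1, ?_, ?_⟩
    · rw [h2, hcard]
      have h3 : (M₁.filter fun g => l g = l f).card ≤ 1 := by
        rw [Finset.card_le_one]
        intro g hg g' hg'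
        rw [Finset.mem_filter] at hg hg'
        exact hM₁.1 hg.1 hg'.1 (hg.2.trans hg'.2.symm)
      have h4 := Finset.card_filter_add_card_filter_not (s := M₁) (fun g => l g = l f)
      by_cases hfP : l f ∈ P
      · have h5 : M₁.filter (fun g => l g = l f) = ∅ := by
          rw [Finset.filter_eq_empty_iff]
          intro g hg h
          exact (hM₁P g hg).1 (h ▸ hfP)
        rw [h5, Finset.card_empty] at h4
        rw [Finset.card_erase_of_mem hfP]
        simp only [ne_eq]
        omega
      · rw [Finset.erase_eq_of_notMem hfP]
        simp only [ne_eq]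
        omega
    · intro g hg
      have hg' : l g ≠ l f ∧ ρ g ≠ ρ e := by
        rcases Finset.mem_union.1 hg with hg | hg
        · have := hMP g hg
          simp only [Finset.mem_erase, Finset.mem_singleton] at this
          exact ⟨this.1.1, this.2⟩
        · rw [Finset.mem_filter] at hg
          exact ⟨hg.2, fun h => (hM₁P g hg.1).2 (h ▸ heP)⟩
      refine ⟨fun h => hg'.1 (h ▸ rfl), ?_, ?_⟩
      · rintro ⟨-, h | h⟩
        · exact hg'.1 h.symm
        · exact hg'.2 (h ▸ hfu)
      · rintro ⟨-, h | h⟩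
        · simp [← h, het, hft]
        · exact absurd h.symm hg'.2

end Surplus

section Potential

variable {V B C : Type*} [DecidableEq V] [DecidableEq B] [DecidableEq C]

/-- `R` is a possible remainder of `W` after exploding the edge `ef` of the line graph, when the
neighbours of `e` are treated in the order given by `p`. -/
structure IsOutcome (l : V → B) (ρ : V → C) (W : Finset V) (e : V) (p : V → ℕ) (f : V)
    (R : Finset V) : Prop where
  mem : f ∈ W
  meets : Meets l ρ e f
  subset : R ⊆ W
  away : ∀ g ∈ R, g ≠ f ∧ ¬ Meets l ρ f g
  keep : ∀ g ∈ W, g ≠ f → ¬ Meets l ρ f g → (Meets l ρ e g → p g < p f) → g ∈ R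

lemma not_meets_of_ends_ne {l : V → B} {ρ : V → C} {f g : V} (h1 : l g ≠ l f) (h2 : ρ g ≠ ρ f) :
    g ≠ f ∧ ¬ Meets l ρ f g :=
  ⟨fun h => h1 (h ▸ rfl), fun h => h.2.elim (fun h => h1 h.symm) (fun h => h2 h.symm)⟩

/-- `Q` is a component of `W` that is a 4-cycle with multiplicities adding up to `2r`. -/
def IsFourCycle (l : V → B) (ρ : V → C) (r : ℕ) (W Q : Finset V) : Prop :=
  ∃ x₁ x₂ : B, ∃ y₁ y₂ : C, x₁ ≠ x₂ ∧ y₁ ≠ y₂ ∧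
    Q = W.filter (fun g => l g = x₁ ∨ l g = x₂) ∧ Q = W.filter (fun g => ρ g = y₁ ∨ ρ g = y₂) ∧
    Q.card = 2 * r ∧ ∀ x y, (x = x₁ ∨ x = x₂) → (y = y₁ ∨ y = y₂) → ∃ g ∈ Q, l g = x ∧ ρ g = y

open Classical in
/-- The 4-cycle components of `W`. -/
noncomputable def fourCycles (l : V → B) (ρ : V → C) (r : ℕ) (W : Finset V) :
    Finset (Finset V) := W.powerset.filter (IsFourCycle l ρ r W)

/-- Every vertex meets at most `r` edges of `W`. -/
def DegLE (l : V → B) (ρ : V → C) (r : ℕ) (W : Finset V) : Prop :=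
  (∀ b, (W.filter fun g => l g = b).card ≤ r) ∧ ∀ c, (W.filter fun g => ρ g = c).card ≤ r

lemma DegLE.mono {l : V → B} {ρ : V → C} {r : ℕ} {W R : Finset V} (h : DegLE l ρ r W)
    (hR : R ⊆ W) : DegLE l ρ r R :=
  ⟨fun b => (Finset.card_le_card (Finset.filter_subset_filter _ hR)).trans (h.1 b),
    fun c => (Finset.card_le_card (Finset.filter_subset_filter _ hR)).trans (h.2 c)⟩

lemma card_filter_or_le {α : Type*} [DecidableEq α] (l : V → α) {r : ℕ} {W : Finset V}
    (h : ∀ b, (W.filter fun g => l g = b).card ≤ r) (x₁ x₂ : α) :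
    (W.filter fun g => l g = x₁ ∨ l g = x₂).card ≤ 2 * r := by
  rw [Finset.filter_or]
  have := Finset.card_union_le (W.filter fun g => l g = x₁) (W.filter fun g => l g = x₂)
  have h1 := h x₁
  have h2 := h x₂
  omega

lemma IsFourCycle.mono {l : V → B} {ρ : V → C} {r : ℕ} {W R Q : Finset V} (hd : DegLE l ρ r W)
    (hR : R ⊆ W) (h : IsFourCycle l ρ r R Q) : IsFourCycle l ρ r W Q := by
  obtain ⟨x₁, x₂, y₁, y₂, hx, hy, h1, h2, hcard, hall⟩ := h
  refine ⟨x₁, x₂, y₁, y₂, hx, hy, ?_, ?_, hcard, hall⟩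
  · refine Finset.eq_of_subset_of_card_le ?_ (hcard ▸ card_filter_or_le l hd.1 x₁ x₂)
    exact h1 ▸ Finset.filter_subset_filter _ hR
  · refine Finset.eq_of_subset_of_card_le ?_ (hcard ▸ card_filter_or_le ρ hd.2 y₁ y₂)
    exact h2 ▸ Finset.filter_subset_filter _ hR

lemma mem_fourCycles {l : V → B} {ρ : V → C} {r : ℕ} {W Q : Finset V} :
    Q ∈ fourCycles l ρ r W ↔ IsFourCycle l ρ r W Q := by
  classical
  rw [fourCycles, Finset.mem_filter, Finset.mem_powerset, and_iff_right_iff_imp]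
  rintro ⟨x₁, x₂, y₁, y₂, -, -, h1, -⟩
  exact h1 ▸ Finset.filter_subset _ _

lemma fourCycles_mono {l : V → B} {ρ : V → C} {r : ℕ} {W R : Finset V} (hd : DegLE l ρ r W)
    (hR : R ⊆ W) : fourCycles l ρ r R ⊆ fourCycles l ρ r W := fun _ hQ =>
  mem_fourCycles.2 ((mem_fourCycles.1 hQ).mono hd hR)

/-- The potential that bounds the acyclicity of the matching complex of `W` from below. -/
noncomputable def potential (l : V → B) (ρ : V → C) (r : ℕ) (W : Finset V) : ℤ :=
  4 * r ^ 2 * bipNu l ρ W + (2 * r + 1) * W.card - 2 * r * (fourCycles l ρ r W).card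

lemma potential_le {l : V → B} {ρ : V → C} {r : ℕ} {W R : Finset V} {i j k : ℕ}
    (h1 : bipNu l ρ W ≤ bipNu l ρ R + i) (h2 : W.card ≤ R.card + j)
    (h3 : (fourCycles l ρ r R).card + k ≤ (fourCycles l ρ r W).card) :
    potential l ρ r W ≤ potential l ρ r R + (4 * r ^ 2 * i + (2 * r + 1) * j - 2 * r * k) := by
  unfold potential
  have h1' : (bipNu l ρ W : ℤ) ≤ bipNu l ρ R + i := by exact_mod_cast h1
  have h2' : (W.card : ℤ) ≤ R.card + j := by exact_mod_cast h2
  have h3' : ((fourCycles l ρ r R).card : ℤ) + k ≤ (fourCycles l ρ r W).card := by exact_mod_cast h3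
  have hr : (0 : ℤ) ≤ r := by positivity
  have e1 := mul_le_mul_of_nonneg_left h1' (by positivity : (0 : ℤ) ≤ 4 * r ^ 2)
  have e2 := mul_le_mul_of_nonneg_left h2' (by positivity : (0 : ℤ) ≤ 2 * r + 1)
  have e3 := mul_le_mul_of_nonneg_left h3' (by positivity : (0 : ℤ) ≤ 2 * r)
  linarith

lemma card_le_card_add_of_sdiff {W R T : Finset V} (h : ∀ g ∈ W, g ∉ R → g ∈ T) :
    W.card ≤ R.card + T.card := by
  refine (Finset.card_le_card (t := R ∪ T) ?_).trans (Finset.card_union_le _ _)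
  intro g hg
  by_cases hR : g ∈ R
  · exact Finset.mem_union_left _ hR
  · exact Finset.mem_union_right _ (h g hg hR)

/-- If an outcome removes only edges at one edge, the potential drops by at most `12r²`. -/
lemma potential_le_of_cover {l : V → B} {ρ : V → C} {r : ℕ} {W R : Finset V} {f : V}
    (hd : DegLE l ρ r W) (hf : f ∈ W) (hR : R ⊆ W)
    (h : ∀ g ∈ W, l g ≠ l f → ρ g ≠ ρ f → g ∈ R) :
    potential l ρ r W ≤ potential l ρ r R + 12 * r ^ 2 := by
  have hcard : W.card ≤ R.card + (2 * r - 1) := by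
    have h1 := card_le_card_add_of_sdiff (W := W) (R := R)
      (T := (W.filter fun g => l g = l f) ∪ (W.filter fun g => ρ g = ρ f).erase f) (by
        intro g hg hgR
        simp only [Finset.mem_union, Finset.mem_filter, Finset.mem_erase]
        by_contra hcon
        push Not at hcon
        have h1 := hcon.1 hg
        exact hgR (h g hg h1 (hcon.2 (fun hh => h1 (hh ▸ rfl)) hg)))
    have h2 := Finset.card_union_le (W.filter fun g => l g = l f)
      ((W.filter fun g => ρ g = ρ f).erase f)
    rw [Finset.card_erase_of_mem (by simp [hf])] at h2
    have h3 := hd.1 (l f)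
    have h4 := hd.2 (ρ f)
    have h5 : 0 < (W.filter fun g => ρ g = ρ f).card := Finset.card_pos.2 ⟨f, by simp [hf]⟩
    omega
  have hr : 1 ≤ r := le_trans (Finset.card_pos.2 ⟨f, by simp [hf]⟩) (hd.1 (l f))
  have hnu := bipNu_le_of_cover (l := l) (ρ := ρ) (W := W) (R := R) {l f} {ρ f} (by
    intro g hg hgR
    by_contra hcon
    simp only [Finset.mem_singleton, not_or] at hcon
    exact hgR (h g hg hcon.1 hcon.2))
  simp only [Finset.card_singleton] at hnu
  have := potential_le (r := r) (i := 2) (j := 2 * r - 1) (k := 0) (by omega) hcard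
    (Finset.card_le_card (fourCycles_mono hd hR))
  rw [Nat.cast_sub (by omega)] at this
  push_cast at this
  nlinarith

lemma card_filter_eq_card_erase_add_one {α : Type*} [DecidableEq α] {W : Finset V} (m : V → α)
    {t : V} (ht : t ∈ W) :
    (W.filter fun g => m g = m t).card = ((W.filter fun g => m g = m t).erase t).card + 1 := by
  rw [Finset.card_erase_add_one (by simp [ht])]

lemma IsOutcome.card_le {l : V → B} {ρ : V → C} {r : ℕ} {W R : Finset V} {e f : V} {p : V → ℕ}
    (he : e ∈ W) (hd : DegLE l ρ r W) (h : IsOutcome l ρ W e p f R) :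
    W.card + 2 ≤ R.card + 3 * r := by
  have hmem : ∀ g ∈ W, g ∉ R → l g = l f ∨ ρ g = ρ f ∨ l g = l e ∨ ρ g = ρ e := by
    intro g hg hgR
    by_contra hcon
    push Not at hcon
    obtain ⟨h1, h2⟩ := not_meets_of_ends_ne hcon.1 hcon.2.1
    exact hgR (h.keep g hg h1 h2 fun hh =>
      absurd hh (not_meets_of_ends_ne hcon.2.2.1 hcon.2.2.2).2)
  have d1 := hd.1 (l e)
  have d2 := hd.1 (l f)
  have d3 := hd.2 (ρ e)
  have d4 := hd.2 (ρ f)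
  rcases h.meets.2 with hl | hl
  · have h1 := card_le_card_add_of_sdiff (W := W) (R := R)
      (T := (W.filter fun g => l g = l e) ∪ ((W.filter fun g => ρ g = ρ e).erase e ∪
        (W.filter fun g => ρ g = ρ f).erase f)) (by
        intro g hg hgR
        simp only [Finset.mem_union, Finset.mem_filter, Finset.mem_erase]
        by_cases hle : l g = l e
        · exact Or.inl ⟨hg, hle⟩
        · have hge : g ≠ e := fun hh => hle (hh ▸ rfl)
          have hgf : g ≠ f := fun hh => hle (hh ▸ hl.symm)
          rcases hmem g hg hgR with hh | hh | hh | hh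
          · exact absurd (hh.trans hl.symm) hle
          · exact Or.inr (Or.inr ⟨hgf, hg, hh⟩)
          · exact absurd hh hle
          · exact Or.inr (Or.inl ⟨hge, hg, hh⟩))
    have h2 := Finset.card_union_le (W.filter fun g => l g = l e)
      ((W.filter fun g => ρ g = ρ e).erase e ∪ (W.filter fun g => ρ g = ρ f).erase f)
    have h3 := Finset.card_union_le ((W.filter fun g => ρ g = ρ e).erase e)
      ((W.filter fun g => ρ g = ρ f).erase f)
    rw [card_filter_eq_card_erase_add_one ρ he] at d3
    rw [card_filter_eq_card_erase_add_one ρ h.mem] at d4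
    omega
  · have h1 := card_le_card_add_of_sdiff (W := W) (R := R)
      (T := (W.filter fun g => ρ g = ρ e) ∪ ((W.filter fun g => l g = l e).erase e ∪
        (W.filter fun g => l g = l f).erase f)) (by
        intro g hg hgR
        simp only [Finset.mem_union, Finset.mem_filter, Finset.mem_erase]
        by_cases hle : ρ g = ρ e
        · exact Or.inl ⟨hg, hle⟩
        · have hge : g ≠ e := fun hh => hle (hh ▸ rfl)
          have hgf : g ≠ f := fun hh => hle (hh ▸ hl.symm)
          rcases hmem g hg hgR with hh | hh | hh | hh
          · exact Or.inr (Or.inr ⟨hgf, hg, hh⟩)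
          · exact absurd (hh.trans hl.symm) hle
          · exact Or.inr (Or.inl ⟨hge, hg, hh⟩)
          · exact absurd hh hle)
    have h2 := Finset.card_union_le (W.filter fun g => ρ g = ρ e)
      ((W.filter fun g => l g = l e).erase e ∪ (W.filter fun g => l g = l f).erase f)
    have h3 := Finset.card_union_le ((W.filter fun g => l g = l e).erase e)
      ((W.filter fun g => l g = l f).erase f)
    rw [card_filter_eq_card_erase_add_one l he] at d1
    rw [card_filter_eq_card_erase_add_one l h.mem] at d2
    omega

lemma IsOutcome.card_le_bipNu {l : V → B} {ρ : V → C} {W R M : Finset V} {e f : V} {p : V → ℕ}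
    (h : IsOutcome l ρ W e p f R) (hMW : M ⊆ W) (hM : IsBipMatching l ρ M)
    (hkeep : ∀ g ∈ M, g ≠ f ∧ ¬ Meets l ρ f g ∧ (Meets l ρ e g → p g < p f)) :
    M.card ≤ bipNu l ρ R :=
  Tripartite.card_le_bipNu (fun g hg => h.keep g (hMW hg) (hkeep g hg).1 (hkeep g hg).2.1
    (hkeep g hg).2.2) hM

/-- If an outcome loses at most one matching edge, the potential drops by at most `12r²`. -/
lemma IsOutcome.potential_le_of_gain {l : V → B} {ρ : V → C} {r : ℕ} {W R M : Finset V} {e f : V}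
    {p : V → ℕ} (he : e ∈ W) (hd : DegLE l ρ r W) (h : IsOutcome l ρ W e p f R) (hMW : M ⊆ W)
    (hM : IsBipMatching l ρ M) (hcard : bipNu l ρ W ≤ M.card + 1)
    (hkeep : ∀ g ∈ M, g ≠ f ∧ ¬ Meets l ρ f g ∧ (Meets l ρ e g → p g < p f)) :
    potential l ρ r W ≤ potential l ρ r R + 12 * r ^ 2 := by
  have h1 := h.card_le_bipNu hMW hM hkeep
  have h2 := h.card_le he hd
  have hr : 1 ≤ r := le_trans (Finset.card_pos.2 ⟨e, by simp [he]⟩) (hd.1 (l e))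
  have := potential_le (r := r) (i := 1) (j := 3 * r - 2) (k := 0) (by omega : bipNu l ρ W ≤
    bipNu l ρ R + 1) (by omega) (Finset.card_le_card (fourCycles_mono hd h.subset))
  rw [Nat.cast_sub (by omega)] at this
  push_cast at this
  nlinarith

end Potential

section Block

variable {V B C : Type*} [DecidableEq V] [DecidableEq B] [DecidableEq C]

/-- `X` is a minimal set without surplus. -/
structure IsBlock (l : V → B) (ρ : V → C) (W : Finset V) (X : Finset B) : Prop where
  nonempty : X.Nonempty
  card_nbr : (nbr l ρ W X).card = X.card
  surplus : ∀ A ⊆ X, A ≠ X → A.Nonempty → A.card + 1 ≤ (nbr l ρ W A).card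

lemma exists_isBlock {l : V → B} {ρ : V → C} {W : Finset V} {A : Finset B} (hA : A ⊆ W.image l)
    (hne : A.Nonempty) (hcard : (nbr l ρ W A).card ≤ A.card) : ∃ X, IsBlock l ρ W X := by
  classical
  obtain ⟨X, hX, hmin⟩ := Finset.exists_min_image
    ((W.image l).powerset.filter fun A => A.Nonempty ∧ (nbr l ρ W A).card ≤ A.card) Finset.card
    ⟨A, by simp only [Finset.mem_filter, Finset.mem_powerset]; exact ⟨hA, hne, hcard⟩⟩
  simp only [Finset.mem_filter, Finset.mem_powerset] at hX hmin
  obtain ⟨hXW, hXne, hXcard⟩ := hX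
  have hsur : ∀ A ⊆ X, A ≠ X → A.Nonempty → A.card + 1 ≤ (nbr l ρ W A).card := by
    intro A hAX hAne hAn
    by_contra hcon
    have h1 := hmin A ⟨hAX.trans hXW, hAn, by omega⟩
    have h2 := Finset.card_lt_card (Finset.ssubset_iff_subset_ne.2 ⟨hAX, hAne⟩)
    omega
  refine ⟨X, hXne, le_antisymm hXcard ?_, hsur⟩
  obtain ⟨x, hx⟩ := hXne
  rcases (X.erase x).eq_empty_or_nonempty with h | h
  · have h1 : X.card = 1 := by
      have := Finset.card_erase_add_one hx
      rw [h, Finset.card_empty] at this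
      omega
    rw [h1, Nat.one_le_iff_ne_zero, ← Nat.pos_iff_ne_zero, Finset.card_pos]
    obtain ⟨g, hg, hgx⟩ := Finset.mem_image.1 (hXW hx)
    exact ⟨ρ g, mem_nbr_of_mem hg (hgx ▸ hx)⟩
  · have h1 := hsur (X.erase x) (Finset.erase_subset _ _)
      (fun h => Finset.notMem_erase x X (by rw [h]; exact hx)) h
    have h2 := Finset.card_le_card (nbr_mono (l := l) (ρ := ρ) (W := W) (Finset.erase_subset x X))
    have := Finset.card_erase_add_one hx
    omega

lemma IsBlock.exists_outer {l : V → B} {ρ : V → C} {W : Finset V} {X : Finset B}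
    (h : IsBlock l ρ W X) : ∃ M ⊆ W, IsBipMatching l ρ M ∧
      (∀ g ∈ M, l g ∉ X ∧ ρ g ∉ nbr l ρ W X) ∧ bipNu l ρ W ≤ M.card + X.card := by
  obtain ⟨M, hMW, hM, hcard⟩ := exists_card_eq_bipNu l ρ W
  refine ⟨M.filter fun g => ρ g ∉ nbr l ρ W X, (Finset.filter_subset _ _).trans hMW,
    hM.mono (Finset.filter_subset _ _), ?_, ?_⟩
  · intro g hg
    rw [Finset.mem_filter] at hg
    exact ⟨fun hX => hg.2 (mem_nbr_of_mem (hMW hg.1) hX), hg.2⟩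
  · have h1 : (M.filter fun g => ρ g ∈ nbr l ρ W X).card ≤ (nbr l ρ W X).card :=
      Finset.card_le_card_of_injOn ρ (fun g hg => (Finset.mem_filter.1 hg).2)
        (hM.2.mono (by exact_mod_cast Finset.filter_subset _ _))
    have h2 := Finset.card_filter_add_card_filter_not (s := M) (fun g => ρ g ∈ nbr l ρ W X)
    rw [h.card_nbr] at h1
    omega

/-- The order in which the neighbours of an edge at `y` inside a block are treated. -/
def blockOrder (l : V → B) (ρ : V → C) (X : Finset B) (y : C) (g : V) : ℕ :=
  if ρ g = y then (if l g ∈ X then 0 else 2) else 1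

lemma IsBlock.outcome {l : V → B} {ρ : V → C} {r : ℕ} {W R : Finset V} {X : Finset B} {e f : V}
    (h : IsBlock l ρ W X) (hd : DegLE l ρ r W) (he : e ∈ W) (heX : l e ∈ X)
    (hout : IsOutcome l ρ W e (blockOrder l ρ X (ρ e)) f R) :
    potential l ρ r W ≤ potential l ρ r R + 12 * r ^ 2 ∨
      (l f ∈ X ∧ l f ≠ l e ∧ ρ f = ρ e ∧
        ∀ g ∈ W, l g ≠ l e → l g ≠ l f → ρ g ≠ ρ e → g ∈ R) := by
  by_cases hle : l f = l e
  · left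
    by_cases hρe : ρ f = ρ e
    · refine potential_le_of_cover hd hout.mem hout.subset fun g hg h1 h2 => ?_
      obtain ⟨h3, h4⟩ := not_meets_of_ends_ne h1 h2
      refine hout.keep g hg h3 h4 fun hh => ?_
      rcases hh.2 with h5 | h5
      · exact absurd (h5.symm.trans hle.symm) h1
      · exact absurd (h5.symm.trans hρe.symm) h2
    · obtain ⟨M₀, hM₀W, hM₀, hM₀X, hcard₀⟩ := h.exists_outer
      obtain ⟨M, hMW, hM, hcard, hMX⟩ := exists_bipMatching_of_hall (l := l) (ρ := ρ) (W := W)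
        (P := X.erase (l e)) (U := {ρ f}) (by
          intro A hA
          rcases A.eq_empty_or_nonempty with rfl | hne
          · simp
          have h1 := h.surplus A (hA.trans (Finset.erase_subset _ _))
            (by rintro rfl; simpa using hA heX) hne
          have h2 := Finset.le_card_sdiff {ρ f} (nbr l ρ W A)
          rw [Finset.card_singleton] at h2
          omega)
      have hmemX : ∀ g ∈ M, l g ≠ l e ∧ l g ∈ X ∧ ρ g ≠ ρ f := fun g hg => by
        simpa [and_assoc] using hMX g hg
      have hd' : ∀ g ∈ M, ∀ g' ∈ M₀, l g ≠ l g' ∧ ρ g ≠ ρ g' := by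
        intro g hg g' hg'
        refine ⟨fun hh => (hM₀X g' hg').1 (hh ▸ (hmemX g hg).2.1), fun hh => (hM₀X g' hg').2 ?_⟩
        rw [← hh]
        exact mem_nbr_of_mem (hMW hg) (hmemX g hg).2.1
      refine hout.potential_le_of_gain he hd (Finset.union_subset hMW hM₀W) (hM.union hM₀ hd') ?_ ?_
      · rw [card_union_of_ends_ne fun g hg g' hg' => (hd' g hg g' hg').1, hcard,
          Finset.card_erase_of_mem heX]
        have := Finset.card_pos.2 h.nonempty
        omega
      · intro g hg
        have hg' : l g ≠ l f ∧ ρ g ≠ ρ f ∧ (ρ g = ρ e → l g ∈ X) := by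
          rcases Finset.mem_union.1 hg with hg | hg
          · exact ⟨hle ▸ (hmemX g hg).1, (hmemX g hg).2.2, fun _ => (hmemX g hg).2.1⟩
          · have h1 := hM₀X g hg
            refine ⟨fun hh => h1.1 (hh ▸ hle ▸ heX), fun hh => h1.2 ?_, fun hh => absurd ?_ h1.2⟩
            · rw [hh]
              exact mem_nbr_of_mem hout.mem (hle ▸ heX)
            · rw [hh]
              exact mem_nbr_of_mem he heX
        obtain ⟨h1, h2⟩ := not_meets_of_ends_ne hg'.1 hg'.2.1
        refine ⟨h1, h2, fun hh => ?_⟩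
        rcases hh.2 with h5 | h5
        · exact absurd (h5.symm.trans hle.symm) hg'.1
        · simp [blockOrder, h5.symm, hg'.2.2 h5.symm, hρe]
  · have hρe : ρ f = ρ e := by
      rcases hout.meets.2 with h1 | h1
      · exact absurd h1.symm hle
      · exact h1.symm
    by_cases hfX : l f ∈ X
    · refine Or.inr ⟨hfX, hle, hρe, fun g hg h1 h2 h3 => ?_⟩
      obtain ⟨h4, h5⟩ := not_meets_of_ends_ne h2 (hρe ▸ h3)
      exact hout.keep g hg h4 h5 fun hh => absurd hh (not_meets_of_ends_ne h1 h3).2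
    · left
      refine potential_le_of_cover hd hout.mem hout.subset fun g hg h1 h2 => ?_
      obtain ⟨h3, h4⟩ := not_meets_of_ends_ne h1 h2
      refine hout.keep g hg h3 h4 fun hh => ?_
      have h5 : ρ g ≠ ρ e := hρe ▸ h2
      simp [blockOrder, hρe, hfX, h5]

/-- A block with two vertices. -/
lemma IsBlock.exists_explosion_two {l : V → B} {ρ : V → C} {r : ℕ} {W : Finset V} {X : Finset B}
    (h : IsBlock l ρ W X) (hd : DegLE l ρ r W) (hX : X.card = 2) :
    ∃ e ∈ W, ∃ p, ∀ f R, IsOutcome l ρ W e p f R →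
      potential l ρ r W ≤ potential l ρ r R + 12 * r ^ 2 := by
  set Y := nbr l ρ W X with hY
  have hYcard : Y.card = 2 := h.card_nbr.trans hX
  let out : C → Finset V := fun c => W.filter fun g => ρ g = c ∧ l g ∉ X
  obtain ⟨y, hy, hmin⟩ := Finset.exists_min_image Y (fun c => (out c).card)
    (Finset.card_pos.1 (by omega))
  obtain ⟨e, heW, heX, rfl⟩ := mem_nbr.1 hy
  refine ⟨e, heW, _, fun f R hout => (h.outcome hd heW heX hout).elim id ?_⟩
  rintro ⟨hfX, hfe, hρf, hkeep⟩
  obtain ⟨y, hyY⟩ : ∃ y, Y.erase (ρ e) = {y} := Finset.card_eq_one.1 (by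
    rw [Finset.card_erase_of_mem hy]; omega)
  have hye : y ≠ ρ e := (Finset.mem_erase.1 (hyY ▸ Finset.mem_singleton_self y :
    y ∈ Y.erase (ρ e))).1
  have hYeq : ∀ c, c ∈ Y ↔ c = ρ e ∨ c = y := by
    intro c
    rw [← Finset.insert_erase hy, hyY, Finset.mem_insert, Finset.mem_singleton]
  have hyY' : y ∈ Y := (hYeq y).2 (Or.inr rfl)
  have hXeq : ∀ x, x ∈ X ↔ x = l e ∨ x = l f := by
    have : {l e, l f} = X := Finset.eq_of_subset_of_card_le
      (Finset.insert_subset heX (Finset.singleton_subset_iff.2 hfX))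
      (by rw [hX, Finset.card_pair hfe.symm])
    intro x
    rw [← this, Finset.mem_insert, Finset.mem_singleton]
  have hin : ∀ g ∈ W, l g ∈ X → ρ g ∈ Y := fun g hg hgX => mem_nbr_of_mem hg hgX
  have hnu : bipNu l ρ W ≤ bipNu l ρ R + 2 := by
    have := bipNu_le_of_cover (l := l) (ρ := ρ) (W := W) (R := R) ∅ Y (by
      intro g hg hgR
      right
      by_contra hcon
      have h1 : l g ∉ X := fun hh => hcon (hin g hg hh)
      rw [hXeq] at h1
      push Not at h1
      exact hgR (hkeep g hg h1.1 h1.2 fun hh => hcon (hh ▸ hy)))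
    rw [Finset.card_empty, hYcard] at this
    omega
  have hr : 1 ≤ r := le_trans (Finset.card_pos.2 ⟨e, by simp [heW]⟩) (hd.1 (l e))
  set Q := W.filter fun g => l g = l e ∨ l g = l f with hQ
  have hmemQ : ∀ g, g ∈ Q ↔ g ∈ W ∧ l g ∈ X := by
    intro g
    rw [hQ, Finset.mem_filter, hXeq]
  have hremoved : W.card ≤ R.card + (Q ∪ out (ρ e)).card := by
    refine card_le_card_add_of_sdiff fun g hg hgR => ?_
    simp only [Finset.mem_union, hmemQ, out, Finset.mem_filter]
    by_cases hgX : l g ∈ X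
    · exact Or.inl ⟨hg, hgX⟩
    · refine Or.inr ⟨hg, ?_, hgX⟩
      rw [hXeq] at hgX
      push Not at hgX
      by_contra hcon
      exact hgR (hkeep g hg hgX.1 hgX.2 hcon)
  have hdisj : Disjoint (Q ∪ out (ρ e)) (out y) := by
    rw [Finset.disjoint_left]
    intro g hg hg'
    simp only [Finset.mem_union, hmemQ, out, Finset.mem_filter] at hg hg'
    rcases hg with hg | hg
    · exact hg'.2.2 hg.2
    · exact hye (hg'.2.1.symm.trans hg.2.1)
  have htotal : (Q ∪ out (ρ e)).card + (out y).card ≤ 2 * r := by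
    rw [← Finset.card_union_of_disjoint hdisj]
    refine (Finset.card_le_card ?_).trans (card_filter_or_le ρ hd.2 (ρ e) y)
    intro g hg
    simp only [Finset.mem_union, hmemQ, out, Finset.mem_filter] at hg ⊢
    rcases hg with (hg | hg) | hg
    · exact ⟨hg.1, (hYeq _).1 (hin g hg.1 hg.2)⟩
    · exact ⟨hg.1, Or.inl hg.2.1⟩
    · exact ⟨hg.1, Or.inr hg.2.1⟩
  by_cases hlt : (Q ∪ out (ρ e)).card < 2 * r
  · have := potential_le (r := r) (i := 2) (j := 2 * r - 1) (k := 0) hnu (by omega)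
      (Finset.card_le_card (fourCycles_mono hd hout.subset))
    rw [Nat.cast_sub (by omega)] at this
    push_cast at this
    nlinarith
  · have hy0 : (out y).card = 0 := by omega
    have he0 : (out (ρ e)).card = 0 := by
      have := hmin y hyY'
      omega
    rw [Finset.card_eq_zero] at hy0 he0
    rw [he0, Finset.union_empty] at hlt htotal hremoved
    have hfour : IsFourCycle l ρ r W Q := by
      refine ⟨l e, l f, ρ e, y, hfe.symm, hye.symm, rfl, ?_, by omega, ?_⟩
      · ext g
        rw [hmemQ, Finset.mem_filter, and_congr_right_iff]
        intro hg
        refine ⟨fun hgX => (hYeq _).1 (hin g hg hgX), fun hgY => ?_⟩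
        by_contra hgX
        rcases hgY with hh | hh
        · have : g ∈ out (ρ e) := Finset.mem_filter.2 ⟨hg, hh, hgX⟩
          simp [he0] at this
        · have : g ∈ out y := Finset.mem_filter.2 ⟨hg, hh, hgX⟩
          simp [hy0] at this
      · intro x c hx hc
        have hxX : x ∈ X := (hXeq x).2 hx
        have h1 := h.surplus {x} (Finset.singleton_subset_iff.2 hxX) (by
          intro hh
          rw [← hh] at hX
          simp at hX) (Finset.singleton_nonempty x)
        have h2 : nbr l ρ W {x} = Y := Finset.eq_of_subset_of_card_le
          (nbr_mono (Finset.singleton_subset_iff.2 hxX)) (by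
            rw [Finset.card_singleton] at h1; omega)
        obtain ⟨g, hg, hgx, hgc⟩ := mem_nbr.1 (h2 ▸ (hYeq c).2 hc)
        rw [Finset.mem_singleton] at hgx
        exact ⟨g, (hmemQ g).2 ⟨hg, hgx ▸ hxX⟩, hgx, hgc⟩
    have hN : (fourCycles l ρ r R).card + 1 ≤ (fourCycles l ρ r W).card := by
      refine Finset.card_lt_card (Finset.ssubset_iff_subset_ne.2
        ⟨fourCycles_mono hd hout.subset, fun heq => ?_⟩)
      have h1 : Q ∈ fourCycles l ρ r R := heq ▸ mem_fourCycles.2 hfour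
      obtain ⟨_, _, _, _, -, -, h2, -⟩ := mem_fourCycles.1 h1
      have hfQ : f ∈ Q := (hmemQ f).2 ⟨hout.mem, hfX⟩
      rw [h2] at hfQ
      exact (hout.away f (Finset.mem_filter.1 hfQ).1).1 rfl
    have := potential_le (r := r) (i := 2) (j := 2 * r) (k := 1) hnu (by omega) hN
    push_cast at this
    nlinarith

end Block

section LargeBlock

variable {V B C : Type*} [DecidableEq V] [DecidableEq B] [DecidableEq C]

/-- Seen from the other side, a block has the same surplus property. -/
lemma IsBlock.surplus_right {l : V → B} {ρ : V → C} {W : Finset V} {X : Finset B}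
    (h : IsBlock l ρ W X) {A : Finset C} (hA : A ⊆ nbr l ρ W X) (hAne : A ≠ nbr l ρ W X)
    (hAn : A.Nonempty) :
    A.card + 1 ≤ (nbr ρ l (W.filter fun g => l g ∈ X) A).card := by
  set N := nbr ρ l (W.filter fun g => l g ∈ X) A with hN
  have hNX : N ⊆ X := by
    intro x hx
    obtain ⟨g, hg, -, rfl⟩ := mem_nbr.1 hx
    exact (Finset.mem_filter.1 hg).2
  have hlt := Finset.card_lt_card (Finset.ssubset_iff_subset_ne.2 ⟨hA, hAne⟩)
  rw [h.card_nbr] at hlt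
  have hsub : nbr l ρ W (X \ N) ⊆ nbr l ρ W X \ A := by
    intro c hc
    obtain ⟨g, hg, hgX, rfl⟩ := mem_nbr.1 hc
    rw [Finset.mem_sdiff] at hgX ⊢
    exact ⟨mem_nbr_of_mem hg hgX.1, fun hh => hgX.2
      (mem_nbr_of_mem (l := ρ) (ρ := l) (Finset.mem_filter.2 ⟨hg, hgX.1⟩) hh)⟩
  have hNn : N.Nonempty := by
    obtain ⟨c, hc⟩ := hAn
    obtain ⟨g, hg, hgX, rfl⟩ := mem_nbr.1 (hA hc)
    exact ⟨l g, mem_nbr_of_mem (l := ρ) (ρ := l) (Finset.mem_filter.2 ⟨hg, hgX⟩) hc⟩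
  have h1 := Finset.card_sdiff_add_card_eq_card hNX
  have h2 := Finset.card_sdiff_add_card_eq_card hA
  rw [h.card_nbr] at h2
  rcases (X \ N).eq_empty_or_nonempty with he | hne
  · rw [he, Finset.card_empty] at h1
    omega
  · have h3 := h.surplus (X \ N) Finset.sdiff_subset (fun heq => by
      obtain ⟨x, hx⟩ := hNn
      have := heq ▸ hNX hx
      exact (Finset.mem_sdiff.1 this).2 hx) hne
    have h4 := Finset.card_le_card hsub
    omega

/-- In a block with at least three vertices there is a vertex `y` such that, after removing `y` and
two of its neighbours, a set with surplus remains. -/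
lemma IsBlock.exists_remaining_surplus {l : V → B} {ρ : V → C} {W : Finset V} {X : Finset B}
    (h : IsBlock l ρ W X) (hX : 3 ≤ X.card) :
    ∃ e ∈ W, l e ∈ X ∧ ∀ f ∈ W, l f ∈ X → l f ≠ l e → ρ f = ρ e → ∀ R ⊆ W,
      (∀ g ∈ W, l g ≠ l e → l g ≠ l f → ρ g ≠ ρ e → g ∈ R) →
      ∃ P : Finset B, P.Nonempty ∧ (∀ A ⊆ P, A.Nonempty → A.card + 1 ≤ (nbr l ρ R A).card) ∧
        ∃ M ⊆ R, IsBipMatching l ρ M ∧ (∀ g ∈ M, l g ∉ P ∧ ρ g ∉ nbr l ρ R P) ∧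
          bipNu l ρ W ≤ P.card + M.card + 2 := by
  classical
  obtain ⟨M₀, hM₀W, hM₀, hM₀X, hcard₀⟩ := h.exists_outer
  set Y := nbr l ρ W X with hY
  set WX := W.filter fun g => l g ∈ X with hWX
  have hYcard : Y.card = X.card := h.card_nbr
  have hnbrX : ∀ A, nbr ρ l WX A ⊆ X := by
    intro A x hx
    obtain ⟨g, hg, -, rfl⟩ := mem_nbr.1 hx
    exact (Finset.mem_filter.1 hg).2
  have hin : ∀ g ∈ W, l g ∈ X → ρ g ∈ Y := fun g hg hgX => mem_nbr_of_mem hg hgX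
  have hYn : Y.Nonempty := Finset.card_pos.1 (by omega)
  obtain ⟨T, hT, hmin⟩ := Finset.exists_min_image
    (Y.powerset.filter fun T => T.Nonempty ∧ (nbr ρ l WX T).card ≤ T.card + 1) Finset.card
    ⟨Y, by
      simp only [Finset.mem_filter, Finset.mem_powerset]
      exact ⟨subset_rfl, hYn, by have := Finset.card_le_card (hnbrX Y); omega⟩⟩
  simp only [Finset.mem_filter, Finset.mem_powerset] at hT hmin
  obtain ⟨hTY, hTn, hTcard⟩ := hT
  have hpick : ∀ c ∈ Y, ∃ e ∈ W, l e ∈ X ∧ ρ e = c := fun c hc => by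
    simpa [Y] using mem_nbr.1 hc
  obtain ⟨c, hc⟩ := hTn
  obtain ⟨e, heW, heX, rfl⟩ := hpick c (hTY hc)
  refine ⟨e, heW, heX, fun f hfW hfX hfe hρf R hR hkeep => ?_⟩
  have hM₀R : M₀ ⊆ R := by
    intro g hg
    have := hM₀X g hg
    exact hkeep g (hM₀W hg) (fun hh => this.1 (hh ▸ heX)) (fun hh => this.1 (hh ▸ hfX))
      (fun hh => this.2 (hh ▸ hTY hc))
  by_cases hTX : T.card + 2 ≤ X.card
  · have hN : (nbr ρ l WX T).card = T.card + 1 := by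
      refine le_antisymm hTcard (h.surplus_right hTY ?_ ⟨_, hc⟩)
      intro hh
      rw [hh, h.card_nbr] at hTX
      omega
    set P := X \ nbr ρ l WX T with hP
    have heN : l e ∈ nbr ρ l WX T :=
      mem_nbr_of_mem (l := ρ) (ρ := l) (Finset.mem_filter.2 ⟨heW, heX⟩) hc
    have hfN : l f ∈ nbr ρ l WX T :=
      mem_nbr_of_mem (l := ρ) (ρ := l) (Finset.mem_filter.2 ⟨hfW, hfX⟩) (hρf ▸ hc)
    have hPcard : P.card + (nbr ρ l WX T).card = X.card :=
      Finset.card_sdiff_add_card_eq_card (hnbrX T)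
    have hPT : ∀ g ∈ W, l g ∈ P → ρ g ∉ T := by
      intro g hg hgP hgT
      rw [Finset.mem_sdiff] at hgP
      exact hgP.2 (mem_nbr_of_mem (l := ρ) (ρ := l) (Finset.mem_filter.2 ⟨hg, hgP.1⟩) hgT)
    have hPR : ∀ g ∈ W, l g ∈ P → g ∈ R := by
      intro g hg hgP
      have h1 := (Finset.mem_sdiff.1 hgP).2
      exact hkeep g hg (fun hh => h1 (hh ▸ heN)) (fun hh => h1 (hh ▸ hfN))
        (fun hh => hPT g hg hgP (hh ▸ hc))
    refine ⟨P, Finset.card_pos.1 (by omega), ?_, ?_⟩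
    · intro A hA hAn
      refine (h.surplus A (hA.trans Finset.sdiff_subset) ?_ hAn).trans (Finset.card_le_card ?_)
      · rintro rfl
        exact (Finset.mem_sdiff.1 (hA heX)).2 heN
      · intro c hc'
        obtain ⟨g, hg, hgA, rfl⟩ := mem_nbr.1 hc'
        exact mem_nbr_of_mem (hPR g hg (hA hgA)) hgA
    · obtain ⟨M, hMW, hM, hcard, hMT⟩ := exists_bipMatching_of_hall (l := ρ) (ρ := l) (W := WX)
        (P := T.erase (ρ e)) (U := {l e, l f}) (by
          intro A hA
          rcases A.eq_empty_or_nonempty with rfl | hne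
          · simp
          have h1 : A.card + 2 ≤ (nbr ρ l WX A).card := by
            by_contra hcon
            have h2 := hmin A ⟨(hA.trans (Finset.erase_subset _ _)).trans hTY, hne, by omega⟩
            have h3 := Finset.card_le_card hA
            have h4 := Finset.card_erase_lt_of_mem hc
            omega
          have h2 := Finset.le_card_sdiff {l e, l f} (nbr ρ l WX A)
          have h3 : ({l e, l f} : Finset B).card ≤ 2 := Finset.card_le_two
          omega)
      have hMfacts : ∀ g ∈ M, g ∈ W ∧ l g ∈ X ∧ ρ g ∈ T ∧ ρ g ≠ ρ e ∧ l g ≠ l e ∧ l g ≠ l f := by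
        intro g hg
        have h1 := Finset.mem_filter.1 (hMW hg)
        have h2 := hMT g hg
        simp only [Finset.mem_erase, Finset.mem_insert, Finset.mem_singleton, not_or] at h2
        exact ⟨h1.1, h1.2, h2.1.2, h2.1.1, h2.2⟩
      have hd' : ∀ g ∈ M, ∀ g' ∈ M₀, l g ≠ l g' ∧ ρ g ≠ ρ g' := by
        intro g hg g' hg'
        have h1 := hMfacts g hg
        have h2 := hM₀X g' hg'
        exact ⟨fun hh => h2.1 (hh ▸ h1.2.1), fun hh => h2.2 (hh ▸ hTY h1.2.2.1)⟩
      refine ⟨M ∪ M₀, Finset.union_subset ?_ hM₀R, hM.swap.union hM₀ hd', ?_, ?_⟩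
      · intro g hg
        have h1 := hMfacts g hg
        exact hkeep g h1.1 h1.2.2.2.2.1 h1.2.2.2.2.2 h1.2.2.2.1
      · intro g hg
        rcases Finset.mem_union.1 hg with hg | hg
        · have h1 := hMfacts g hg
          refine ⟨fun hh => hPT g h1.1 hh h1.2.2.1, fun hh => ?_⟩
          obtain ⟨g', hg', hgP, heq⟩ := mem_nbr.1 hh
          exact hPT g' (hR hg') hgP (heq ▸ h1.2.2.1)
        · have h1 := hM₀X g hg
          refine ⟨fun hh => h1.1 (Finset.mem_sdiff.1 hh).1, fun hh => h1.2 ?_⟩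
          obtain ⟨g', hg', hgP, heq⟩ := mem_nbr.1 hh
          exact heq ▸ hin g' (hR hg') (Finset.mem_sdiff.1 hgP).1
      · rw [card_union_of_ends_ne fun g hg g' hg' => (hd' g hg g' hg').1, hcard,
          Finset.card_erase_of_mem hc]
        have := Finset.card_pos.2 ⟨_, hc⟩
        omega
  · have hPcard : ((X.erase (l e)).erase (l f)).card + 2 = X.card := by
      have h1 := Finset.card_erase_add_one (Finset.mem_erase.2 ⟨hfe, hfX⟩)
      have h2 := Finset.card_erase_add_one heX
      omega
    have hPsub : ∀ b ∈ (X.erase (l e)).erase (l f), b ≠ l f ∧ b ≠ l e ∧ b ∈ X := fun b hb => by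
      simpa using hb
    refine ⟨(X.erase (l e)).erase (l f), Finset.card_pos.1 (by omega), ?_, M₀, hM₀R, hM₀, ?_,
      by omega⟩
    · intro A hA hAn
      have hAX : A ⊆ X := fun b hb => (hPsub b (hA hb)).2.2
      have hbig : A.card + 2 ≤ (nbr l ρ W A).card := by
        have h0 := h.surplus A hAX (by rintro rfl; exact (hPsub _ (hA heX)).2.1 rfl) hAn
        by_contra hcon
        have hAsub : nbr l ρ W A ⊆ Y := nbr_mono hAX
        have h1 := Finset.card_sdiff_add_card_eq_card hAsub
        have h2 := Finset.card_le_card hA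
        have hA1 := Finset.card_pos.2 hAn
        have h3 : nbr ρ l WX (Y \ nbr l ρ W A) ⊆ X \ A := by
          intro x hx
          obtain ⟨g, hg, hgA, rfl⟩ := mem_nbr.1 hx
          rw [Finset.mem_filter] at hg
          rw [Finset.mem_sdiff] at hgA ⊢
          exact ⟨hg.2, fun hh => hgA.2 (mem_nbr_of_mem hg.1 hh)⟩
        have h4 := Finset.card_le_card h3
        have h5 := Finset.card_sdiff_add_card_eq_card hAX
        have h6 := hmin (Y \ nbr l ρ W A) ⟨Finset.sdiff_subset, Finset.card_pos.1 (by omega),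
          by omega⟩
        omega
      have hsub : (nbr l ρ W A).erase (ρ e) ⊆ nbr l ρ R A := by
        intro c hc'
        rw [Finset.mem_erase] at hc'
        obtain ⟨g, hg, hgA, rfl⟩ := mem_nbr.1 hc'.2
        have h1 := hPsub _ (hA hgA)
        exact mem_nbr_of_mem (hkeep g hg h1.2.1 h1.1 hc'.1) hgA
      have h1 := Finset.card_le_card hsub
      have h2 := Finset.pred_card_le_card_erase (s := nbr l ρ W A) (a := ρ e)
      omega
    · intro g hg
      have h1 := hM₀X g hg
      refine ⟨fun hh => h1.1 (hPsub _ hh).2.2, fun hh => h1.2 ?_⟩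
      obtain ⟨g', hg', hgP, heq⟩ := mem_nbr.1 hh
      exact heq ▸ hin g' (hR hg') (hPsub _ hgP).2.2

/-- There is an explosion in which the potential drops by at most `12r²` in every outcome, possibly
after averaging over a second explosion. -/
lemma exists_good_explosion {l : V → B} {ρ : V → C} {r : ℕ} {W : Finset V} (hd : DegLE l ρ r W)
    (hW : W.Nonempty) :
    ∃ e ∈ W, ∃ p : V → ℕ, ∀ f R, IsOutcome l ρ W e p f R →
      potential l ρ r W ≤ potential l ρ r R + 12 * r ^ 2 ∨
      ∃ e' ∈ R, ∃ p' : V → ℕ, ∀ f' R', IsOutcome l ρ R e' p' f' R' →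
        potential l ρ r W ≤ potential l ρ r R' + 24 * r ^ 2 := by
  by_cases hsur : ∀ A ⊆ W.image l, A.Nonempty → A.card + 1 ≤ (nbr l ρ W A).card
  · obtain ⟨e, he, p, hp⟩ := exists_explosion_of_surplus (hW.image l) hsur
      (Finset.empty_subset W) (by simp [IsBipMatching]) (by simp)
    refine ⟨e, he, p, fun f R hout => Or.inl ?_⟩
    obtain ⟨M, hMW, hM, hcard, hkeep⟩ := hp f hout.mem hout.meets
    refine hout.potential_le_of_gain he hd hMW hM ?_ hkeep
    obtain ⟨M', hMW', hM', hcard'⟩ := exists_card_eq_bipNu l ρ W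
    have h1 := Finset.card_image_of_injOn hM'.1
    have h2 := Finset.card_le_card (Finset.image_subset_image (f := l) hMW')
    rw [Finset.card_empty] at hcard
    omega
  · push Not at hsur
    obtain ⟨A, hA, hAn, hAcard⟩ := hsur
    obtain ⟨X, hX⟩ := exists_isBlock (ρ := ρ) hA hAn (by omega)
    have hXpos := Finset.card_pos.2 hX.nonempty
    by_cases h2 : X.card = 2
    · obtain ⟨e, he, p, hp⟩ := hX.exists_explosion_two hd h2
      exact ⟨e, he, p, fun f R hout => Or.inl (hp f R hout)⟩
    by_cases h1 : X.card = 1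
    · obtain ⟨x, rfl⟩ := Finset.card_eq_one.1 h1
      obtain ⟨c, hc⟩ := Finset.card_pos.1 (by rw [hX.card_nbr]; omega :
        0 < (nbr l ρ W {x}).card)
      obtain ⟨e, he, hex, -⟩ := mem_nbr.1 hc
      refine ⟨e, he, _, fun f R hout => Or.inl ((hX.outcome hd he hex hout).elim id ?_)⟩
      rintro ⟨hfx, hfe, -⟩
      rw [Finset.mem_singleton] at hex hfx
      exact absurd (hfx.trans hex.symm) hfe
    · obtain ⟨e, he, heX, hrem⟩ := hX.exists_remaining_surplus (by omega)
      refine ⟨e, he, _, fun f R hout => (hX.outcome hd he heX hout).imp id ?_⟩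
      rintro ⟨hfX, hfe, hρf, hkeep⟩
      obtain ⟨P, hP, hPsur, M₁, hM₁R, hM₁, hM₁P, hnu⟩ :=
        hrem f hout.mem hfX hfe hρf R hout.subset hkeep
      obtain ⟨e', he', p', hp'⟩ := exists_explosion_of_surplus hP hPsur hM₁R hM₁ hM₁P
      refine ⟨e', he', p', fun f' R' hout' => ?_⟩
      obtain ⟨M, hMR, hM, hcard, hkeep'⟩ := hp' f' hout'.mem hout'.meets
      have c1 := hout'.card_le_bipNu hMR hM hkeep'
      have c2 := hout.card_le he hd
      have c3 := hout'.card_le he' (hd.mono hout.subset)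
      have hr : 1 ≤ r := le_trans (Finset.card_pos.2 ⟨e, by simp [he]⟩) (hd.1 (l e))
      have := potential_le (r := r) (i := 3) (j := 6 * r - 4) (k := 0)
        (by omega : bipNu l ρ W ≤ bipNu l ρ R' + 3) (by omega)
        (Finset.card_le_card (fourCycles_mono hd (hout'.subset.trans hout.subset)))
      rw [Nat.cast_sub (by omega)] at this
      push_cast at this
      nlinarith

/-- The matching complex of a bipartite multigraph of maximum degree `r` is acyclic up to a
dimension governed by the potential. -/
theorem acyclic_of_potential [Fintype V] {l : V → B} {ρ : V → C} {r : ℕ} (m : ℕ) :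
    ∀ {W : Finset V} {d : ℕ}, W.card ≤ m → DegLE l ρ r W → 12 * r ^ 2 * d < potential l ρ r W →
      Acyclic (Ind (Meets l ρ) W) (d + 1) := by
  induction m with
  | zero =>
    intro W d hW _ hpot
    obtain rfl := Finset.card_eq_zero.1 (Nat.le_zero.1 hW)
    have h1 : bipNu l ρ ∅ = 0 := by
      obtain ⟨M, hM, -, hcard⟩ := exists_card_eq_bipNu l ρ ∅
      rw [← hcard, Finset.subset_empty.1 hM, Finset.card_empty]
    rw [potential, h1, Finset.card_empty] at hpot
    have : (0 : ℤ) ≤ 12 * r ^ 2 * d := by positivity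
    have : (0 : ℤ) ≤ 2 * r * (fourCycles l ρ r ∅).card := by positivity
    push_cast at hpot
    linarith
  | succ m ih =>
    intro W d hW hd hpot
    have hsymm : ∀ u v, Meets l ρ u v → Meets l ρ v u := fun _ _ => Meets.symm
    have hirr : ∀ v, ¬ Meets l ρ v v := fun v hv => hv.1 rfl
    rcases W.eq_empty_or_nonempty with rfl | hne
    · exact ih (by simp) hd hpot
    obtain ⟨e, he, p, hp⟩ := exists_good_explosion hd hne
    refine acyclic_ind_of_explosions hsymm hirr he p d fun f hf hef R hR h1 h2 => ?_
    have hlt : ∀ {R : Finset V}, R ⊆ W → f ∉ R → R.card ≤ m := fun {R} hR' hfR => by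
      have := Finset.card_lt_card (Finset.ssubset_iff_subset_ne.2
        ⟨hR', fun hh => hfR (hh ▸ hf)⟩)
      omega
    have hfR : f ∉ R := fun hh => (h1 f hh).1 rfl
    rcases d with _ | d
    · exact acyclic_zero _
    rcases hp f R ⟨hf, hef, hR, h1, h2⟩ with hgood | ⟨e', he', p', hp'⟩
    · refine ih (hlt hR hfR) (hd.mono hR) ?_
      push_cast at hpot
      linarith
    · refine acyclic_ind_of_explosions hsymm hirr he' p' d fun f' hf' hef' R' hR' h1' h2' => ?_
      rcases d with _ | d
      · exact acyclic_zero _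
      refine ih (hlt (hR'.trans hR) fun hh => hfR (hR' hh)) (hd.mono (hR'.trans hR)) ?_
      have := hp' f' R' ⟨hf', hef', hR', h1', h2'⟩
      push_cast at hpot
      linarith

end LargeBlock

section FourCycle

variable {V B C : Type*} [DecidableEq V] [DecidableEq B] [DecidableEq C]

lemma IsFourCycle.exists_ends {l : V → B} {ρ : V → C} {r : ℕ} {W Q : Finset V}
    (h : IsFourCycle l ρ r W Q) {g₀ : V} (hg₀ : g₀ ∈ Q) :
    ∃ x y, l g₀ ≠ x ∧ ρ g₀ ≠ y ∧ Q = W.filter (fun g => l g = l g₀ ∨ l g = x) ∧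
      Q = W.filter (fun g => ρ g = ρ g₀ ∨ ρ g = y) ∧
      ∀ x' y', (x' = l g₀ ∨ x' = x) → (y' = ρ g₀ ∨ y' = y) → ∃ g ∈ Q, l g = x' ∧ ρ g = y' := by
  obtain ⟨x₁, x₂, y₁, y₂, hx, hy, h1, h2, -, hall⟩ := h
  have hl : ∃ x, l g₀ ≠ x ∧ ∀ x', (x' = l g₀ ∨ x' = x) ↔ (x' = x₁ ∨ x' = x₂) := by
    rcases (Finset.mem_filter.1 (h1 ▸ hg₀)).2 with hh | hh
    · exact ⟨x₂, hh ▸ hx, fun x' => by rw [hh]⟩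
    · exact ⟨x₁, hh ▸ hx.symm, fun x' => by rw [hh, or_comm]⟩
  have hρ : ∃ y, ρ g₀ ≠ y ∧ ∀ y', (y' = ρ g₀ ∨ y' = y) ↔ (y' = y₁ ∨ y' = y₂) := by
    rcases (Finset.mem_filter.1 (h2 ▸ hg₀)).2 with hh | hh
    · exact ⟨y₂, hh ▸ hy, fun y' => by rw [hh]⟩
    · exact ⟨y₁, hh ▸ hy.symm, fun y' => by rw [hh, or_comm]⟩
  obtain ⟨x, hx', hxx⟩ := hl
  obtain ⟨y, hy', hyy⟩ := hρ
  refine ⟨x, y, hx', hy', ?_, ?_, fun x' y' hx hy => hall x' y' ((hxx x').1 hx) ((hyy y').1 hy)⟩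
  · simpa only [hxx] using h1
  · simpa only [hyy] using h2

lemma IsFourCycle.mem_of_meets {l : V → B} {ρ : V → C} {r : ℕ} {W Q : Finset V}
    (h : IsFourCycle l ρ r W Q) {g g' : V} (hg : g ∈ Q) (hg' : g' ∈ W)
    (heq : l g' = l g ∨ ρ g' = ρ g) : g' ∈ Q := by
  obtain ⟨x, y, -, -, h1, h2, -⟩ := h.exists_ends hg
  rcases heq with hh | hh
  · rw [h1]; exact Finset.mem_filter.2 ⟨hg', Or.inl hh⟩
  · rw [h2]; exact Finset.mem_filter.2 ⟨hg', Or.inl hh⟩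

lemma IsFourCycle.subset {l : V → B} {ρ : V → C} {r : ℕ} {W Q : Finset V}
    (h : IsFourCycle l ρ r W Q) : Q ⊆ W := by
  obtain ⟨x₁, x₂, y₁, y₂, -, -, h1, -⟩ := h
  exact h1 ▸ Finset.filter_subset _ _

lemma IsFourCycle.card_eq {l : V → B} {ρ : V → C} {r : ℕ} {W Q : Finset V}
    (h : IsFourCycle l ρ r W Q) : Q.card = 2 * r := by
  obtain ⟨x₁, x₂, y₁, y₂, -, -, -, -, h1, -⟩ := h
  exact h1

lemma IsFourCycle.eq_of_mem {l : V → B} {ρ : V → C} {r : ℕ} {W Q Q' : Finset V}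
    (h : IsFourCycle l ρ r W Q) (h' : IsFourCycle l ρ r W Q') {g : V} (hg : g ∈ Q)
    (hg' : g ∈ Q') : Q = Q' := by
  refine Finset.eq_of_subset_of_card_le (fun k hk => ?_) (by rw [h.card_eq, h'.card_eq])
  obtain ⟨x, y, -, -, -, h2, hall⟩ := h.exists_ends hg
  have hk' : k ∈ W.filter (fun g' => ρ g' = ρ g ∨ ρ g' = y) := h2 ▸ hk
  obtain ⟨m, hm, hm1, hm2⟩ := hall (l g) (ρ k) (Or.inl rfl) (Finset.mem_filter.1 hk').2
  exact h'.mem_of_meets (h'.mem_of_meets hg' (h.subset hm) (Or.inl hm1)) (h.subset hk)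
    (Or.inr hm2.symm)

/-- The edges of a 4-cycle component fall into two types, the two perfect matchings of the
4-cycle. -/
lemma IsFourCycle.exists_type {l : V → B} {ρ : V → C} {r : ℕ} {W Q : Finset V}
    (h : IsFourCycle l ρ r W Q) :
    ∃ t : V → Bool, ∀ g ∈ Q, ∀ g' ∈ Q, (t g = t g' ↔ (l g = l g' ↔ ρ g = ρ g')) := by
  obtain ⟨x₁, x₂, y₁, y₂, hx, hy, h1, h2, -, -⟩ := h
  refine ⟨fun g => decide (l g = x₁ ↔ ρ g = y₁), fun g hg g' hg' => ?_⟩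
  have a1 := (Finset.mem_filter.1 (h1 ▸ hg)).2
  have a2 := (Finset.mem_filter.1 (h2 ▸ hg)).2
  have b1 := (Finset.mem_filter.1 (h1 ▸ hg')).2
  have b2 := (Finset.mem_filter.1 (h2 ▸ hg')).2
  rcases a1 with a1 | a1 <;> rcases a2 with a2 | a2 <;> rcases b1 with b1 | b1 <;>
    rcases b2 with b2 | b2 <;> simp [a1, a2, b1, b2, hx, hy, hx.symm, hy.symm]

lemma IsFourCycle.exists_other_type {l : V → B} {ρ : V → C} {r : ℕ} {W Q : Finset V}
    (h : IsFourCycle l ρ r W Q) {g : V} (hg : g ∈ Q) : ∃ g' ∈ Q, l g' = l g ∧ ρ g' ≠ ρ g := by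
  obtain ⟨x, y, -, hy, -, -, hall⟩ := h.exists_ends hg
  obtain ⟨g', hg', h1, h2⟩ := hall (l g) y (Or.inl rfl) (Or.inr rfl)
  exact ⟨g', hg', h1, by rw [h2]; exact hy.symm⟩

/-- A component assignment and a type function for all 4-cycle components at once. -/
lemma exists_comp_type (l : V → B) (ρ : V → C) (r : ℕ) (W : Finset V) :
    ∃ (q : V → Finset V) (t : V → Bool), ∀ Q ∈ fourCycles l ρ r W, (∀ g ∈ Q, q g = Q) ∧
      ∀ g ∈ Q, ∀ g' ∈ Q, (t g = t g' ↔ (l g = l g' ↔ ρ g = ρ g')) := by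
  classical
  have h1 : ∀ g, ∃ P, ∀ Q ∈ fourCycles l ρ r W, g ∈ Q → P = Q := by
    intro g
    by_cases h : ∃ Q ∈ fourCycles l ρ r W, g ∈ Q
    · obtain ⟨P, hP, hg⟩ := h
      exact ⟨P, fun Q hQ hgQ => (mem_fourCycles.1 hP).eq_of_mem (mem_fourCycles.1 hQ) hg hgQ⟩
    · exact ⟨∅, fun Q hQ hgQ => absurd ⟨Q, hQ, hgQ⟩ h⟩
  choose q hq using h1
  have h2 : ∀ Q, ∃ t : V → Bool, Q ∈ fourCycles l ρ r W →
      ∀ g ∈ Q, ∀ g' ∈ Q, (t g = t g' ↔ (l g = l g' ↔ ρ g = ρ g')) := by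
    intro Q
    by_cases h : Q ∈ fourCycles l ρ r W
    · obtain ⟨t, ht⟩ := (mem_fourCycles.1 h).exists_type
      exact ⟨t, fun _ => ht⟩
    · exact ⟨fun _ => true, fun hQ => absurd hQ h⟩
  choose t ht using h2
  refine ⟨q, fun g => t (q g) g, fun Q hQ => ⟨fun g hg => hq g Q hQ hg, fun g hg g' hg' => ?_⟩⟩
  simp only [hq g Q hQ hg, hq g' Q hQ hg']
  exact ht Q hQ g hg g' hg'

end FourCycle

section Entire

variable {V B C α : Type*} [DecidableEq V] [DecidableEq B] [DecidableEq C] [DecidableEq α]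

/-- The edges of `W` parallel to the triple `(x, y, z)`. -/
def parallel (a : V → α) (l : V → B) (ρ : V → C) (W : Finset V) (x : α) (y : B) (z : C) :
    Finset V := W.filter fun g => a g = x ∧ l g = y ∧ ρ g = z

/-- The colored bipartite multigraph `W` contains `(r/2) • F`. -/
def HasFano (a : V → α) (l : V → B) (ρ : V → C) (r : ℕ) (W : Finset V) : Prop :=
  ∃ (s : ℕ) (x₁ y₁ : α) (x₂ y₂ : B) (x₃ y₃ : C), 2 * s = r ∧ x₁ ≠ y₁ ∧ x₂ ≠ y₂ ∧ x₃ ≠ y₃ ∧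
    s ≤ (parallel a l ρ W x₁ x₂ x₃).card ∧ s ≤ (parallel a l ρ W x₁ y₂ y₃).card ∧
    s ≤ (parallel a l ρ W y₁ x₂ y₃).card ∧ s ≤ (parallel a l ρ W y₁ y₂ x₃).card

lemma card_add_card_le_of_disjoint {P Q T : Finset V} (hP : P ⊆ T) (hQ : Q ⊆ T)
    (h : ∀ g ∈ P, g ∉ Q) : P.card + Q.card ≤ T.card := by
  rw [← Finset.card_union_of_disjoint (Finset.disjoint_left.2 fun {g} => h g)]
  exact Finset.card_le_card (Finset.union_subset hP hQ)

/-- In a 4-cycle component, at least `r` edges have a color that is not confined to the edges of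
their own type in that component. -/
lemma IsFourCycle.le_card_not_entire {a : V → α} {l : V → B} {ρ : V → C} {r : ℕ} {W Q : Finset V}
    (h : IsFourCycle l ρ r W Q) (hd : DegLE l ρ r W)
    (hcol : ∀ g ∈ W, (W.filter fun g' => a g' = a g).card = r) (hfree : ¬ HasFano a l ρ r W)
    {t : V → Bool} (ht : ∀ g ∈ Q, ∀ g' ∈ Q, (t g = t g' ↔ (l g = l g' ↔ ρ g = ρ g'))) :
    r ≤ (Q.filter fun g => ∃ g' ∈ W, a g' = a g ∧ ¬ (g' ∈ Q ∧ t g' = t g)).card := by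
  by_contra hcon
  have hsum := Finset.card_filter_add_card_filter_not (s := Q)
    (fun g => ∃ g' ∈ W, a g' = a g ∧ ¬ (g' ∈ Q ∧ t g' = t g))
  rw [h.card_eq] at hsum
  have hlt : r < (Q.filter fun g => ¬ ∃ g' ∈ W, a g' = a g ∧ ¬ (g' ∈ Q ∧ t g' = t g)).card := by
    omega
  obtain ⟨g₁, hg₁⟩ := Finset.card_pos.1 (lt_of_le_of_lt (Nat.zero_le _) hlt)
  obtain ⟨g₂, hg₂, hne⟩ : ∃ g₂ ∈ Q.filter fun g => ¬ ∃ g' ∈ W, a g' = a g ∧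
      ¬ (g' ∈ Q ∧ t g' = t g), a g₂ ≠ a g₁ := by
    by_contra hcon'
    have := Finset.card_le_card (fun g hg => Finset.mem_filter.2
      ⟨h.subset (Finset.mem_filter.1 hg).1, by_contra fun hh => hcon' ⟨g, hg, hh⟩⟩ :
      (Q.filter fun g => ¬ ∃ g' ∈ W, a g' = a g ∧ ¬ (g' ∈ Q ∧ t g' = t g)) ⊆
        W.filter fun g => a g = a g₁)
    rw [hcol g₁ (h.subset (Finset.mem_filter.1 hg₁).1)] at this
    omega
  rw [Finset.mem_filter] at hg₁ hg₂
  obtain ⟨hg₁, hen₁⟩ := hg₁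
  obtain ⟨hg₂, hen₂⟩ := hg₂
  push Not at hen₁ hen₂
  have hcover : ∀ g ∈ Q, a g = a g₁ ∨ a g = a g₂ := by
    have hcup : (W.filter fun g => a g = a g₁) ∪ (W.filter fun g => a g = a g₂) = Q := by
      refine Finset.eq_of_subset_of_card_le (Finset.union_subset ?_ ?_) ?_
      · exact fun g hg => (hen₁ g (Finset.mem_filter.1 hg).1 (Finset.mem_filter.1 hg).2).1
      · exact fun g hg => (hen₂ g (Finset.mem_filter.1 hg).1 (Finset.mem_filter.1 hg).2).1
      · rw [Finset.card_union_of_disjoint, hcol g₁ (h.subset hg₁), hcol g₂ (h.subset hg₂),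
          h.card_eq, two_mul]
        exact Finset.disjoint_filter.2 fun g _ h1 h2 => hne (h2.symm.trans h1)
    intro g hg
    rw [← hcup] at hg
    rcases Finset.mem_union.1 hg with hh | hh
    · exact Or.inl (Finset.mem_filter.1 hh).2
    · exact Or.inr (Finset.mem_filter.1 hh).2
  obtain ⟨x, y, hx, hy, h1, h2, hall⟩ := h.exists_ends hg₁
  obtain ⟨k, hk, hk1, hk2⟩ := hall (l g₁) y (Or.inl rfl) (Or.inr rfl)
  have hkt : t k ≠ t g₁ := by
    rw [ne_eq, ht k hk g₁ hg₁, hk1, hk2]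
    simpa using hy.symm
  have hka : a k = a g₂ := (hcover k hk).resolve_left fun hh =>
    hkt (hen₁ k (h.subset hk) hh).2
  have hmem : ∀ g ∈ Q, (l g = l g₁ ∨ l g = x) ∧ (ρ g = ρ g₁ ∨ ρ g = y) := fun g hg =>
    ⟨(Finset.mem_filter.1 (h1.subset hg)).2, (Finset.mem_filter.1 (h2.subset hg)).2⟩
  have hc₁ : (W.filter fun g => a g = a g₁) ⊆
      parallel a l ρ W (a g₁) (l g₁) (ρ g₁) ∪ parallel a l ρ W (a g₁) x y := by
    intro g hg
    obtain ⟨hgW, hga⟩ := Finset.mem_filter.1 hg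
    obtain ⟨hgQ, hgt⟩ := hen₁ g hgW hga
    rw [ht g hgQ g₁ hg₁] at hgt
    obtain ⟨m1, m2⟩ := hmem g hgQ
    simp only [parallel, Finset.mem_union, Finset.mem_filter]
    rcases m1 with m1 | m1
    · exact Or.inl ⟨hgW, hga, m1, hgt.1 m1⟩
    · exact Or.inr ⟨hgW, hga, m1, m2.resolve_left fun hh => hx (by rw [← hgt.2 hh, m1])⟩
  have hc₂ : (W.filter fun g => a g = a g₂) ⊆
      parallel a l ρ W (a g₂) (l g₁) y ∪ parallel a l ρ W (a g₂) x (ρ g₁) := by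
    intro g hg
    obtain ⟨hgW, hga⟩ := Finset.mem_filter.1 hg
    obtain ⟨hgQ, hgt⟩ := hen₂ g hgW hga
    rw [← (hen₂ k (h.subset hk) hka).2, ht g hgQ k hk, hk1, hk2] at hgt
    obtain ⟨m1, m2⟩ := hmem g hgQ
    simp only [parallel, Finset.mem_union, Finset.mem_filter]
    rcases m1 with m1 | m1
    · exact Or.inl ⟨hgW, hga, m1, hgt.1 m1⟩
    · exact Or.inr ⟨hgW, hga, m1, m2.resolve_right fun hh => hx (by rw [← hgt.2 hh, m1])⟩
  have c1 := (Finset.card_le_card hc₁).trans (Finset.card_union_le _ _)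
  have c2 := (Finset.card_le_card hc₂).trans (Finset.card_union_le _ _)
  rw [hcol g₁ (h.subset hg₁)] at c1
  rw [hcol g₂ (h.subset hg₂)] at c2
  have hdl : ∀ z u v, (parallel a l ρ W (a g₁) z u).card + (parallel a l ρ W (a g₂) z v).card
      ≤ r := fun z u v => by
    refine (card_add_card_le_of_disjoint (T := W.filter fun g => l g = z) ?_ ?_ ?_).trans (hd.1 z)
    all_goals intro g hg; simp only [parallel, Finset.mem_filter] at hg ⊢
    · exact ⟨hg.1, hg.2.2.1⟩
    · exact ⟨hg.1, hg.2.2.1⟩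
    · exact fun hh => hne (hh.2.1.symm.trans hg.2.1)
  have hdρ : ∀ z u v, (parallel a l ρ W (a g₁) u z).card + (parallel a l ρ W (a g₂) v z).card
      ≤ r := fun z u v => by
    refine (card_add_card_le_of_disjoint (T := W.filter fun g => ρ g = z) ?_ ?_ ?_).trans (hd.2 z)
    all_goals intro g hg; simp only [parallel, Finset.mem_filter] at hg ⊢
    · exact ⟨hg.1, hg.2.2.2⟩
    · exact ⟨hg.1, hg.2.2.2⟩
    · exact fun hh => hne (hh.2.1.symm.trans hg.2.1)
  have d1 := hdl (l g₁) (ρ g₁) y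
  have d2 := hdl x y (ρ g₁)
  have d3 := hdρ (ρ g₁) (l g₁) x
  have d4 := hdρ y x (l g₁)
  exact hfree ⟨(parallel a l ρ W (a g₁) (l g₁) (ρ g₁)).card, a g₁, a g₂, l g₁, x, ρ g₁, y,
    by omega, hne.symm, hx, hy, le_rfl, by omega, by omega, by omega⟩

end Entire

section Averaging

variable {V B C α : Type*} [DecidableEq V] [DecidableEq B] [DecidableEq C] [DecidableEq α]

/-- The weight `1/r` for edges whose color class in `W` lies inside `E`, and `1/(r-1)` for the other
edges of `E`. -/
def weight (a : V → α) (r : ℕ) (W E : Finset V) (g : V) : ℚ :=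
  if g ∈ E then if (W.filter fun g' => a g' = a g) ⊆ E then 1 / r else 1 / (r - 1) else 0

lemma one_div_le_one_div_sub_one {r : ℕ} (hr : 2 ≤ r) : (1 / r : ℚ) ≤ 1 / (r - 1) := by
  have : (2 : ℚ) ≤ r := by exact_mod_cast hr
  exact one_div_le_one_div_of_le (by linarith) (by linarith)

lemma le_weight {a : V → α} {r : ℕ} (hr : 2 ≤ r) {W E : Finset V} {g : V} (hg : g ∈ E) :
    1 / r ≤ weight a r W E g := by
  rw [weight, if_pos hg]
  split_ifs
  · exact le_rfl
  · exact one_div_le_one_div_sub_one hr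

lemma weight_le {a : V → α} {r : ℕ} (hr : 2 ≤ r) (W E : Finset V) (g : V) :
    weight a r W E g ≤ 1 / (r - 1) := by
  have h1 : (2 : ℚ) ≤ r := by exact_mod_cast hr
  rw [weight]
  split_ifs
  · exact one_div_le_one_div_sub_one hr
  · exact le_rfl
  · exact one_div_nonneg.2 (by linarith)

lemma weight_nonneg {a : V → α} {r : ℕ} (hr : 2 ≤ r) (W E : Finset V) (g : V) :
    0 ≤ weight a r W E g := by
  by_cases hg : g ∈ E
  · exact le_trans (by positivity) (le_weight hr hg)
  · rw [weight, if_neg hg]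

lemma weight_eq_of_notMem {a : V → α} {r : ℕ} {W E : Finset V} {g g' : V} (hg : g ∈ E)
    (hg' : g' ∈ W) (ha : a g' = a g) (hE : g' ∉ E) : weight a r W E g = 1 / (r - 1) := by
  rw [weight, if_pos hg, if_neg fun h => hE (h (Finset.mem_filter.2 ⟨hg', ha⟩))]

lemma sum_weight_le_one {a : V → α} {r : ℕ} (hr : 2 ≤ r) {W E P : Finset V}
    (hP : P.card + 1 ≤ r) : ∑ g ∈ P, weight a r W E g ≤ 1 := by
  have h1 : (2 : ℚ) ≤ r := by exact_mod_cast hr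
  have h2 : (P.card : ℚ) + 1 ≤ r := by exact_mod_cast hP
  calc ∑ g ∈ P, weight a r W E g ≤ P.card • (1 / ((r : ℚ) - 1)) :=
        Finset.sum_le_card_nsmul _ _ _ fun g _ => weight_le hr W E g
    _ ≤ 1 := by
        rw [nsmul_eq_mul, mul_one_div, div_le_one (by linarith)]
        linarith

/-- A set of edges that misses an edge at every vertex of the first side contains a rainbow matching
of size at least its total weight. -/
lemma exists_rainbow_of_weight {a : V → α} {l : V → B} {ρ : V → C} {r : ℕ} (hr : 2 ≤ r)
    {W E : Finset V} (hd : DegLE l ρ r W) (hE : E ⊆ W)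
    (hcol : ∀ g ∈ W, (W.filter fun g' => a g' = a g).card = r)
    (hmiss : ∀ g ∈ E, ∃ g' ∈ W, g' ∉ E ∧ l g' = l g)
    (hρ : ∀ g ∈ E, ∀ g' ∈ E, ρ g = ρ g' → l g = l g') :
    ∃ M ⊆ E, Set.InjOn a M ∧ Set.InjOn l M ∧ Set.InjOn ρ M ∧
      ∑ g ∈ E, weight a r W E g ≤ M.card := by
  have hcolor : ∀ x, ∑ g ∈ E with a g = x, weight a r W E g ≤ 1 := by
    intro x
    by_cases hx : ∃ g ∈ E, a g = x
    swap
    · rw [Finset.filter_false_of_mem fun g hg h => hx ⟨g, hg, h⟩]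
      simp
    obtain ⟨g₀, hg₀, rfl⟩ := hx
    have hsub : (E.filter fun g => a g = a g₀) ⊆ W.filter fun g => a g = a g₀ :=
      Finset.filter_subset_filter _ hE
    have hle := Finset.card_le_card hsub
    rw [hcol g₀ (hE hg₀)] at hle
    by_cases hfull : (W.filter fun g => a g = a g₀) ⊆ E
    · have h1 : ∀ g ∈ E.filter (fun g => a g = a g₀), weight a r W E g = 1 / r := by
        intro g hg
        rw [Finset.mem_filter] at hg
        rw [weight, if_pos hg.1, hg.2, if_pos hfull]
      have h2 : ((E.filter fun g => a g = a g₀).card : ℚ) ≤ r := by exact_mod_cast hle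
      have h3 : (2 : ℚ) ≤ r := by exact_mod_cast hr
      rw [Finset.sum_congr rfl h1, Finset.sum_const, nsmul_eq_mul, mul_one_div,
        div_le_one (by linarith)]
      exact h2
    · refine sum_weight_le_one hr ?_
      rw [← hcol g₀ (hE hg₀)]
      refine Finset.card_lt_card (hsub.ssubset_of_ne fun heq => hfull ?_)
      rw [← heq]
      exact Finset.filter_subset _ _
  have hleft : ∀ b, ∑ g ∈ E with l g = b, weight a r W E g ≤ 1 := by
    intro b
    by_cases hb : ∃ g ∈ E, l g = b
    swap
    · rw [Finset.filter_false_of_mem fun g hg h => hb ⟨g, hg, h⟩]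
      simp
    obtain ⟨g₀, hg₀, rfl⟩ := hb
    obtain ⟨g', hg', hgE, hl⟩ := hmiss g₀ hg₀
    refine sum_weight_le_one hr (le_trans (Finset.card_lt_card ?_) (hd.1 (l g₀)))
    refine (Finset.filter_subset_filter _ hE).ssubset_of_ne fun heq => hgE ?_
    exact (Finset.mem_filter.1 (heq.symm.subset (Finset.mem_filter.2 ⟨hg', hl⟩))).1
  obtain ⟨M, hME, hM, hcard⟩ := exists_bipMatching_of_fractional (weight a r W E)
    (fun g _ => weight_nonneg hr W E g) hcolor hleft
  exact ⟨M, hME, hM.1, hM.2,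
    fun g hg g' hg' h => hM.2 hg hg' (hρ g (hME hg) g' (hME hg') h), hcard⟩

/-- The Boolean function `τ` with its value at `x` negated. -/
def flipAt {X : Type*} [DecidableEq X] (x : X) (τ : X → Bool) : X → Bool :=
  Function.update τ x (!τ x)

lemma flipAt_self {X : Type*} [DecidableEq X] (x : X) (τ : X → Bool) :
    flipAt x τ x = !τ x := Function.update_self ..

lemma flipAt_of_ne {X : Type*} [DecidableEq X] {x y : X} (h : y ≠ x) (τ : X → Bool) :
    flipAt x τ y = τ y := Function.update_of_ne h ..

lemma sum_flipAt {X : Type*} [Fintype X] [DecidableEq X] (x : X) (f : (X → Bool) → ℚ) :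
    ∑ τ, f (flipAt x τ) = ∑ τ, f τ := by
  have h : Function.Involutive (flipAt x) := fun τ => by simp [flipAt]
  exact Equiv.sum_comp h.toPerm f

/-- The edges of `U` whose type is the one chosen by `τ` for their component. -/
def chosen (q : V → Finset V) (t : V → Bool) (U : Finset V) (τ : Finset V → Bool) : Finset V :=
  U.filter fun g => t g = τ (q g)

lemma mem_chosen_or {q : V → Finset V} {t : V → Bool} {U : Finset V} {g : V} (hg : g ∈ U)
    (τ : Finset V → Bool) : g ∈ chosen q t U τ ∨ g ∈ chosen q t U (flipAt (q g) τ) := by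
  simp only [chosen, Finset.mem_filter, hg, true_and, flipAt_self]
  cases t g <;> cases τ (q g) <;> simp

lemma sum_weight_ge [Fintype V] {a : V → α} {r : ℕ} (hr : 2 ≤ r) {W : Finset V}
    {q : V → Finset V} {t : V → Bool} {U : Finset V} {g : V} (hg : g ∈ U) :
    (Fintype.card (Finset V → Bool) : ℚ) * (1 / r)
      ≤ 2 * ∑ τ, weight a r W (chosen q t U τ) g := by
  have key : ∀ τ, 1 / (r : ℚ) ≤ weight a r W (chosen q t U τ) g
      + weight a r W (chosen q t U (flipAt (q g) τ)) g := by
    intro τ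
    rcases mem_chosen_or (q := q) (t := t) hg τ with h | h
    · linarith [le_weight (a := a) (W := W) hr h,
        weight_nonneg (a := a) hr W (chosen q t U (flipAt (q g) τ)) g]
    · linarith [le_weight (a := a) (W := W) hr h,
        weight_nonneg (a := a) hr W (chosen q t U τ) g]
  have h := Finset.sum_le_sum fun τ (_ : τ ∈ Finset.univ) => key τ
  rw [Finset.sum_add_distrib, sum_flipAt (q g) fun τ => weight a r W (chosen q t U τ) g,
    Finset.sum_const, Finset.card_univ, nsmul_eq_mul] at h
  linarith

lemma sum_weight_ge_of_not_entire [Fintype V] {a : V → α} {r : ℕ} (hr : 2 ≤ r) {W : Finset V}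
    {q : V → Finset V} {t : V → Bool} {U : Finset V} {g g' : V} (hg : g ∈ U) (hg' : g' ∈ W)
    (ha : a g' = a g) (hne : g' ∈ U → q g' = q g → t g' ≠ t g) :
    (Fintype.card (Finset V → Bool) : ℚ) * (1 / r + 1 / (r - 1))
      ≤ 4 * ∑ τ, weight a r W (chosen q t U τ) g := by
  set w : (Finset V → Bool) → ℚ := fun τ => weight a r W (chosen q t U τ) g with hw
  have hw0 : ∀ τ, 0 ≤ w τ := fun τ => weight_nonneg hr _ _ _
  have hw1 : ∀ τ, g ∈ chosen q t U τ → 1 / (r : ℚ) ≤ w τ := fun τ h => le_weight hr h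
  have hw2 : ∀ τ, g ∈ chosen q t U τ → g' ∉ chosen q t U τ → w τ = 1 / (r - 1) :=
    fun τ h h' => weight_eq_of_notMem h hg' ha h'
  have hrr := one_div_le_one_div_sub_one hr
  by_cases hU : g' ∈ U ∧ q g' ≠ q g
  · obtain ⟨hU, hq⟩ := hU
    have key0 : ∀ τ, g ∈ chosen q t U τ →
        1 / (r : ℚ) + 1 / (r - 1) ≤ w τ + w (flipAt (q g') τ) := by
      intro τ h
      have h' : g ∈ chosen q t U (flipAt (q g') τ) := by
        rw [chosen, Finset.mem_filter] at h ⊢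
        rwa [flipAt_of_ne hq.symm]
      by_cases hτ : g' ∈ chosen q t U τ
      · have : g' ∉ chosen q t U (flipAt (q g') τ) := by
          rw [chosen, Finset.mem_filter] at hτ ⊢
          rw [flipAt_self, hτ.2]
          simp
        linarith [hw1 τ h, hw2 _ h' this]
      · linarith [hw1 _ h', hw2 τ h hτ]
    have key : ∀ τ, 1 / (r : ℚ) + 1 / (r - 1) ≤ w τ + w (flipAt (q g') τ) +
        (w (flipAt (q g) τ) + w (flipAt (q g') (flipAt (q g) τ))) := by
      intro τ
      rcases mem_chosen_or (q := q) (t := t) hg τ with h | h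
      · linarith [key0 τ h, hw0 (flipAt (q g) τ), hw0 (flipAt (q g') (flipAt (q g) τ))]
      · linarith [key0 _ h, hw0 τ, hw0 (flipAt (q g') τ)]
    have h := Finset.sum_le_sum fun τ (_ : τ ∈ Finset.univ) => key τ
    rw [Finset.sum_const, Finset.card_univ, nsmul_eq_mul, Finset.sum_add_distrib,
      Finset.sum_add_distrib, Finset.sum_add_distrib, sum_flipAt (q g) w,
      sum_flipAt (q g) fun τ => w (flipAt (q g') τ), sum_flipAt (q g') w] at h
    linarith
  · have hnot : ∀ τ, g ∈ chosen q t U τ → g' ∉ chosen q t U τ := by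
      intro τ h h'
      rw [chosen, Finset.mem_filter] at h h'
      have hqq : q g' = q g := by_contra fun hh => hU ⟨h'.1, hh⟩
      exact hne h'.1 hqq (by rw [h'.2, h.2, hqq])
    have key : ∀ τ, 1 / ((r : ℚ) - 1) ≤ w τ + w (flipAt (q g) τ) := by
      intro τ
      rcases mem_chosen_or (q := q) (t := t) hg τ with h | h
      · linarith [hw2 τ h (hnot τ h), hw0 (flipAt (q g) τ)]
      · linarith [hw2 _ h (hnot _ h), hw0 τ]
    have h := Finset.sum_le_sum fun τ (_ : τ ∈ Finset.univ) => key τ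
    rw [Finset.sum_add_distrib, sum_flipAt (q g) w, Finset.sum_const, Finset.card_univ,
      nsmul_eq_mul] at h
    have hK := mul_le_mul_of_nonneg_left hrr
      (Nat.cast_nonneg (Fintype.card (Finset V → Bool)) : (0 : ℚ) ≤ _)
    rw [mul_add]
    linarith

/-- If `W` has many 4-cycle components, then it has a large rainbow matching. -/
theorem card_fourCycles_le [Fintype V] {a : V → α} {l : V → B} {ρ : V → C} {r μ : ℕ} (hr : 2 ≤ r)
    {W : Finset V} (hd : DegLE l ρ r W)
    (hcol : ∀ g ∈ W, (W.filter fun g' => a g' = a g).card = r) (hfree : ¬ HasFano a l ρ r W)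
    (hμ : ∀ M ⊆ W, Set.InjOn a M → Set.InjOn l M → Set.InjOn ρ M → M.card ≤ μ) :
    (4 * r - 3 : ℚ) * (fourCycles l ρ r W).card ≤ 4 * (r - 1) * μ := by
  obtain ⟨q, t, hqt⟩ := exists_comp_type l ρ r W
  set U := (fourCycles l ρ r W).biUnion id with hU
  have hmemU : ∀ {g}, g ∈ U ↔ ∃ Q ∈ fourCycles l ρ r W, g ∈ Q := by simp [hU]
  have hdisj : Set.PairwiseDisjoint (fourCycles l ρ r W : Set (Finset V)) id := by
    intro Q hQ Q' hQ' hne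
    refine Finset.disjoint_left.2 fun g hg hg' => hne ?_
    exact (mem_fourCycles.1 hQ).eq_of_mem (mem_fourCycles.1 hQ') hg hg'
  have hupper : ∀ τ, ∑ g ∈ U, weight a r W (chosen q t U τ) g ≤ μ := by
    intro τ
    have hchosen : ∀ {g}, g ∈ chosen q t U τ →
        ∃ Q ∈ fourCycles l ρ r W, g ∈ Q ∧ t g = τ Q := by
      intro g hg
      obtain ⟨h1, h2⟩ := Finset.mem_filter.1 hg
      obtain ⟨Q, hQ, hgQ⟩ := hmemU.1 h1
      exact ⟨Q, hQ, hgQ, by rw [h2, (hqt Q hQ).1 g hgQ]⟩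
    have hsub : chosen q t U τ ⊆ W := fun g hg => by
      obtain ⟨Q, hQ, hgQ, -⟩ := hchosen hg
      exact (mem_fourCycles.1 hQ).subset hgQ
    obtain ⟨M, hM, hMa, hMl, hMρ, hcard⟩ := exists_rainbow_of_weight hr hd hsub hcol (by
        intro g hg
        obtain ⟨Q, hQ, hgQ, hgt⟩ := hchosen hg
        obtain ⟨g', hg', h1, h2⟩ := (mem_fourCycles.1 hQ).exists_other_type hgQ
        refine ⟨g', (mem_fourCycles.1 hQ).subset hg', fun hh => h2 ?_, h1⟩
        have h3 := (Finset.mem_filter.1 hh).2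
        rw [(hqt Q hQ).1 g' hg', ← hgt, (hqt Q hQ).2 g' hg' g hgQ] at h3
        exact h3.1 h1)
      (by
        intro g hg g' hg' h
        obtain ⟨Q, hQ, hgQ, hgt⟩ := hchosen hg
        have hgQ' := (mem_fourCycles.1 hQ).mem_of_meets hgQ (hsub hg') (Or.inr h.symm)
        have h3 := (Finset.mem_filter.1 hg').2
        rw [(hqt Q hQ).1 g' hgQ', ← hgt, eq_comm, (hqt Q hQ).2 g hgQ g' hgQ'] at h3
        exact h3.2 h)
    have h1 : (M.card : ℚ) ≤ μ := by exact_mod_cast hμ M (hM.trans hsub) hMa hMl hMρ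
    refine le_trans (le_of_eq ?_) (hcard.trans h1)
    refine (Finset.sum_subset (Finset.filter_subset _ _) fun g _ hg => ?_).symm
    exact if_neg hg
  set K : ℚ := (Fintype.card (Finset V → Bool) : ℚ) with hK
  have hKpos : 0 < K := by rw [hK]; exact_mod_cast Fintype.card_pos
  have hr2 : (2 : ℚ) ≤ r := by exact_mod_cast hr
  have hlower : ∀ Q ∈ fourCycles l ρ r W, K * ((4 * r - 3) / (r - 1))
      ≤ 4 * ∑ g ∈ Q, ∑ τ, weight a r W (chosen q t U τ) g := by
    intro Q hQ
    have hcyc := mem_fourCycles.1 hQ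
    have hle := hcyc.le_card_not_entire hd hcol hfree (hqt Q hQ).2
    set P := Q.filter fun g => ∃ g' ∈ W, a g' = a g ∧ ¬ (g' ∈ Q ∧ t g' = t g) with hP
    have hQP := Finset.card_sdiff_add_card_eq_card (Finset.filter_subset _ _ : P ⊆ Q)
    rw [hcyc.card_eq] at hQP
    rw [← Finset.sum_sdiff (Finset.filter_subset _ _ : P ⊆ Q)]
    have h1 : (Q \ P).card • (K * (1 / r) * 2)
        ≤ ∑ g ∈ Q \ P, 4 * ∑ τ, weight a r W (chosen q t U τ) g := by
      refine Finset.card_nsmul_le_sum _ _ _ fun g hg => ?_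
      have := sum_weight_ge (a := a) (W := W) (q := q) (t := t) hr
        (hmemU.2 ⟨Q, hQ, (Finset.mem_sdiff.1 hg).1⟩)
      linarith
    have h2 : P.card • (K * (1 / r + 1 / (r - 1)))
        ≤ ∑ g ∈ P, 4 * ∑ τ, weight a r W (chosen q t U τ) g := by
      refine Finset.card_nsmul_le_sum _ _ _ fun g hg => ?_
      obtain ⟨hgQ, g', hg', ha, hn⟩ := Finset.mem_filter.1 hg
      refine sum_weight_ge_of_not_entire hr (hmemU.2 ⟨Q, hQ, hgQ⟩) hg' ha fun hU' hq htt =>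
        hn ⟨?_, htt⟩
      obtain ⟨Q', hQ', hgQ'⟩ := hmemU.1 hU'
      rw [(hqt Q' hQ').1 g' hgQ', (hqt Q hQ).1 g hgQ] at hq
      exact hq ▸ hgQ'
    rw [← Finset.mul_sum, nsmul_eq_mul] at h1 h2
    have hQP' : ((Q \ P).card : ℚ) = 2 * r - P.card := by
      rw [eq_sub_iff_add_eq]
      exact_mod_cast hQP
    have hle' : (r : ℚ) ≤ P.card := by exact_mod_cast hle
    rw [hQP'] at h1
    have hrr := one_div_le_one_div_sub_one hr
    have h3 := mul_nonneg (mul_nonneg hKpos.le (sub_nonneg.2 hle')) (sub_nonneg.2 hrr)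
    have h4 : K * ((4 * r - 3) / (r - 1)) = (2 * r - r) * (K * (1 / r) * 2)
        + r * (K * (1 / r + 1 / (r - 1))) := by
      have : (r : ℚ) - 1 ≠ 0 := by linarith
      have : (r : ℚ) ≠ 0 := by linarith
      field_simp
      ring
    rw [h4, mul_add]
    nlinarith
  have hsum := Finset.card_nsmul_le_sum _ _ _ hlower
  have hswap : ∑ Q ∈ fourCycles l ρ r W, ∑ g ∈ Q, ∑ τ, weight a r W (chosen q t U τ) g
      = ∑ τ, ∑ g ∈ U, weight a r W (chosen q t U τ) g := by
    rw [Finset.sum_comm (s := Finset.univ), hU, Finset.sum_biUnion hdisj]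
    rfl
  rw [← Finset.mul_sum, hswap] at hsum
  have h5 := Finset.sum_le_card_nsmul Finset.univ _ _ fun τ _ => hupper τ
  rw [Finset.card_univ, nsmul_eq_mul] at h5
  rw [nsmul_eq_mul] at hsum
  have h6 : ((fourCycles l ρ r W).card : ℚ) * (K * ((4 * r - 3) / (r - 1))) ≤ 4 * (K * μ) :=
    hsum.trans (by linarith)
  have h7 : K * (((4 * r - 3) * (fourCycles l ρ r W).card) / (r - 1)) ≤ K * (4 * μ) := by
    calc _ = ((fourCycles l ρ r W).card : ℚ) * (K * ((4 * r - 3) / (r - 1))) := by ring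
      _ ≤ _ := by linarith
  have h8 := le_of_mul_le_mul_left h7 hKpos
  rw [div_le_iff₀ (by linarith)] at h8
  linarith

end Averaging

section Deficient

variable {V B C α : Type*} [DecidableEq V] [DecidableEq B] [DecidableEq C] [DecidableEq α]

lemma Acyclic.mono [Fintype V] {K : Finset V → Prop} {d d' : ℕ} (h : Acyclic K d) (hd : d' ≤ d) :
    Acyclic K d' := fun i hi => h i (hi.trans_le hd)

/-- A deficiency version of the topological Hall theorem, obtained by adding `q` dummy edges of every
color. The labels `Sum.inr j` are the ends of the dummy edges. -/
theorem exists_rainbow_of_acyclic [Fintype V] [Fintype α] {a : V → α} {l : V → B ⊕ ℕ}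
    {ρ : V → C ⊕ ℕ} {W : Finset V} {q : ℕ} (hl : ∀ v ∈ W, ∃ b, l v = Sum.inl b)
    (hρ : ∀ v ∈ W, ∃ c, ρ v = Sum.inl c)
    (hD : ∀ j < q, ∀ x, ∃ v, a v = x ∧ l v = Sum.inr j ∧ ρ v = Sum.inr j)
    (h : ∀ S : Finset α, Acyclic (Ind (Meets l ρ) (W.filter fun v => a v ∈ S)) (S.card - q)) :
    ∃ M ⊆ W, Set.InjOn a M ∧ Set.InjOn l M ∧ Set.InjOn ρ M ∧ Fintype.card α ≤ M.card + q := by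
  let D : ℕ → Finset V := fun j => Finset.univ.filter fun v => l v = Sum.inr j ∧ ρ v = Sum.inr j
  let U : ℕ → Finset α → Finset V := fun k S =>
    (W ∪ (Finset.range k).biUnion D).filter fun v => a v ∈ S
  have hmemD : ∀ {j v}, v ∈ D j ↔ l v = Sum.inr j ∧ ρ v = Sum.inr j := by simp [D]
  have hmemU : ∀ {k S v}, v ∈ U k S ↔ (v ∈ W ∨ ∃ j < k, v ∈ D j) ∧ a v ∈ S := by simp [U]
  have hDU : ∀ {k S v w}, v ∈ D k → w ∈ U k S → l v ≠ l w ∧ ρ v ≠ ρ w := by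
    intro k S v w hv hw
    rw [hmemD] at hv
    obtain ⟨hw | ⟨j, hj, hw⟩, -⟩ := hmemU.1 hw
    · obtain ⟨b, hb⟩ := hl w hw
      obtain ⟨c, hc⟩ := hρ w hw
      simp [hv, hb, hc]
    · rw [hmemD] at hw
      simp [hv, hw, hj.ne']
  have hacyc : ∀ S : Finset α, S.Nonempty → ∀ k ≤ q,
      Acyclic (Ind (Meets l ρ) (U k S)) (S.card - q + k) := by
    intro S hS k
    induction k with
    | zero =>
      intro _
      have : U 0 S = W.filter fun v => a v ∈ S := by simp [U]
      rw [this]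
      exact h S
    | succ k ih =>
      intro hk
      have hU : U (k + 1) S = U k S ∪ (D k).filter fun v => a v ∈ S := by
        ext v
        simp only [hmemU, Finset.mem_union, Finset.mem_filter, Nat.lt_succ_iff_lt_or_eq]
        constructor
        · rintro ⟨hv | ⟨j, hj | rfl, hv⟩, hS⟩
          · exact Or.inl ⟨Or.inl hv, hS⟩
          · exact Or.inl ⟨Or.inr ⟨j, hj, hv⟩, hS⟩
          · exact Or.inr ⟨hv, hS⟩
        · rintro (⟨hv | ⟨j, hj, hv⟩, hS⟩ | ⟨hv, hS⟩)
          · exact ⟨Or.inl hv, hS⟩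
          · exact ⟨Or.inr ⟨j, Or.inl hj, hv⟩, hS⟩
          · exact ⟨Or.inr ⟨k, Or.inr rfl, hv⟩, hS⟩
      rw [hU, ← add_assoc]
      refine acyclic_ind_union_clique (fun u v huv => huv.symm) (fun v hv => hv.1 rfl) ?_ ?_ ?_ ?_
        (ih (by omega))
      · obtain ⟨x, hx⟩ := hS
        obtain ⟨v, hv, hv'⟩ := hD k (by omega) x
        exact ⟨v, Finset.mem_filter.2 ⟨hmemD.2 hv', hv ▸ hx⟩⟩
      · intro u hu v hv huv
        have h1 := hmemD.1 (Finset.mem_filter.1 hu).1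
        have h2 := hmemD.1 (Finset.mem_filter.1 hv).1
        exact ⟨huv, Or.inl (h1.1.trans h2.1.symm)⟩
      · intro u hu v hv huv
        obtain ⟨h1, h2⟩ := hDU (Finset.mem_filter.1 hu).1 hv
        exact huv.2.elim h1 h2
      · exact Finset.disjoint_left.2 fun u hu hu' =>
          (hDU (Finset.mem_filter.1 hu).1 hu').1 rfl
  obtain ⟨σ, hσ, himg, hcard⟩ := exists_rainbow (K := fun S => Ind (Meets l ρ) (U q S)) a
    ⟨Finset.empty_subset _, by simp⟩
    (fun S T hST σ hσ => ⟨hσ.1.trans fun v hv => by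
      rw [hmemU] at hv ⊢
      exact ⟨hv.1, hST hv.2⟩, hσ.2⟩)
    (fun S σ hσ => Finset.image_subset_iff.2 fun v hv => (hmemU.1 (hσ.1 hv)).2)
    (fun S => by
      rcases S.eq_empty_or_nonempty with rfl | hS
      · exact acyclic_zero _
      · exact (hacyc S hS q le_rfl).mono (by omega))
  have hinj : Set.InjOn a σ := Finset.card_image_iff.1 (by rw [himg, hcard, Finset.card_univ])
  have hind : ∀ u ∈ σ, ∀ v ∈ σ, l u = l v ∨ ρ u = ρ v → u = v := fun u hu v hv huv =>
    by_contra fun hne => hσ.2 u hu v hv ⟨hne, huv⟩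
  refine ⟨σ.filter (· ∈ W), fun v hv => (Finset.mem_filter.1 hv).2,
    hinj.mono fun v hv => (Finset.mem_filter.1 hv).1, ?_, ?_, ?_⟩
  · exact fun u hu v hv huv => hind u (Finset.mem_filter.1 hu).1 v (Finset.mem_filter.1 hv).1
      (Or.inl huv)
  · exact fun u hu v hv huv => hind u (Finset.mem_filter.1 hu).1 v (Finset.mem_filter.1 hv).1
      (Or.inr huv)
  · rw [← hcard, ← Finset.card_filter_add_card_filter_not (s := σ) (· ∈ W)]
    refine Nat.add_le_add_left ?_ _
    have hsub : (σ.filter (· ∉ W)).image l ⊆ (Finset.range q).image Sum.inr := by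
      intro b hb
      obtain ⟨v, hv, rfl⟩ := Finset.mem_image.1 hb
      rw [Finset.mem_filter] at hv
      obtain ⟨j, hj, hvj⟩ := (hmemU.1 (hσ.1 hv.1)).1.resolve_left hv.2
      exact Finset.mem_image.2 ⟨j, Finset.mem_range.2 hj, (hmemD.1 hvj).1.symm⟩
    have h1 := (Finset.card_le_card hsub).trans Finset.card_image_le
    rw [Finset.card_range, Finset.card_image_of_injOn] at h1
    · exact h1
    · exact fun u hu v hv huv => hind u (Finset.mem_filter.1 hu).1 v (Finset.mem_filter.1 hv).1
        (Or.inl huv)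

/-- A bipartite multigraph of maximum degree `r` has a matching covering a `1/r` fraction of its
edges. -/
lemma card_le_mul_bipNu {l : V → B} {ρ : V → C} {r : ℕ} (hr : 0 < r) {W : Finset V}
    (hd : DegLE l ρ r W) : W.card ≤ r * bipNu l ρ W := by
  have hr' : (0 : ℚ) < r := by exact_mod_cast hr
  have hdeg : ∀ P : Finset V, P.card ≤ r → ∑ _g ∈ P, (1 / r : ℚ) ≤ 1 := by
    intro P hP
    rw [Finset.sum_const, nsmul_eq_mul, mul_one_div, div_le_one hr']
    exact_mod_cast hP
  obtain ⟨M, hMW, hM, hcard⟩ := exists_bipMatching_of_fractional (l := l) (ρ := ρ) (W := W)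
    (fun _ => 1 / r) (fun _ _ => by positivity) (fun b => hdeg _ (hd.1 b))
    (fun c => hdeg _ (hd.2 c))
  rw [Finset.sum_const, nsmul_eq_mul, mul_one_div, div_le_iff₀ hr'] at hcard
  have h1 : W.card ≤ M.card * r := by exact_mod_cast hcard
  have h2 := Nat.mul_le_mul_right r (card_le_bipNu hMW hM)
  linarith

/-- The bound on the largest rainbow matching, for edges labelled by `V`. -/
theorem bound_of_rainbow_le [Fintype V] [Fintype α] {a : V → α} {l : V → B ⊕ ℕ} {ρ : V → C ⊕ ℕ}
    {W : Finset V} {r μ : ℕ} (hr : 2 ≤ r) (hμn : μ < Fintype.card α)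
    (hl : ∀ v ∈ W, ∃ b, l v = Sum.inl b) (hρ : ∀ v ∈ W, ∃ c, ρ v = Sum.inl c)
    (hD : ∀ j < Fintype.card α - μ - 1, ∀ x, ∃ v, a v = x ∧ l v = Sum.inr j ∧ ρ v = Sum.inr j)
    (hd : DegLE l ρ r W) (hcol : ∀ x, (W.filter fun g => a g = x).card = r)
    (hfree : ¬ HasFano a l ρ r W)
    (hμ : ∀ M ⊆ W, Set.InjOn a M → Set.InjOn l M → Set.InjOn ρ M → M.card ≤ μ) :
    (24 * (r : ℚ) ^ 2 - 14 * r - 3) * Fintype.card α ≤ 2 * (24 * (r : ℚ) ^ 2 - 14 * r - 4) * μ := by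
  set n := Fintype.card α with hn
  obtain ⟨S, hS⟩ : ∃ S : Finset α, ¬ Acyclic (Ind (Meets l ρ) (W.filter fun v => a v ∈ S))
      (S.card - (n - μ - 1)) := by
    by_contra hcon
    push Not at hcon
    obtain ⟨M, hMW, hMa, hMl, hMρ, hcard⟩ := exists_rainbow_of_acyclic hl hρ hD hcon
    have := hμ M hMW hMa hMl hMρ
    omega
  set WS := W.filter fun v => a v ∈ S with hWS
  have hWSW : WS ⊆ W := Finset.filter_subset _ _
  have hSn : S.card ≤ n := Finset.card_le_univ S
  have hpos : n - μ - 1 < S.card := by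
    by_contra hcon
    rw [Nat.sub_eq_zero_of_le (by omega)] at hS
    exact hS (acyclic_zero _)
  obtain ⟨d, hdS⟩ : ∃ d, S.card + μ = n + d := ⟨S.card + μ - n, by omega⟩
  rw [show S.card - (n - μ - 1) = d + 1 by omega] at hS
  have hpot : potential l ρ r WS ≤ 12 * r ^ 2 * d := by
    by_contra hcon
    exact hS (acyclic_of_potential WS.card le_rfl (hd.mono hWSW) (not_le.1 hcon))
  have hcolS : ∀ x ∈ S, (WS.filter fun g => a g = x).card = r := by
    intro x hx
    rw [← hcol x, hWS, Finset.filter_filter]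
    congr 1
    exact Finset.filter_congr fun g _ => ⟨fun h => h.2, fun h => ⟨h ▸ hx, h⟩⟩
  have hWScard : WS.card = S.card * r := by
    have hmaps : ∀ v ∈ WS, a v ∈ S := fun v hv => (Finset.mem_filter.1 hv).2
    rw [Finset.card_eq_sum_card_fiberwise hmaps, Finset.sum_congr rfl hcolS, Finset.sum_const,
      smul_eq_mul]
  have hnu : S.card ≤ bipNu l ρ WS := by
    have h1 := card_le_mul_bipNu (by omega : 0 < r) (hd.mono hWSW)
    rw [hWScard, mul_comm] at h1
    exact Nat.le_of_mul_le_mul_left h1 (by omega)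
  have hN := card_fourCycles_le (μ := μ) hr (hd.mono hWSW)
    (fun g hg => hcolS _ (Finset.mem_filter.1 hg).2)
    (fun ⟨s, x₁, y₁, x₂, y₂, x₃, y₃, h0, h1, h2, h3, h4, h5, h6, h7⟩ => hfree
      ⟨s, x₁, y₁, x₂, y₂, x₃, y₃, h0, h1, h2, h3,
        h4.trans (Finset.card_le_card (Finset.filter_subset_filter _ hWSW)),
        h5.trans (Finset.card_le_card (Finset.filter_subset_filter _ hWSW)),
        h6.trans (Finset.card_le_card (Finset.filter_subset_filter _ hWSW)),
        h7.trans (Finset.card_le_card (Finset.filter_subset_filter _ hWSW))⟩)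
    (fun M hM => hμ M (hM.trans hWSW))
  set N := (fourCycles l ρ r WS).card with hNdef
  have hpot' : (4 * r ^ 2 * S.card + (2 * r + 1) * (S.card * r) - 2 * r * N : ℚ)
      ≤ 12 * r ^ 2 * d := by
    have h1 : (4 * r ^ 2 * S.card + (2 * r + 1) * (S.card * r) - 2 * r * N : ℤ)
        ≤ 12 * r ^ 2 * d := by
      refine le_trans ?_ hpot
      rw [potential, hWScard]
      push_cast
      have : (S.card : ℤ) ≤ bipNu l ρ WS := by exact_mod_cast hnu
      nlinarith [mul_le_mul_of_nonneg_left this (by positivity : (0 : ℤ) ≤ 4 * r ^ 2)]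
    exact_mod_cast h1
  have hr' : (2 : ℚ) ≤ r := by exact_mod_cast hr
  have hdS' : (S.card : ℚ) + μ = n + d := by exact_mod_cast hdS
  have hSn' : (S.card : ℚ) ≤ n := by exact_mod_cast hSn
  have hdiv : (6 * r + 1 : ℚ) * S.card - 2 * N ≤ 12 * r * d := by
    refine le_of_mul_le_mul_left ?_ (by linarith : (0 : ℚ) < r)
    linarith
  have hlow : (6 * r + 1 : ℚ) * n - 12 * r * μ ≤ 2 * N := by
    have hd' : (d : ℚ) = S.card + μ - n := by linarith
    rw [hd'] at hdiv
    nlinarith [mul_nonneg (by linarith : (0 : ℚ) ≤ 6 * r - 1) (sub_nonneg.2 hSn')]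
  have h3 := mul_le_mul_of_nonneg_left hlow (by linarith : (0 : ℚ) ≤ 4 * r - 3)
  linarith

end Deficient

section Hypergraph

variable {α β γ : Type*}

lemma IsMatching.card_le_matchNum [DecidableEq α] [DecidableEq β] [DecidableEq γ]
    {H : Multiset (α × β × γ)} {M : Finset (α × β × γ)} (hM : IsMatching H M) :
    M.card ≤ matchNum H := by
  refine le_csSup ⟨H.toFinset.card, ?_⟩ ⟨M, hM, rfl⟩
  rintro k ⟨M', hM', rfl⟩
  exact Finset.card_le_card fun e he => Multiset.mem_toFinset.2 (hM'.1 e he)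

lemma nsmul_fanoEdges_le [DecidableEq α] [DecidableEq β] [DecidableEq γ]
    {H : Multiset (α × β × γ)} {s : ℕ} {x₁ y₁ : α} {x₂ y₂ : β} {x₃ y₃ : γ} (hα : x₁ ≠ y₁)
    (hβ : x₂ ≠ y₂) (h1 : s ≤ H.count (x₁, x₂, x₃))
    (h2 : s ≤ H.count (x₁, y₂, y₃)) (h3 : s ≤ H.count (y₁, x₂, y₃))
    (h4 : s ≤ H.count (y₁, y₂, x₃)) : s • fanoEdges x₁ y₁ x₂ y₂ x₃ y₃ ≤ H := by
  have hnd : (fanoEdges x₁ y₁ x₂ y₂ x₃ y₃).Nodup := by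
    simp [fanoEdges, hα, hβ]
  refine Multiset.le_iff_count.2 fun e => ?_
  rw [Multiset.count_nsmul]
  by_cases he : e ∈ fanoEdges x₁ y₁ x₂ y₂ x₃ y₃
  · rw [Multiset.count_eq_one_of_mem hnd he, mul_one]
    simp only [fanoEdges, Multiset.insert_eq_cons, Multiset.mem_cons, Multiset.mem_singleton] at he
    rcases he with rfl | rfl | rfl | rfl <;> assumption
  · simp [Multiset.count_eq_zero_of_notMem he]

lemma card_filter_eq_card_filter_map {X E : Type*} [Fintype E] {H : Multiset X} {ε : E → X}
    (hε : Finset.univ.val.map ε = H) (p : X → Prop) [DecidablePred p] :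
    (Finset.univ.filter fun e => p (ε e)).card = (H.filter p).card := by
  rw [← hε, Multiset.filter_map, Multiset.card_map]
  rfl

/-- The bound with the constant that the argument gives. -/
theorem bound_matchNum [Fintype α] [DecidableEq α] [DecidableEq β] [DecidableEq γ]
    (H : Multiset (α × β × γ)) {r : ℕ} (hr : 2 ≤ r) (hdA : ∀ a : α, r ≤ deg1 H a)
    (hdB : ∀ b : β, deg2 H b ≤ r) (hdC : ∀ c : γ, deg3 H c ≤ r)
    (hfree : ¬ ∃ (s : ℕ) (x1 y1 : α) (x2 y2 : β) (x3 y3 : γ),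
      2 * s = r ∧ IsFanoCopy H s x1 y1 x2 y2 x3 y3) (hμ : matchNum H < Fintype.card α) :
    (24 * (r : ℚ) ^ 2 - 14 * r - 3) * Fintype.card α
      ≤ 2 * (24 * (r : ℚ) ^ 2 - 14 * r - 4) * matchNum H := by
  classical
  let ε : H → α × β × γ := fun e => e.1
  have hε : Finset.univ.val.map ε = H := Multiset.map_univ_coe H
  have hεH : ∀ e, ε e ∈ H := fun e => Multiset.coe_mem
  have hchoose : ∀ x, ∃ T ⊆ Finset.univ.filter fun e => (ε e).1 = x, T.card = r := fun x =>
    Finset.exists_subset_card_eq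
      ((hdA x).trans_eq (card_filter_eq_card_filter_map hε fun e => e.1 = x).symm)
  choose T hT hTcard using hchoose
  let q := Fintype.card α - matchNum H - 1
  let V := H ⊕ α × Fin q
  let a : V → α := Sum.elim (fun e => (ε e).1) Prod.fst
  let l : V → β ⊕ ℕ := Sum.map (fun e => (ε e).2.1) fun x => x.2.val
  let ρ : V → γ ⊕ ℕ := Sum.map (fun e => (ε e).2.2) fun x => x.2.val
  let W : Finset V := (Finset.univ.filter fun e => e ∈ T (ε e).1).map Function.Embedding.inl
  have hmemW : ∀ {v}, v ∈ W → ∃ e, v = Sum.inl e := by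
    intro v hv
    obtain ⟨e, -, rfl⟩ := Finset.mem_map.1 hv
    exact ⟨e, rfl⟩
  have hcardW : ∀ (p : V → Prop) [DecidablePred p],
      (W.filter p).card ≤ (Finset.univ.filter fun e => p (Sum.inl e)).card := by
    intro p _
    rw [Finset.filter_map, Finset.card_map, Finset.filter_filter]
    exact Finset.card_le_card fun e he => by
      simp only [Finset.mem_filter, Finset.mem_univ, true_and] at he ⊢
      exact he.2
  have hpar : ∀ x y z, 0 < (parallel a l ρ W x y z).card → ∃ y' z', y = Sum.inl y' ∧
      z = Sum.inl z' ∧ (parallel a l ρ W x y z).card ≤ H.count (x, y', z') := by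
    intro x y z hpos
    obtain ⟨v, hv⟩ := Finset.card_pos.1 hpos
    obtain ⟨hvW, -, hy, hz⟩ := Finset.mem_filter.1 hv
    obtain ⟨e, rfl⟩ := hmemW hvW
    refine ⟨_, _, hy.symm, hz.symm, (hcardW _).trans ?_⟩
    rw [Multiset.count_eq_card_filter_eq, ← card_filter_eq_card_filter_map hε]
    refine Finset.card_le_card fun e' he' => ?_
    simp only [Finset.mem_filter, Finset.mem_univ, true_and] at he' ⊢
    obtain ⟨h1, h2, h3⟩ := he'
    rw [← hy] at h2
    rw [← hz] at h3
    exact Prod.ext h1.symm (Prod.ext (Sum.inl_injective h2).symm (Sum.inl_injective h3).symm)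
  refine bound_of_rainbow_le (V := V) (a := a) (l := l) (ρ := ρ) (W := W) hr hμ ?_ ?_ ?_ ⟨?_, ?_⟩
    ?_ ?_ ?_
  · intro v hv
    obtain ⟨e, rfl⟩ := hmemW hv
    exact ⟨_, rfl⟩
  · intro v hv
    obtain ⟨e, rfl⟩ := hmemW hv
    exact ⟨_, rfl⟩
  · exact fun j hj x => ⟨Sum.inr (x, ⟨j, hj⟩), rfl, rfl, rfl⟩
  · rintro (b | j)
    · refine (hcardW _).trans ((le_of_eq ?_).trans (hdB b))
      rw [deg2, ← card_filter_eq_card_filter_map hε]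
      simp [l]
    · exact (hcardW _).trans (by simp [l])
  · rintro (c | j)
    · refine (hcardW _).trans ((le_of_eq ?_).trans (hdC c))
      rw [deg3, ← card_filter_eq_card_filter_map hε]
      simp [ρ]
    · exact (hcardW _).trans (by simp [ρ])
  · intro x
    rw [Finset.filter_map, Finset.card_map, ← hTcard x]
    congr 1
    ext e
    simp only [Finset.mem_filter, Finset.mem_univ, true_and]
    constructor
    · rintro ⟨h1, rfl⟩
      exact h1
    · intro h
      have h1 : (ε e).1 = x := (Finset.mem_filter.1 (hT x h)).2
      exact ⟨h1.symm ▸ h, h1⟩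
  · rintro ⟨s, x₁, y₁, x₂, y₂, x₃, y₃, hs, hα, hβ, hγ, h1, h2, h3, h4⟩
    have hs1 : 0 < s := by omega
    obtain ⟨x₂, x₃, rfl, rfl, c1⟩ := hpar _ _ _ (hs1.trans_le h1)
    obtain ⟨y₂, y₃, rfl, rfl, c2⟩ := hpar _ _ _ (hs1.trans_le h2)
    obtain ⟨_, _, e3, e3', c3⟩ := hpar _ _ _ (hs1.trans_le h3)
    obtain ⟨_, _, e4, e4', c4⟩ := hpar _ _ _ (hs1.trans_le h4)
    obtain rfl := Sum.inl_injective e3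
    obtain rfl := Sum.inl_injective e3'
    obtain rfl := Sum.inl_injective e4
    obtain rfl := Sum.inl_injective e4'
    have hβ' := fun h => hβ (congrArg Sum.inl h)
    exact hfree ⟨s, x₁, y₁, _, _, _, _, hs, hα, hβ', fun h => hγ (congrArg Sum.inl h),
      nsmul_fanoEdges_le hα hβ' (h1.trans c1) (h2.trans c2) (h3.trans c3) (h4.trans c4)⟩
  · intro M hMW hMa hMl hMρ
    have hmem : ∀ v ∈ M, ∃ e, v = Sum.inl e := fun v hv => hmemW (hMW hv)
    let M' : Finset (α × β × γ) := (Finset.univ.filter fun e => Sum.inl e ∈ M).image ε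
    have hM' : IsMatching H M' := by
      refine ⟨fun f hf => ?_, fun f hf f' hf' hne => ?_⟩
      · obtain ⟨e, -, rfl⟩ := Finset.mem_image.1 hf
        exact hεH e
      · obtain ⟨e, he, rfl⟩ := Finset.mem_image.1 hf
        obtain ⟨e', he', rfl⟩ := Finset.mem_image.1 hf'
        have he := (Finset.mem_filter.1 he).2
        have he' := (Finset.mem_filter.1 he').2
        have hsep : (Sum.inl e : V) = Sum.inl e' → False := fun h =>
          hne (congrArg ε (Sum.inl_injective h))
        exact ⟨fun h => hsep (hMa he he' h), fun h => hsep (hMl he he' (congrArg Sum.inl h)),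
          fun h => hsep (hMρ he he' (congrArg Sum.inl h))⟩
    refine le_trans (le_of_eq ?_) hM'.card_le_matchNum
    rw [Finset.card_image_of_injOn]
    · refine (congrArg Finset.card (Finset.ext fun v => ?_)).trans
        (Finset.card_map Function.Embedding.inl)
      simp only [Finset.mem_map, Finset.mem_filter, Finset.mem_univ, true_and]
      constructor
      · intro hv
        obtain ⟨e, rfl⟩ := hmem v hv
        exact ⟨e, hv, rfl⟩
      · rintro ⟨e, he, rfl⟩
        exact he
    · intro e he e' he' h
      have he := (Finset.mem_filter.1 he).2
      have he' := (Finset.mem_filter.1 he').2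
      exact Sum.inl_injective (hMa he he' (congrArg Prod.fst h))

end Hypergraph

/-- If every vertex of the class `α` (of size `n`) has degree at least `r ≥ 2`, every
vertex of the other two classes has degree at most `r`, and `H` contains no subhypergraph
isomorphic to `(r/2) • F`, then `ν(H) ≥ (1 + 1/(72r² − 150r + 77))·n/2`. -/
theorem stmt9 {α β γ : Type*} [Fintype α]
    [DecidableEq α] [DecidableEq β] [DecidableEq γ]
    (H : Multiset (α × β × γ)) (n r : ℕ) (hr : 2 ≤ r)
    (hA : Fintype.card α = n)
    (hdA : ∀ a : α, r ≤ deg1 H a)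
    (hdB : ∀ b : β, deg2 H b ≤ r)
    (hdC : ∀ c : γ, deg3 H c ≤ r)
    (hfree : ¬ ∃ (s : ℕ) (x1 y1 : α) (x2 y2 : β) (x3 y3 : γ),
      2 * s = r ∧ IsFanoCopy H s x1 y1 x2 y2 x3 y3) :
    (1 + 1 / (72 * (r : ℝ) ^ 2 - 150 * r + 77)) * n / 2 ≤ (matchNum H : ℝ) := by
  have hr' : (2 : ℝ) ≤ r := by exact_mod_cast hr
  have hden : (0 : ℝ) < 72 * (r : ℝ) ^ 2 - 150 * r + 77 := by nlinarith
  have key : (24 * (r : ℝ) ^ 2 - 14 * r - 3) * n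
      ≤ 2 * (24 * (r : ℝ) ^ 2 - 14 * r - 4) * matchNum H := by
    rcases lt_or_ge (matchNum H) (Fintype.card α) with hμ | hμ
    · have h := bound_matchNum H hr hdA hdB hdC hfree hμ
      rw [hA] at h
      exact_mod_cast (Rat.cast_le (K := ℝ)).2 h
    · have h : (n : ℝ) ≤ matchNum H := by exact_mod_cast hA ▸ hμ
      have h0 : (0 : ℝ) ≤ n := Nat.cast_nonneg n
      have hc : (0 : ℝ) ≤ 24 * (r : ℝ) ^ 2 - 14 * r - 5 := by nlinarith
      have h1 := mul_le_mul_of_nonneg_left h (by linarith :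
        (0 : ℝ) ≤ 2 * (24 * (r : ℝ) ^ 2 - 14 * r - 4))
      have h2 := mul_nonneg hc h0
      linarith
  have hpos : (0 : ℝ) < 24 * (r : ℝ) ^ 2 - 14 * r - 4 := by nlinarith
  have hfrac : 1 / (72 * (r : ℝ) ^ 2 - 150 * r + 77) ≤ 1 / (24 * (r : ℝ) ^ 2 - 14 * r - 4) :=
    one_div_le_one_div_of_le hpos (by nlinarith)
  calc (1 + 1 / (72 * (r : ℝ) ^ 2 - 150 * r + 77)) * n / 2
      ≤ (1 + 1 / (24 * (r : ℝ) ^ 2 - 14 * r - 4)) * n / 2 := by gcongr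
    _ = (24 * (r : ℝ) ^ 2 - 14 * r - 3) * n / (2 * (24 * (r : ℝ) ^ 2 - 14 * r - 4)) := by
        rw [show 24 * (r : ℝ) ^ 2 - 14 * r - 3 = (24 * (r : ℝ) ^ 2 - 14 * r - 4) + 1 by ring]
        generalize 24 * (r : ℝ) ^ 2 - 14 * r - 4 = D at hpos
        field_simp
    _ ≤ matchNum H := by
        rw [div_le_iff₀ (by linarith)]
        linarith

end Tripartite
end

section
/- For every even r ≥ 2 there exists an r-regular 3-partite 3-graph H with n vertices in each vertex class (for some n), not containing a copy of (r/2)·F, such that ν(H) ≤ (1 + 1/(r + 1))·n/2. (Such an H exists with n = r + 1 and ν(H) ≤ r/2 + 1.) -/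
namespace Tripartite

section Construction

variable {ι V : Type*} [Fintype ι]

/-- The edges attached to an index `i`: a truncated Fano plane on `X i`, `Y i` with all
multiplicities `s`, except that one copy of `(X i, X i, X i)` is replaced by three edges joining
`X i` to the hub `z`. -/
def gadget (s : ℕ) (X Y : ι → V) (z : V) (i : ι) : Multiset (V × V × V) :=
  (s - 1) • {(X i, X i, X i)} + s • {(X i, Y i, Y i)} + s • {(Y i, X i, Y i)} +
    s • {(Y i, Y i, X i)} + {(X i, z, z)} + {(z, X i, z)} + {(z, z, X i)}

/-- The union of the gadgets of all indices, sharing the hub `z` in each class. -/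
def hubGraph (s : ℕ) (X Y : ι → V) (z : V) : Multiset (V × V × V) :=
  ∑ i, gadget s X Y z i

theorem mem_hubGraph_of_mem_gadget {s : ℕ} {X Y : ι → V} {z : V} {i : ι} {e : V × V × V}
    (h : e ∈ gadget s X Y z i) : e ∈ hubGraph s X Y z :=
  Multiset.mem_sum.2 ⟨i, Finset.mem_univ i, h⟩

theorem card_filter_hubGraph (s : ℕ) (X Y : ι → V) (z : V) (p : V × V × V → Prop)
    [DecidablePred p] :
    ((hubGraph s X Y z).filter p).card = ∑ i, ((gadget s X Y z i).filter p).card := by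
  simp only [← Multiset.countP_eq_card_filter]
  exact map_sum (Multiset.countPAddMonoidHom p) _ _

theorem countP_singleton {α : Type*} (p : α → Prop) [DecidablePred p] (a : α) :
    Multiset.countP p {a} = if p a then 1 else 0 := by
  simp [← Multiset.cons_zero, Multiset.countP_cons]

theorem isRegular_hubGraph [DecidableEq V] {s : ℕ} (hs : 1 ≤ s) (hι : Fintype.card ι = s)
    {X Y : ι → V} {z : V} (hX : X.Injective) (hY : Y.Injective) (hXY : ∀ i j, X i ≠ Y j)
    (hXz : ∀ i, X i ≠ z) (hYz : ∀ i, Y i ≠ z)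
    (hV : ∀ v, v = z ∨ (∃ i, v = X i) ∨ ∃ i, v = Y i) :
    IsRegular (hubGraph s X Y z) (s + s) := by
  classical
  have hYX : ∀ i j, Y i ≠ X j := fun i j => (hXY j i).symm
  have hzX : ∀ i, z ≠ X i := fun i => (hXz i).symm
  have hzY : ∀ i, z ≠ Y i := fun i => (hYz i).symm
  refine ⟨fun v => ?_, fun v => ?_, fun v => ?_⟩ <;>
    simp only [deg1, deg2, deg3, card_filter_hubGraph, gadget] <;>
    simp only [← Multiset.countP_eq_card_filter, Multiset.countP_add, Multiset.countP_nsmul,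
      countP_singleton, Finset.sum_add_distrib] <;>
    rcases hV v with rfl | ⟨k, rfl⟩ | ⟨k, rfl⟩ <;>
    simp [hX.eq_iff, hY.eq_iff, *] <;> omega

theorem exists_mem_of_mem_hubGraph {s : ℕ} {X Y : ι → V} {z : V} {e : V × V × V}
    (h : e ∈ hubGraph s X Y z) :
    ∃ i, e ∈ ({(X i, X i, X i), (X i, Y i, Y i), (Y i, X i, Y i), (Y i, Y i, X i)} :
        Set (V × V × V)) ∨
      e ∈ ({(X i, z, z), (z, X i, z), (z, z, X i)} : Set (V × V × V)) := by
  obtain ⟨i, -, hi⟩ := Multiset.mem_sum.1 h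
  refine ⟨i, ?_⟩
  simp only [gadget, Multiset.mem_add, Multiset.mem_singleton] at hi
  have key : ∀ (n : ℕ) (a : V × V × V), e ∈ n • ({a} : Multiset (V × V × V)) → e = a :=
    fun n a h => Multiset.mem_singleton.1 (Multiset.mem_of_mem_nsmul h)
  simp only [Set.mem_insert_iff, Set.mem_singleton_iff]
  rcases hi with (((((h | h) | h) | h) | h) | h) | h <;> first
    | (have := key _ _ h; tauto)
    | tauto

/-- The `|ι|` truncated Fano planes and the set of hub edges are intersecting families, so a
matching has at most `|ι| + 1` edges. -/
theorem matchNum_hubGraph_le (s : ℕ) (X Y : ι → V) (z : V) :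
    matchNum (hubGraph s X Y z) ≤ Fintype.card ι + 1 := by
  classical
  refine csSup_le ⟨0, ∅, by simp [IsMatching], rfl⟩ ?_
  rintro _ ⟨M, ⟨hM, hdisj⟩, rfl⟩
  let Q : Option ι → V × V × V → Prop := fun o e => o.elim
    (∃ i, e ∈ ({(X i, z, z), (z, X i, z), (z, z, X i)} : Set (V × V × V)))
    (fun i => e ∈ ({(X i, X i, X i), (X i, Y i, Y i), (Y i, X i, Y i), (Y i, Y i, X i)} :
        Set (V × V × V)))
  have hQ : ∀ e ∈ M, ∃ o, Q o e := fun e he => by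
    obtain ⟨i, h | h⟩ := exists_mem_of_mem_hubGraph (hM e he)
    exacts [⟨some i, h⟩, ⟨none, i, h⟩]
  have hmeet : ∀ o e f, Q o e → Q o f → e.1 = f.1 ∨ e.2.1 = f.2.1 ∨ e.2.2 = f.2.2 := by
    rintro (_ | i) e f he hf
    · obtain ⟨i, he⟩ := he
      obtain ⟨j, hf⟩ := hf
      rcases he with rfl | rfl | rfl <;> rcases hf with rfl | rfl | rfl <;> simp
    · rcases he with rfl | rfl | rfl | rfl <;> rcases hf with rfl | rfl | rfl | rfl <;> simp
  choose! g hg using hQ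
  rw [← Fintype.card_option, ← Finset.card_univ]
  refine Finset.card_le_card_of_injOn g (by simp) fun e he f hf hef => ?_
  by_contra hne
  have h₁ := hdisj e he f hf hne
  have h₂ := hmeet (g e) e f (hg e he) (hef ▸ hg f hf)
  tauto

/-- If a submultiset of `H` has as many elements satisfying `p` as `H`, it contains all elements
of `H` satisfying `p`. -/
theorem mem_of_card_filter_eq {α : Type*} {G H : Multiset α} (hGH : G ≤ H) (p : α → Prop)
    [DecidablePred p] (hcard : (H.filter p).card = (G.filter p).card) {e : α} (he : e ∈ H)
    (hp : p e) : e ∈ G := by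
  have h := Multiset.eq_of_le_of_card_le (Multiset.filter_le_filter p hGH) hcard.le
  have : e ∈ G.filter p := h ▸ Multiset.mem_filter.2 ⟨he, hp⟩
  exact (Multiset.mem_filter.1 this).1

/-- In a `2s`-regular hypergraph, a copy of `s • F` is closed: an edge meeting it in one class
meets it in every class. -/
theorem IsFanoCopy.closed [DecidableEq V] {H : Multiset (V × V × V)} {s : ℕ}
    {x₁ y₁ x₂ y₂ x₃ y₃ : V} (hF : IsFanoCopy H s x₁ y₁ x₂ y₂ x₃ y₃) (hH : IsRegular H (s + s))
    {a b c : V} (he : (a, b, c) ∈ H) :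
    ((a = x₁ ∨ a = y₁) ↔ (b = x₂ ∨ b = y₂)) ∧ ((b = x₂ ∨ b = y₂) ↔ (c = x₃ ∨ c = y₃)) := by
  obtain ⟨h₁, h₂, h₃, hle⟩ := hF
  obtain ⟨d₁, d₂, d₃⟩ := hH
  have main : ∀ (p : V × V × V → Prop) [DecidablePred p], (H.filter p).card = s + s →
      (fanoEdges x₁ y₁ x₂ y₂ x₃ y₃).countP p = 2 → p (a, b, c) →
      (a = x₁ ∨ a = y₁) ∧ (b = x₂ ∨ b = y₂) ∧ (c = x₃ ∨ c = y₃) := by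
    intro p _ hp hF hpe
    have hmem := mem_of_card_filter_eq hle p (by
      rw [hp, ← Multiset.countP_eq_card_filter, Multiset.countP_nsmul, hF]; omega) he hpe
    have hmem := Multiset.mem_of_mem_nsmul hmem
    simp only [fanoEdges, Multiset.insert_eq_cons, Multiset.mem_cons, Multiset.mem_singleton,
      Prod.mk.injEq] at hmem
    rcases hmem with h | h | h | h <;> simp [h]
  have m₁ : (a = x₁ ∨ a = y₁) → _ := fun h => main (fun e => e.1 = a) (d₁ a)
    (by rcases h with rfl | rfl <;>
      simp [fanoEdges, Multiset.insert_eq_cons,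
        ← Multiset.cons_zero, h₁, h₁.symm]) rfl
  have m₂ : (b = x₂ ∨ b = y₂) → _ := fun h => main (fun e => e.2.1 = b) (d₂ b)
    (by rcases h with rfl | rfl <;>
      simp [fanoEdges, Multiset.insert_eq_cons,
        ← Multiset.cons_zero, h₂, h₂.symm]) rfl
  have m₃ : (c = x₃ ∨ c = y₃) → _ := fun h => main (fun e => e.2.2 = c) (d₃ c)
    (by rcases h with rfl | rfl <;>
      simp [fanoEdges, Multiset.insert_eq_cons,
        ← Multiset.cons_zero, h₃, h₃.symm]) rfl
  exact ⟨⟨fun h => (m₁ h).2.1, fun h => (m₂ h).1⟩, ⟨fun h => (m₂ h).2.2, fun h => (m₃ h).2.1⟩⟩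

theorem not_isFanoCopy_hubGraph [DecidableEq V] {s : ℕ} (hs : 1 ≤ s) {X Y : ι → V} {z : V}
    (hXY : ∀ i j, X i ≠ Y j) (hXz : ∀ i, X i ≠ z) (hYz : ∀ i, Y i ≠ z)
    (hV : ∀ v, v = z ∨ (∃ i, v = X i) ∨ ∃ i, v = Y i) [Nonempty ι]
    (hreg : IsRegular (hubGraph s X Y z) (s + s)) (x₁ y₁ x₂ y₂ x₃ y₃ : V) :
    ¬ IsFanoCopy (hubGraph s X Y z) s x₁ y₁ x₂ y₂ x₃ y₃ := by
  intro hF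
  have hs0 : s ≠ 0 := by omega
  have key : ∀ i, ((X i = x₁ ∨ X i = y₁) ↔ (z = x₁ ∨ z = y₁)) ∧
      ((Y i = x₁ ∨ Y i = y₁) ↔ (z = x₁ ∨ z = y₁)) := by
    intro i
    have e₁ : (X i, Y i, Y i) ∈ gadget s X Y z i := by simp [gadget, Multiset.mem_nsmul, hs0]
    have e₂ : (Y i, X i, Y i) ∈ gadget s X Y z i := by simp [gadget, Multiset.mem_nsmul, hs0]
    have e₃ : (X i, z, z) ∈ gadget s X Y z i := by simp [gadget]
    have e₄ : (z, X i, z) ∈ gadget s X Y z i := by simp [gadget]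
    have c₁ := hF.closed hreg (mem_hubGraph_of_mem_gadget e₁)
    have c₂ := hF.closed hreg (mem_hubGraph_of_mem_gadget e₂)
    have c₃ := hF.closed hreg (mem_hubGraph_of_mem_gadget e₃)
    have c₄ := hF.closed hreg (mem_hubGraph_of_mem_gadget e₄)
    rw [c₃.1, c₃.2, c₂.1, c₄.1, c₄.2]
    exact ⟨Iff.rfl, Iff.rfl⟩
  have hz : z = x₁ ∨ z = y₁ := by
    rcases hV x₁ with h | ⟨i, h⟩ | ⟨i, h⟩
    · exact Or.inl h.symm
    · exact (key i).1.1 (Or.inl h.symm)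
    · exact (key i).2.1 (Or.inl h.symm)
  obtain ⟨i⟩ := ‹Nonempty ι›
  have hXi := (key i).1.2 hz
  have hYi := (key i).2.2 hz
  have n₁ := hXY i i
  have n₂ := hXz i
  have n₃ := hYz i
  grind

end Construction

/-- For every even `r ≥ 2` there is an `r`-regular 3-partite 3-graph `H` with `n` vertices
in each class (namely `n = r + 1`), containing no copy of `(r/2) • F`, with
`ν(H) ≤ r/2 + 1`, so that `ν(H) ≤ (1 + 1/(r+1))·n/2`. -/
theorem stmt10 (r : ℕ) (hr : 2 ≤ r) (hre : Even r) :
    ∃ (n : ℕ) (H : Multiset (Fin n × Fin n × Fin n)),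
      n = r + 1 ∧
      IsRegular H r ∧
      (¬ ∃ (s : ℕ) (x1 y1 x2 y2 x3 y3 : Fin n),
        2 * s = r ∧ IsFanoCopy H s x1 y1 x2 y2 x3 y3) ∧
      matchNum H ≤ r / 2 + 1 ∧
      (matchNum H : ℝ) ≤ (1 + 1 / ((r : ℝ) + 1)) * n / 2 := by
  obtain ⟨s, rfl⟩ := hre
  have hs : 1 ≤ s := by omega
  let X : Fin s → Fin (s + s + 1) := fun i => ⟨i, by omega⟩
  let Y : Fin s → Fin (s + s + 1) := fun i => ⟨s + i, by omega⟩
  let z : Fin (s + s + 1) := ⟨s + s, by omega⟩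
  have hX : X.Injective := fun i j h => by simpa [X, Fin.ext_iff] using h
  have hY : Y.Injective := fun i j h => by simpa [Y, Fin.ext_iff] using h
  have hXY : ∀ i j, X i ≠ Y j := fun i j h => by
    simp only [X, Y, Fin.ext_iff] at h; omega
  have hXz : ∀ i, X i ≠ z := fun i h => by simp only [X, z, Fin.ext_iff] at h; omega
  have hYz : ∀ i, Y i ≠ z := fun i h => by simp only [Y, z, Fin.ext_iff] at h; omega
  have hV : ∀ v, v = z ∨ (∃ i, v = X i) ∨ ∃ i, v = Y i := by
    intro v
    rcases lt_or_ge v.val s with h | h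
    · exact Or.inr (Or.inl ⟨⟨v, h⟩, rfl⟩)
    · rcases lt_or_ge v.val (s + s) with h' | h'
      · exact Or.inr (Or.inr ⟨⟨v - s, by omega⟩, by simp only [Y, Fin.ext_iff]; omega⟩)
      · exact Or.inl (by simp only [z, Fin.ext_iff]; omega)
  have hreg := isRegular_hubGraph hs (Fintype.card_fin s) hX hY hXY hXz hYz hV
  have hν : matchNum (hubGraph s X Y z) ≤ s + 1 := by
    simpa using matchNum_hubGraph_le s X Y z
  refine ⟨s + s + 1, hubGraph s X Y z, rfl, hreg, ?_, by omega, ?_⟩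
  · rintro ⟨t, x₁, y₁, x₂, y₂, x₃, y₃, ht, hF⟩
    obtain rfl : t = s := by omega
    have : Nonempty (Fin t) := ⟨⟨0, hs⟩⟩
    exact not_isFanoCopy_hubGraph hs hXY hXz hYz hV hreg _ _ _ _ _ _ hF
  · have hν' : (matchNum (hubGraph s X Y z) : ℝ) ≤ s + 1 := by exact_mod_cast hν
    refine hν'.trans (le_of_eq ?_)
    have : (s : ℝ) + s + 1 ≠ 0 := by positivity
    push_cast
    field_simp
    ring

end Tripartite
end

section
/- For every odd r ≥ 3 there exists an r-regular 3-partite 3-graph H with n vertices in each vertex class (for some n) such that ν(H) ≤ (1 + 1/r)·n/2. (Such an H exists with n = r and ν(H) ≤ (r − 1)/2 + 1.) -/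
namespace Tripartite

section Matching

variable {α β γ ι : Type*}

/-- Colour the edges so that edges of the same colour always meet. Then a matching uses each
colour at most once. -/
theorem matchNum_le_card_of_coloring [Fintype ι] (H : Multiset (α × β × γ))
    (color : α × β × γ → ι)
    (h : ∀ e ∈ H, ∀ f ∈ H, color e = color f → e.1 = f.1 ∨ e.2.1 = f.2.1 ∨ e.2.2 = f.2.2) :
    matchNum H ≤ Fintype.card ι := by
  refine csSup_le' ?_
  rintro _ ⟨M, ⟨hMH, hM⟩, rfl⟩
  refine Finset.card_le_card_of_injOn color (fun _ _ => Finset.mem_univ _) ?_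
  intro e he f hf hef
  by_contra hne
  obtain ⟨h1, h2, h3⟩ := hM e he f hf hne
  rcases h e (hMH e he) f (hMH f hf) hef with h' | h' | h'
  exacts [h1 h', h2 h', h3 h']

end Matching

section Transport

variable {α α' : Type*}

/-- Relabel the vertices of all three classes along `f`. -/
def relabel (f : α ≃ α') (H : Multiset (α × α × α)) : Multiset (α' × α' × α') :=
  H.map (Prod.map f (Prod.map f f))

theorem IsRegular.relabel [DecidableEq α] [DecidableEq α'] (f : α ≃ α')
    {H : Multiset (α × α × α)} {r : ℕ} (h : IsRegular H r) : IsRegular (relabel f H) r := by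
  obtain ⟨h1, h2, h3⟩ := h
  refine ⟨fun a => ?_, fun a => ?_, fun a => ?_⟩
  · rw [← h1 (f.symm a)]
    simp [deg1, Tripartite.relabel, Multiset.filter_map, Equiv.eq_symm_apply]
  · rw [← h2 (f.symm a)]
    simp [deg2, Tripartite.relabel, Multiset.filter_map, Equiv.eq_symm_apply]
  · rw [← h3 (f.symm a)]
    simp [deg3, Tripartite.relabel, Multiset.filter_map, Equiv.eq_symm_apply]

theorem matchNum_relabel_le_card_of_coloring {ι : Type*} [Fintype ι] (f : α ≃ α')
    (H : Multiset (α × α × α)) (color : α × α × α → ι)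
    (h : ∀ e ∈ H, ∀ g ∈ H, color e = color g → e.1 = g.1 ∨ e.2.1 = g.2.1 ∨ e.2.2 = g.2.2) :
    matchNum (relabel f H) ≤ Fintype.card ι := by
  refine matchNum_le_card_of_coloring _ (color ∘ Prod.map f.symm (Prod.map f.symm f.symm)) ?_
  simp only [relabel, Multiset.mem_map]
  rintro _ ⟨e, he, rfl⟩ _ ⟨g, hg, rfl⟩ heg
  simpa using h e he g hg (by simpa [Prod.map] using heg)

end Transport

section Degree

variable {α β γ ι : Type*}

theorem deg1_add [DecidableEq α] (H K : Multiset (α × β × γ)) (a : α) :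
    deg1 (H + K) a = deg1 H a + deg1 K a := by simp [deg1]

theorem deg2_add [DecidableEq β] (H K : Multiset (α × β × γ)) (b : β) :
    deg2 (H + K) b = deg2 H b + deg2 K b := by simp [deg2]

theorem deg3_add [DecidableEq γ] (H K : Multiset (α × β × γ)) (c : γ) :
    deg3 (H + K) c = deg3 H c + deg3 K c := by simp [deg3]

theorem deg1_sum [DecidableEq α] (s : Finset ι) (H : ι → Multiset (α × β × γ)) (a : α) :
    deg1 (∑ i ∈ s, H i) a = ∑ i ∈ s, deg1 (H i) a :=
  map_sum (⟨⟨fun K => deg1 K a, rfl⟩, fun H K => deg1_add H K a⟩ : _ →+ ℕ) H s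

theorem deg2_sum [DecidableEq β] (s : Finset ι) (H : ι → Multiset (α × β × γ)) (b : β) :
    deg2 (∑ i ∈ s, H i) b = ∑ i ∈ s, deg2 (H i) b :=
  map_sum (⟨⟨fun K => deg2 K b, rfl⟩, fun H K => deg2_add H K b⟩ : _ →+ ℕ) H s

theorem deg3_sum [DecidableEq γ] (s : Finset ι) (H : ι → Multiset (α × β × γ)) (c : γ) :
    deg3 (∑ i ∈ s, H i) c = ∑ i ∈ s, deg3 (H i) c :=
  map_sum (⟨⟨fun K => deg3 K c, rfl⟩, fun H K => deg3_add H K c⟩ : _ →+ ℕ) H s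

theorem deg1_replicate [DecidableEq α] (n : ℕ) (e : α × β × γ) (a : α) :
    deg1 (Multiset.replicate n e) a = if e.1 = a then n else 0 := by
  rw [deg1, ← Multiset.countP_eq_card_filter]
  split_ifs with h
  · rw [Multiset.countP_eq_card.2, Multiset.card_replicate]
    intro x hx
    rwa [Multiset.eq_of_mem_replicate hx]
  · rw [Multiset.countP_eq_zero]
    intro x hx
    rwa [Multiset.eq_of_mem_replicate hx]

theorem deg2_replicate [DecidableEq β] (n : ℕ) (e : α × β × γ) (b : β) :
    deg2 (Multiset.replicate n e) b = if e.2.1 = b then n else 0 := by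
  rw [deg2, ← Multiset.countP_eq_card_filter]
  split_ifs with h
  · rw [Multiset.countP_eq_card.2, Multiset.card_replicate]
    intro x hx
    rwa [Multiset.eq_of_mem_replicate hx]
  · rw [Multiset.countP_eq_zero]
    intro x hx
    rwa [Multiset.eq_of_mem_replicate hx]

theorem deg3_replicate [DecidableEq γ] (n : ℕ) (e : α × β × γ) (c : γ) :
    deg3 (Multiset.replicate n e) c = if e.2.2 = c then n else 0 := by
  rw [deg3, ← Multiset.countP_eq_card_filter]
  split_ifs with h
  · rw [Multiset.countP_eq_card.2, Multiset.card_replicate]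
    intro x hx
    rwa [Multiset.eq_of_mem_replicate hx]
  · rw [Multiset.countP_eq_zero]
    intro x hx
    rwa [Multiset.eq_of_mem_replicate hx]

end Degree

section Construction

variable {ι : Type*}

/-- A weighted truncated Fano plane on the vertices `some (j, _)`, together with one edge
joining each of its vertices of deficient degree to two of the special vertices `none`. -/
def block (k : ℕ) (j : ι) :
    Multiset (Option (ι × Bool) × Option (ι × Bool) × Option (ι × Bool)) :=
  Multiset.replicate (k + 1) (some (j, false), some (j, false), some (j, false)) +
  Multiset.replicate k (some (j, false), some (j, true), some (j, true)) +
  Multiset.replicate k (some (j, true), some (j, false), some (j, true)) +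
  Multiset.replicate k (some (j, true), some (j, true), some (j, false)) +
  Multiset.replicate 1 (some (j, true), none, none) +
  Multiset.replicate 1 (none, some (j, true), none) +
  Multiset.replicate 1 (none, none, some (j, true))

/-- The disjoint truncated Fano planes indexed by `ι`, linked through one special vertex in
each class. -/
def linkedFano (ι : Type*) [Fintype ι] :
    Multiset (Option (ι × Bool) × Option (ι × Bool) × Option (ι × Bool)) :=
  Multiset.replicate 1 (none, none, none) + ∑ j : ι, block (Fintype.card ι) j

theorem isRegular_linkedFano [Fintype ι] [DecidableEq ι] :
    IsRegular (linkedFano ι) (2 * Fintype.card ι + 1) := by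
  refine ⟨?_, ?_, ?_⟩
  · rintro (_ | ⟨i, _ | _⟩) <;>
      simp only [linkedFano, block, deg1_add, deg1_sum, deg1_replicate,
        Finset.sum_add_distrib] <;>
      simp <;> ring
  · rintro (_ | ⟨i, _ | _⟩) <;>
      simp only [linkedFano, block, deg2_add, deg2_sum, deg2_replicate,
        Finset.sum_add_distrib] <;>
      simp <;> ring
  · rintro (_ | ⟨i, _ | _⟩) <;>
      simp only [linkedFano, block, deg3_add, deg3_sum, deg3_replicate,
        Finset.sum_add_distrib] <;>
      simp <;> ring

/-- The index of the truncated Fano plane containing an edge, and `none` for the edges through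
special vertices. -/
def blockColor : Option (ι × Bool) × Option (ι × Bool) × Option (ι × Bool) → Option ι
  | (some a, some _, some _) => some a.1
  | _ => none

theorem linkedFano_meet_of_blockColor_eq [Fintype ι] :
    ∀ e ∈ linkedFano ι, ∀ f ∈ linkedFano ι, blockColor e = blockColor f →
      e.1 = f.1 ∨ e.2.1 = f.2.1 ∨ e.2.2 = f.2.2 := by
  intro e he f hf h
  simp only [linkedFano, block, Multiset.mem_add, Multiset.mem_sum, Finset.mem_univ, true_and,
    Multiset.mem_replicate] at he hf
  rcases he with ⟨-, rfl⟩ | ⟨i, ((((((⟨-, rfl⟩ | ⟨-, rfl⟩) | ⟨-, rfl⟩) | ⟨-, rfl⟩) | ⟨-, rfl⟩) |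
    ⟨-, rfl⟩) | ⟨-, rfl⟩)⟩ <;>
  rcases hf with ⟨-, rfl⟩ | ⟨j, ((((((⟨-, rfl⟩ | ⟨-, rfl⟩) | ⟨-, rfl⟩) | ⟨-, rfl⟩) | ⟨-, rfl⟩) |
    ⟨-, rfl⟩) | ⟨-, rfl⟩)⟩ <;>
  simp_all [blockColor]

end Construction

/-- For every odd `r ≥ 3` there is an `r`-regular 3-partite 3-graph `H` with `n` vertices
in each class (namely `n = r`) with `ν(H) ≤ (r − 1)/2 + 1`, so that
`ν(H) ≤ (1 + 1/r)·n/2`. -/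
theorem stmt11 (r : ℕ) (hr : 3 ≤ r) (hro : Odd r) :
    ∃ (n : ℕ) (H : Multiset (Fin n × Fin n × Fin n)),
      n = r ∧
      IsRegular H r ∧
      matchNum H ≤ (r - 1) / 2 + 1 ∧
      (matchNum H : ℝ) ≤ (1 + 1 / (r : ℝ)) * n / 2 := by
  obtain ⟨k, rfl⟩ := hro
  let f : Option (Fin k × Bool) ≃ Fin (2 * k + 1) :=
    Fintype.equivFinOfCardEq (by simp [mul_comm])
  have hν : matchNum (relabel f (linkedFano (Fin k))) ≤ k + 1 := by
    simpa using matchNum_relabel_le_card_of_coloring f _ blockColor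
      linkedFano_meet_of_blockColor_eq
  refine ⟨2 * k + 1, relabel f (linkedFano (Fin k)), rfl, ?_, by omega, ?_⟩
  · simpa using (isRegular_linkedFano (ι := Fin k)).relabel f
  · have hν' : (matchNum (relabel f (linkedFano (Fin k))) : ℝ) ≤ k + 1 := by exact_mod_cast hν
    refine hν'.trans_eq ?_
    push_cast
    field_simp
    ring

end Tripartite
end
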